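/- Equivalence of quasi-norms: Let p, q, r ∈ (0,∞], l ∈ ℕ, α₃ ≥ 0, α₁, α₂ ∈ ℝ, σ₁, σ₂ ∈ (0,∞], let {t_k} be a p-admissible weight sequence in X^{α₃}_{α,σ,p}, let {t_{k,m}} be its associated multiple sequence, and fix c > 1. Then the four quasi-norms ‖φ‖^{(1)} := ‖(Σ_m t_{k,m}^p [δ^l_r(Q^n_{k,m})φ]^p)^{1/p}‖_{l_q(k≥1)} + (Σ_m t_{0,m}^p ‖φ‖_{L_r(Q^n_{0,m})}^p)^{1/p}, ‖φ‖^{(2)} := ‖(Σ_m t_{k,m}^p [δ^l_r(cQ^n_{k,m}, cQ^n_{k,m})φ]^p)^{1/p}‖_{l_q(k≥1)} + (Σ_m t_{0,m}^p ‖φ‖_{L_r(Q^n_{0,m})}^p)^{1/p}, ‖φ‖^{(3)} := ‖(Σ_m t_{k,m}^p [2^{kn/r} E_l(φ, cQ^n_{k,m})_r]^p)^{1/p}‖_{l_q(k≥1)} + (Σ_m t_{0,m}^p ‖φ‖_{L_r(Q^n_{0,m})}^p)^{1/p}, and ‖φ‖^{(4)} := ‖(Σ_m t_{k,m}^p [2^{kn/r}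 ω_l(φ, cQ^n_{k,m})_r]^p)^{1/p}‖_{l_q(k≥1)} + (Σ_m t_{0,m}^p ‖φ‖_{L_r(Q^n_{0,m})}^p)^{1/p} are all equivalent on B̃^l_{p,q,r}(ℝⁿ,{t_k}) to its defining quasi-norm: there exist two-sided constants, independent of φ ∈ L_r^{loc}(ℝⁿ), comparing each of them with ‖φ | B̃^l_{p,q,r}(ℝⁿ,{t_k})‖ (usual modifications for p, q or r equal to ∞). -/

import Mathlib

open MeasureTheory ENNReal Filter
open scoped Classical

noncomputable section

/-- `ℓ_q` quasinorm of a family of extended nonnegative reals (supremum when `q = ∞`). -/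
def lqNorm {ι : Type*} (q : ℝ≥0∞) (c : ι → ℝ≥0∞) : ℝ≥0∞ :=
  if q = ∞ then ⨆ i, c i else (∑' i, c i ^ q.toReal) ^ (1 / q.toReal)

/-- `L_p` quasinorm of an `ℝ≥0∞`-valued function (essential supremum when `p = ∞`). -/
def lpNormE {α : Type*} [MeasurableSpace α] (p : ℝ≥0∞) (μ : Measure α) (f : α → ℝ≥0∞) : ℝ≥0∞ :=
  if p = ∞ then essSup f μ else (∫⁻ x, f x ^ p.toReal ∂μ) ^ (1 / p.toReal)

abbrev Rn (n : ℕ) := Fin n → ℝ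

/-- Open cube centred at `x` of half-side `s` (i.e. `x + s·Iⁿ`). -/
def openCube {n : ℕ} (x : Rn n) (s : ℝ) : Set (Rn n) := {y | ∀ i, |y i - x i| < s}

/-- Open axis-parallel cube with lower corner `c` and side `s`. -/
def cubeAt {n : ℕ} (c : Rn n) (s : ℝ) : Set (Rn n) := {x | ∀ i, c i < x i ∧ x i < c i + s}

/-- Open dyadic cube `Q^n_{k,m}` of side `2^{-k}`. -/
def dyadicCube (n k : ℕ) (m : Fin n → ℤ) : Set (Rn n) :=
  {x | ∀ i, (m i : ℝ) / 2 ^ k < x i ∧ x i < ((m i : ℝ) + 1) / 2 ^ k}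

/-- Half-open dyadic cube `Q̃^n_{k,m}`. -/
def dyadicCubeHalf (n k : ℕ) (m : Fin n → ℤ) : Set (Rn n) :=
  {x | ∀ i, (m i : ℝ) / 2 ^ k ≤ x i ∧ x i < ((m i : ℝ) + 1) / 2 ^ k}

def dyadicCenter (n k : ℕ) (m : Fin n → ℤ) : Rn n := fun i => ((m i : ℝ) + 1 / 2) / 2 ^ k

/-- The concentric dilate `c·Q^n_{k,m}` of a dyadic cube. -/
def dilatedCube (n k : ℕ) (m : Fin n → ℤ) (c : ℝ) : Set (Rn n) :=
  openCube (dyadicCenter n k m) (c / 2 ^ (k + 1))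

def euclNorm {d : ℕ} (y : Rn d) : ℝ := Real.sqrt (∑ i, y i ^ 2)

/-- The difference `Δ^l(h)g(x)`. -/
def diffl {n : ℕ} (l : ℕ) (h : Rn n) (g : Rn n → ℝ) (x : Rn n) : ℝ :=
  ∑ j ∈ Finset.range (l + 1), ((l.choose j : ℝ) * (-1 : ℝ) ^ (l + j)) * g (x + (j : ℝ) • h)

/-- The difference `Δ^l(h,Ω)g(x)`, vanishing unless the segment `[x, x + l·h]` lies in `Ω`. -/
def difflOn {n : ℕ} (l : ℕ) (Ω : Set (Rn n)) (h : Rn n) (g : Rn n → ℝ) (x : Rn n) : ℝ :=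
  if ∀ τ ∈ Set.Icc (0 : ℝ) 1, x + (τ * l) • h ∈ Ω then diffl l h g x else 0

/-- `δ^l_r(Q)g`, where `s` is the side length of the cube `Q`. -/
def deltaE (n l : ℕ) (r : ℝ≥0∞) (s : ℝ) (Q : Set (Rn n)) (g : Rn n → ℝ) : ℝ≥0∞ :=
  ENNReal.ofReal s ^ (-(2 * (n : ℝ)) / r.toReal) *
    eLpNorm (fun hx : Rn n × Rn n => diffl l hx.1 g hx.2) r
      ((volume.restrict (openCube (0 : Rn n) s)).prod (volume.restrict Q))

/-- `δ^l_r(Q,Ω)g`, where `s` is the side length of the cube `Q`. -/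
def deltaEOn (n l : ℕ) (r : ℝ≥0∞) (s : ℝ) (Q Ω : Set (Rn n)) (g : Rn n → ℝ) : ℝ≥0∞ :=
  ENNReal.ofReal s ^ (-(2 * (n : ℝ)) / r.toReal) *
    eLpNorm (fun hx : Rn n × Rn n => difflOn l Ω hx.1 g hx.2) r
      ((volume.restrict (openCube (0 : Rn n) s)).prod (volume.restrict Q))

/-- `Δ̄^l_r(s)g(x)`. -/
def barDelta (n l : ℕ) (r : ℝ≥0∞) (s : ℝ) (g : Rn n → ℝ) (x : Rn n) : ℝ≥0∞ :=
  ENNReal.ofReal s ^ (-(n : ℝ) / r.toReal) *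
    eLpNorm (fun h : Rn n => diffl l h g x) r (volume.restrict (openCube (0 : Rn n) s))

/-- Membership in `L_r^{loc}(ℝⁿ)`. -/
def MemLrLoc (n : ℕ) (r : ℝ≥0∞) (φ : Rn n → ℝ) : Prop :=
  Measurable φ ∧ ∀ K : Set (Rn n), IsCompact K → eLpNorm φ r (volume.restrict K) < ∞

def IsWeight {n : ℕ} (w : Rn n → ℝ) : Prop := Measurable w ∧ ∀ x, 0 < w x

/-- A `p`-admissible weight sequence. -/
def pAdmissible (n : ℕ) (p : ℝ≥0∞) (t : ℕ → Rn n → ℝ) : Prop :=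
  ∀ k, IsWeight (t k) ∧ MemLrLoc n p (t k)

/-- The multiple sequence `t_{k,m} = ‖t_k‖_{L_p(Q^n_{k,m})}` associated with a weight sequence. -/
def tkm (n : ℕ) (p : ℝ≥0∞) (t : ℕ → Rn n → ℝ) (k : ℕ) (m : Fin n → ℤ) : ℝ≥0∞ :=
  eLpNorm (t k) p (volume.restrict (dyadicCube n k m))

/-- The weight `t̄_k` built from a multiple sequence `T`. -/
def tbarOf (n : ℕ) (p : ℝ≥0∞) (T : ℕ → (Fin n → ℤ) → ℝ≥0∞) (k : ℕ) (x : Rn n) : ℝ≥0∞ :=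
  (2 : ℝ≥0∞) ^ (((k * n : ℕ) : ℝ) / p.toReal) *
    ∑' m : Fin n → ℤ, (dyadicCubeHalf n k m).indicator (fun _ => T k m) x

/-- `(2^{kn} ∫_Q f^e)^{1/e}`, with the essential supremum modification for `e = ∞`. -/
def avgNorm (n k : ℕ) (e : ℝ≥0∞) (Q : Set (Rn n)) (f : Rn n → ℝ≥0∞) : ℝ≥0∞ :=
  if e = ∞ then essSup f (volume.restrict Q)
  else ((2 : ℝ≥0∞) ^ (k * n) * ∫⁻ x in Q, f x ^ e.toReal) ^ (1 / e.toReal)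

/-- Conditions (2.14)–(2.16) of the class `X^{α₃}_{α,σ,p}`, expressed for a multiple
sequence `T`. -/
def MemXseq (n : ℕ) (α₁ α₂ α₃ : ℝ) (σ₁ σ₂ p : ℝ≥0∞) (T : ℕ → (Fin n → ℤ) → ℝ≥0∞) : Prop :=
  (∃ C₁ : ℝ≥0∞, 0 < C₁ ∧ C₁ < ∞ ∧ ∀ k j : ℕ, k ≤ j → ∀ m : Fin n → ℤ,
    avgNorm n k p (dyadicCube n k m) (tbarOf n p T k) *
      avgNorm n k σ₁ (dyadicCube n k m) (fun x => (tbarOf n p T j x)⁻¹) ≤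
      C₁ * (2 : ℝ≥0∞) ^ (α₁ * ((k : ℝ) - (j : ℝ)))) ∧
  (∃ C₂ : ℝ≥0∞, 0 < C₂ ∧ C₂ < ∞ ∧ ∀ k j : ℕ, k ≤ j → ∀ m : Fin n → ℤ,
    (avgNorm n k p (dyadicCube n k m) (tbarOf n p T k))⁻¹ *
      avgNorm n k σ₂ (dyadicCube n k m) (tbarOf n p T j) ≤
      C₂ * (2 : ℝ≥0∞) ^ (α₂ * ((j : ℝ) - (k : ℝ)))) ∧
  (∀ k : ℕ, ∀ m m' : Fin n → ℤ, (∀ i, |m i - m' i| ≤ 1) →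
    0 < T k m ∧ T k m ≤ (2 : ℝ≥0∞) ^ (α₃ : ℝ) * T k m')

/-- The weighted class `X^{α₃}_{α,σ,p}` of weight sequences. -/
def MemX (n : ℕ) (α₁ α₂ α₃ : ℝ) (σ₁ σ₂ p : ℝ≥0∞) (t : ℕ → Rn n → ℝ) : Prop :=
  pAdmissible n p t ∧ MemXseq n α₁ α₂ α₃ σ₁ σ₂ p (tkm n p t)

/-- Quasinorm of `B̃^l_{p,q,r}(ℝⁿ, T)` with an `ℝ≥0∞`-valued weight sequence `T`. -/
def tildeBnormE (n l : ℕ) (p q r : ℝ≥0∞) (T : ℕ → Rn n → ℝ≥0∞) (φ : Rn n → ℝ) : ℝ≥0∞ :=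
  lqNorm q (fun k : ℕ =>
    lpNormE p volume (fun x =>
      T (k + 1) x *
        deltaE n l r ((2 : ℝ) ^ (1 - ((k : ℤ) + 1))) (openCube x ((2 : ℝ) ^ (-((k : ℤ) + 1)))) φ)) +
  lpNormE p volume (fun x => T 0 x * eLpNorm φ r (volume.restrict (openCube x 1)))

/-- Quasinorm of `B̃^l_{p,q,r}(ℝⁿ, {t_k})`. -/
def tildeBnorm (n l : ℕ) (p q r : ℝ≥0∞) (t : ℕ → Rn n → ℝ) (φ : Rn n → ℝ) : ℝ≥0∞ :=
  tildeBnormE n l p q r (fun k x => ENNReal.ofReal (t k x)) φ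

/-- Membership in `B̃^l_{p,q,r}(ℝⁿ, {t_k})`. -/
def MemTildeB (n l : ℕ) (p q r : ℝ≥0∞) (t : ℕ → Rn n → ℝ) (φ : Rn n → ℝ) : Prop :=
  MemLrLoc n r φ ∧ tildeBnorm n l p q r t φ < ∞

/-- Quasinorm of `B̄^l_{p,q,r}(ℝⁿ, {t_k})`. -/
def barBnorm (n l : ℕ) (p q r : ℝ≥0∞) (t : ℕ → Rn n → ℝ) (φ : Rn n → ℝ) : ℝ≥0∞ :=
  lqNorm q (fun k : ℕ =>
    lpNormE p volume (fun x =>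
      ENNReal.ofReal (t (k + 1) x) * barDelta n l r ((2 : ℝ) ^ (-((k : ℤ) + 1))) φ x)) +
  lpNormE p volume (fun x => ENNReal.ofReal (t 0 x) * eLpNorm φ r (volume.restrict (openCube x 1)))

/-- Membership in `B̄^l_{p,q,r}(ℝⁿ, {t_k})`. -/
def MemBarB (n l : ℕ) (p q r : ℝ≥0∞) (t : ℕ → Rn n → ℝ) (φ : Rn n → ℝ) : Prop :=
  MemLrLoc n r φ ∧ barBnorm n l p q r t φ < ∞

/-- The class `A^{loc}_∞`. -/
def MemAlocInfty (n : ℕ) (w : Rn n → ℝ) : Prop :=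
  ∃ α : ℝ, α ∈ Set.Ioo (0 : ℝ) 1 ∧ ∃ M : ℝ≥0∞, M < ∞ ∧
    ∀ (c : Rn n) (s : ℝ), 0 < s → s ≤ 1 →
      ∀ F : Set (Rn n), F ⊆ cubeAt c s → MeasurableSet F →
        ENNReal.ofReal α * volume (cubeAt c s) ≤ volume F →
        (∫⁻ x in cubeAt c s, ENNReal.ofReal (w x)) ≤ M * ∫⁻ x in F, ENNReal.ofReal (w x)

/-- The class `A^{loc}_1`. -/
def MemAloc1 (n : ℕ) (w : Rn n → ℝ) : Prop :=
  ∃ C : ℝ≥0∞, C < ∞ ∧ ∀ (c : Rn n) (s : ℝ), 0 < s → s ≤ 1 →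
    ∀ᵐ x ∂volume.restrict (cubeAt c s),
      (∫⁻ y in cubeAt c s, ENNReal.ofReal (w y)) ≤ C * volume (cubeAt c s) * ENNReal.ofReal (w x)

/-- The class `A^{loc}_{p₀}` for `p₀ > 1`. -/
def MemAlocGt (n : ℕ) (p₀ : ℝ) (w : Rn n → ℝ) : Prop :=
  ∃ C : ℝ≥0∞, C < ∞ ∧ ∀ (c : Rn n) (s : ℝ), 0 < s → s ≤ 1 →
    ((volume (cubeAt c s))⁻¹ * ∫⁻ y in cubeAt c s, ENNReal.ofReal (w y)) *
      ((volume (cubeAt c s))⁻¹ *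
        ∫⁻ y in cubeAt c s, ENNReal.ofReal (w y) ^ (-(1 : ℝ) / (p₀ - 1))) ^ (p₀ - 1) ≤ C

/-- The class `A^{loc}_{p₀}` for `p₀ ∈ [1,∞)`. -/
def MemAlocP (n : ℕ) (p₀ : ℝ) (w : Rn n → ℝ) : Prop :=
  if p₀ = 1 then MemAloc1 n w else MemAlocGt n p₀ w

/-- The class `{}^{loc}Y^{α₃}_{α₁,α₂}` of weight sequences of variable smoothness. -/
def MemLocY (n : ℕ) (α₁ α₂ α₃ : ℝ) (s : ℕ → Rn n → ℝ) : Prop :=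
  (∀ k, IsWeight (s k)) ∧
  (∃ C : ℝ, 0 < C ∧ ∀ j k : ℕ, j ≤ k → ∀ x : Rn n,
    C⁻¹ * (2 : ℝ) ^ (α₁ * ((k : ℝ) - (j : ℝ))) ≤ s k x / s j x ∧
      s k x / s j x ≤ C * (2 : ℝ) ^ (α₂ * ((k : ℝ) - (j : ℝ)))) ∧
  (∀ k : ℕ, ∀ x y : Rn n, euclNorm (x - y) ≤ (2 : ℝ) ^ (-(k : ℤ)) →
    s k x ≤ (2 : ℝ) ^ α₃ * s k y)

/-- The set `Ξ^{d,n}_{k,m} = Q^n_{k,m} × (2^{-k}B^d ∖ 2^{-k-1}B^d) ⊂ ℝ^{n+d}`. -/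
def Xi (n d k : ℕ) (m : Fin n → ℤ) : Set (Rn (n + d)) :=
  {z | (fun i => z (Fin.castAdd d i)) ∈ dyadicCube n k m ∧
       euclNorm (fun i : Fin d => z (Fin.natAdd n i)) < (2 : ℝ) ^ (-(k : ℤ)) ∧
       (2 : ℝ) ^ (-(k : ℤ) - 1) ≤ euclNorm (fun i : Fin d => z (Fin.natAdd n i))}

/-- The multiple sequence `γ̂_{k,m} = ‖γ‖_{L_p(Ξ^{d,n}_{k,m})}` generated by a weight `γ`. -/
def gammaHat (n d : ℕ) (p : ℝ≥0∞) (γ : Rn (n + d) → ℝ) (k : ℕ) (m : Fin n → ℤ) : ℝ≥0∞ :=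
  eLpNorm γ p (volume.restrict (Xi n d k m))

def delta1Good (n d : ℕ) (p : ℝ≥0∞) (γ : Rn (n + d) → ℝ) (δ : ℝ) : Prop :=
  ∃ C : ℝ≥0∞, C < ∞ ∧ ∀ k j : ℕ, k ≤ j → ∀ m : Fin n → ℤ,
    (∑' m' : {m' : Fin n → ℤ // dyadicCube n j m' ⊆ dyadicCube n k m},
        gammaHat n d p γ j m'.1 ^ p.toReal) ≤
      C * (2 : ℝ≥0∞) ^ ((((k : ℝ) - (j : ℝ)) * (d : ℝ)) * δ) * gammaHat n d p γ k m ^ p.toReal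

/-- `δ₁(γ,n,d)`. -/
def delta1 (n d : ℕ) (p : ℝ≥0∞) (γ : Rn (n + d) → ℝ) : ℝ :=
  sSup {δ : ℝ | 0 < δ ∧ delta1Good n d p γ δ}

def delta2Good (n d : ℕ) (p : ℝ≥0∞) (γ : Rn (n + d) → ℝ) (δ : ℝ) : Prop :=
  ∃ C : ℝ≥0∞, C < ∞ ∧ ∀ k j : ℕ, k ≤ j → ∀ m : Fin n → ℤ,
    ∀ G : Set (Fin n → ℤ), (∀ m' ∈ G, dyadicCube n j m' ⊆ dyadicCube n k m) →
      (∑' m' : G, gammaHat n d p γ j m'.1 ^ p.toReal) ≤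
        C * (volume (⋃ m' ∈ G, dyadicCube n j m') / volume (dyadicCube n k m)) ^ δ *
          ∑' m' : {m' : Fin n → ℤ // dyadicCube n j m' ⊆ dyadicCube n k m},
            gammaHat n d p γ j m'.1 ^ p.toReal

/-- `δ₂(γ,n,d)`. -/
def delta2 (n d : ℕ) (p : ℝ≥0∞) (γ : Rn (n + d) → ℝ) : ℝ :=
  sSup {δ : ℝ | 0 < δ ∧ delta2Good n d p γ δ}

/-- The cardinal B-spline of degree `deg` with knots `0, 1, …, deg + 1`. -/
def cardB : ℕ → ℝ → ℝ
  | 0, x => if 0 ≤ x ∧ x < 1 then 1 else 0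
  | (d + 1), x => (x / (d + 1)) * cardB d x + (((d : ℝ) + 2 - x) / (d + 1)) * cardB d (x - 1)

/-- The tensor-product B-spline `N^{deg}_{k,m}` on `ℝⁿ`. -/
def Bspl (n deg k : ℕ) (m : Fin n → ℤ) (x : Rn n) : ℝ :=
  ∏ i, cardB deg (2 ^ k * x i - (m i : ℝ))

/-- The spline `Σ_m β_m N^{deg}_{k,m}`. -/
def splineSum (n deg k : ℕ) (β : (Fin n → ℤ) → ℝ) (x : Rn n) : ℝ :=
  ∑' m, β m * Bspl n deg k m x

/-- A dyadic spline of degree `deg` (an element of `Σ^{deg} = ⋃_k Σ^{deg}_k`). -/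
def IsSplineFn (n deg : ℕ) (S : Rn n → ℝ) : Prop :=
  ∃ (k : ℕ) (β : (Fin n → ℤ) → ℝ), S = splineSum n deg k β

/-- The weighted best spline approximation `s_k(φ)` by splines of degree `deg`. -/
def sApprox (n deg : ℕ) (p r : ℝ≥0∞) (T : ℕ → (Fin n → ℤ) → ℝ≥0∞) (φ : Rn n → ℝ) (k : ℕ) :
    ℝ≥0∞ :=
  ⨅ β : (Fin n → ℤ) → ℝ,
    lqNorm p (fun m => T k m *
      eLpNorm (fun x => φ x - splineSum n deg k β x) r (volume.restrict (dyadicCube n k m)))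

/-- `s_j(φ)` for `j ∈ {-1, 0, 1, 2, …}`, including the term `s_{-1}`. -/
def sApproxZ (n deg : ℕ) (p r : ℝ≥0∞) (T : ℕ → (Fin n → ℤ) → ℝ≥0∞) (φ : Rn n → ℝ) (j : ℤ) :
    ℝ≥0∞ :=
  if j < 0 then
    lqNorm p (fun m => T 0 m * eLpNorm φ r (volume.restrict (dyadicCube n 0 m)))
  else sApprox n deg p r T φ j.toNat

/-- Local best polynomial approximation `E_l(φ,Q)_r` by polynomials of total degree `< l`. -/
def bestApproxE (n l : ℕ) (r : ℝ≥0∞) (φ : Rn n → ℝ) (Q : Set (Rn n)) : ℝ≥0∞ :=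
  ⨅ P : {P : MvPolynomial (Fin n) ℝ // P.totalDegree < l},
    eLpNorm (fun x => φ x - MvPolynomial.eval x P.1) r (volume.restrict Q)

/-- The modulus of continuity `ω_l(φ,Q)_r`. -/
def modulusE (n l : ℕ) (r : ℝ≥0∞) (φ : Rn n → ℝ) (Q : Set (Rn n)) : ℝ≥0∞ :=
  ⨆ h : Rn n, eLpNorm (difflOn l Q h φ) r (volume : Measure (Rn n))

def partialDeriv {N : ℕ} (i : Fin N) (ψ : Rn N → ℝ) : Rn N → ℝ :=
  fun x => fderiv ℝ ψ x (Pi.single i 1)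

def iterPD {N : ℕ} : List (Fin N) → (Rn N → ℝ) → Rn N → ℝ
  | [], ψ => ψ
  | i :: L, ψ => partialDeriv i (iterPD L ψ)

def multiIdxList {N : ℕ} (α : Fin N → ℕ) : List (Fin N) :=
  (List.finRange N).foldr (fun i L => List.replicate (α i) i ++ L) []

/-- Iterated partial derivative `D^α`. -/
def multiDeriv {N : ℕ} (α : Fin N → ℕ) (ψ : Rn N → ℝ) : Rn N → ℝ :=
  iterPD (multiIdxList α) ψ

/-- `g` is the weak (Sobolev) derivative `D^α f`. -/
def IsWeakDeriv {N : ℕ} (α : Fin N → ℕ) (f g : Rn N → ℝ) : Prop :=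
  ∀ ψ : Rn N → ℝ, ContDiff ℝ (⊤ : ℕ∞) ψ → HasCompactSupport ψ →
    ∫ x, f x * multiDeriv α ψ x = (-1 : ℝ) ^ (∑ i, α i) * ∫ x, g x * ψ x

/-- The weighted Sobolev norm `Σ_{|α| ≤ l} ‖γ · D^α f‖_{L_p}` computed from a system `D` of
weak derivatives. -/
def sobNorm (N : ℕ) (p : ℝ≥0∞) (l : ℕ) (γ : Rn N → ℝ) (D : (Fin N → ℕ) → Rn N → ℝ) : ℝ≥0∞ :=
  ∑' α : Fin N → ℕ,
    if (∑ i, α i) ≤ l then eLpNorm (fun x => γ x * D α x) p volume else 0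

/-- Membership in the weighted Sobolev space `W^l_p(ℝ^N, γ)`, witnessed by the system `D`
of weak derivatives of `f`. -/
def MemW (N : ℕ) (p : ℝ≥0∞) (l : ℕ) (γ : Rn N → ℝ) (f : Rn N → ℝ)
    (D : (Fin N → ℕ) → Rn N → ℝ) : Prop :=
  MeasureTheory.LocallyIntegrable f volume ∧ D 0 = f ∧
    (∀ α : Fin N → ℕ, (∑ i, α i) ≤ l →
      MeasureTheory.LocallyIntegrable (D α) volume ∧ IsWeakDeriv α f (D α)) ∧
    sobNorm N p l γ D < ∞

/-- `φ` is the trace of `f` on the plane `y = 0`. -/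
def IsTraceSob {n d : ℕ} (f : Rn (n + d) → ℝ) (φ : Rn n → ℝ) : Prop :=
  ∃ f' : Rn (n + d) → ℝ, f' =ᵐ[volume] f ∧
    ∀ (c : Rn n) (s : ℝ), 0 < s →
      Filter.Tendsto (fun y : Rn d => ∫ x in cubeAt c s, |f' (Fin.append x y) - φ x|)
        (nhds 0) (nhds 0)

/-- The weight sequence `γ_k(x) = 2^{k(l+n/p)} Σ_m χ_{Q̃^n_{k,m}}(x) γ̂_{k,m}`. -/
def gammaSeq (n d : ℕ) (p : ℝ≥0∞) (l : ℕ) (γ : Rn (n + d) → ℝ) (k : ℕ) (x : Rn n) : ℝ≥0∞ :=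
  (2 : ℝ≥0∞) ^ ((k : ℝ) * ((l : ℝ) + (n : ℝ) / p.toReal)) *
    ∑' m : Fin n → ℤ, (dyadicCubeHalf n k m).indicator (fun _ => gammaHat n d p γ k m) x

/-- Conjugate exponent in `ℝ≥0∞`. -/
def conjE (e : ℝ≥0∞) : ℝ≥0∞ := (1 - e⁻¹)⁻¹

/-- The exponent `p_θ`. -/
def pTheta (p θ : ℝ≥0∞) : ℝ≥0∞ := if θ = ∞ ∧ p = ∞ then 1 else p / θ

/-- Generic discrete quasinorm built from a multiple sequence `T` and local quantities `A`. -/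
def discNorm (n : ℕ) (p q r : ℝ≥0∞) (T : ℕ → (Fin n → ℤ) → ℝ≥0∞)
    (A : ℕ → (Fin n → ℤ) → ℝ≥0∞) (φ : Rn n → ℝ) : ℝ≥0∞ :=
  lqNorm q (fun k : ℕ => lqNorm p (fun m : Fin n → ℤ => T (k + 1) m * A (k + 1) m)) +
    lqNorm p (fun m : Fin n → ℤ =>
      T 0 m * eLpNorm φ r (volume.restrict (dyadicCube n 0 m)))

/-- The quasinorm `‖φ‖^{(1)}` built from `δ^l_r(Q^n_{k,m})φ`. -/
def discNorm1 (n l : ℕ) (p q r : ℝ≥0∞) (T : ℕ → (Fin n → ℤ) → ℝ≥0∞) (φ : Rn n → ℝ) : ℝ≥0∞ :=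
  discNorm n p q r T
    (fun k m => deltaE n l r ((2 : ℝ) ^ (-(k : ℤ))) (dyadicCube n k m) φ) φ

/-- The quasinorm `‖φ‖^{(2)}` built from `δ^l_r(cQ^n_{k,m}, cQ^n_{k,m})φ`. -/
def discNorm2 (n l : ℕ) (p q r : ℝ≥0∞) (c : ℝ) (T : ℕ → (Fin n → ℤ) → ℝ≥0∞)
    (φ : Rn n → ℝ) : ℝ≥0∞ :=
  discNorm n p q r T
    (fun k m => deltaEOn n l r (c * (2 : ℝ) ^ (-(k : ℤ)))
      (dilatedCube n k m c) (dilatedCube n k m c) φ) φ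

/-- The quasinorm `‖φ‖^{(3)}` built from `2^{kn/r} E_l(φ, cQ^n_{k,m})_r`. -/
def discNorm3 (n l : ℕ) (p q r : ℝ≥0∞) (c : ℝ) (T : ℕ → (Fin n → ℤ) → ℝ≥0∞)
    (φ : Rn n → ℝ) : ℝ≥0∞ :=
  discNorm n p q r T
    (fun k m => (2 : ℝ≥0∞) ^ (((k * n : ℕ) : ℝ) / r.toReal) *
      bestApproxE n l r φ (dilatedCube n k m c)) φ

/-- The quasinorm `‖φ‖^{(4)}` built from `2^{kn/r} ω_l(φ, cQ^n_{k,m})_r`. -/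
def discNorm4 (n l : ℕ) (p q r : ℝ≥0∞) (c : ℝ) (T : ℕ → (Fin n → ℤ) → ℝ≥0∞)
    (φ : Rn n → ℝ) : ℝ≥0∞ :=
  discNorm n p q r T
    (fun k m => (2 : ℝ≥0∞) ^ (((k * n : ℕ) : ℝ) / r.toReal) *
      modulusE n l r φ (dilatedCube n k m c)) φ

/-!
The heart of the matter is Whitney's estimate `E_l(φ, Q)_r ≤ C δ^l_r(Q)φ`. Mixed differences of
order `l` along arbitrary short steps are combinations, in the algebra of translations, of pure
`l`-th differences whose steps contain a free parameter, so averaging over that parameter bounds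
them by `δ^l_r`. If the mixed differences of order `j + 1` are small, then those of order `j` are
nearly constant in the base point, and the approximating constants depend on the steps in an
approximately multiadditive and symmetric way. Hyers–Ulam stability replaces them by a symmetric
multilinear form, whose diagonal is a polynomial with nearly the same mixed differences of order
`j`; subtracting it lowers the order by one, and descending to order zero gives the estimate.

After scaling, each of the four local quantities on a dyadic cube is bounded by the next one on
neighbouring cubes. As the weights are doubling, such cubewise bounds pass to the norms, and they
close up in cycles `‖·‖⁽¹⁾ ≲ ‖·‖ ≲ ‖·‖⁽³⁾ ≲ ‖·‖⁽¹⁾` and `‖·‖⁽³⁾ ≲ ‖·‖⁽²⁾ ≲ ‖·‖⁽⁴⁾ ≲ ‖·‖⁽³⁾`.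
-/

section QuasiNorm

/-- The constant of the quasi-triangle inequality of `L_r`, enlarged so as to be at least one. -/
def quasiConst (r : ℝ≥0∞) : ℝ≥0∞ := max 1 (LpAddConst r)

lemma one_le_quasiConst (r : ℝ≥0∞) : 1 ≤ quasiConst r := le_max_left _ _

lemma quasiConst_ne_top (r : ℝ≥0∞) : quasiConst r ≠ ∞ := by
  simp [quasiConst, (LpAddConst_lt_top r).ne]

lemma quasiConst_pow_ne_top (r : ℝ≥0∞) (k : ℕ) : quasiConst r ^ k ≠ ∞ :=
  ENNReal.pow_ne_top (quasiConst_ne_top r)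

variable {α β F : Type*} [MeasurableSpace α] [MeasurableSpace β] [NormedAddCommGroup F]
  {μ : Measure α} {ν : Measure β}

lemma eLpNorm_add_le_quasiConst {ε : Type*} [TopologicalSpace ε] [ESeminormedAddMonoid ε]
    {f g : α → ε} (hf : AEStronglyMeasurable f μ) (hg : AEStronglyMeasurable g μ) (r : ℝ≥0∞) :
    eLpNorm (fun x => f x + g x) r μ ≤ quasiConst r * (eLpNorm f r μ + eLpNorm g r μ) :=
  (eLpNorm_add_le' hf hg r).trans (by gcongr; exact le_max_right _ _)

lemma eLpNorm_sub_le_quasiConst {f g : α → F} (hf : AEStronglyMeasurable f μ)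
    (hg : AEStronglyMeasurable g μ) (r : ℝ≥0∞) :
    eLpNorm (fun x => f x - g x) r μ ≤ quasiConst r * (eLpNorm f r μ + eLpNorm g r μ) :=
  (eLpNorm_sub_le' hf hg r).trans (by gcongr; exact le_max_right _ _)

lemma eLpNorm_sum_le_quasiConst_pow {ι ε : Type*} [TopologicalSpace ε]
    [ESeminormedAddCommMonoid ε] [ContinuousAdd ε] (s : Finset ι) {f : ι → α → ε}
    (hf : ∀ i ∈ s, AEStronglyMeasurable (f i) μ) (r : ℝ≥0∞) :
    eLpNorm (fun x => ∑ i ∈ s, f i x) r μ ≤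
      quasiConst r ^ s.card * ∑ i ∈ s, eLpNorm (f i) r μ := by
  induction s using Finset.induction_on with
  | empty => simp
  | insert a s ha ih =>
    simp only [Finset.forall_mem_insert] at hf
    simp only [Finset.sum_insert ha, Finset.card_insert_of_notMem ha]
    calc _ ≤ quasiConst r * (eLpNorm (f a) r μ + eLpNorm (fun x => ∑ i ∈ s, f i x) r μ) :=
          eLpNorm_add_le_quasiConst hf.1 (Finset.aestronglyMeasurable_fun_sum _ hf.2) r
      _ ≤ quasiConst r * (quasiConst r ^ s.card * eLpNorm (f a) r μ +
            quasiConst r ^ s.card * ∑ i ∈ s, eLpNorm (f i) r μ) := by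
          gcongr
          · exact le_mul_of_one_le_left zero_le (one_le_pow₀ (one_le_quasiConst r))
          · exact ih hf.2
      _ = _ := by ring

lemma eLpNorm_restrict_mono {S T : Set α} (h : S ⊆ T) (f : α → F) (r : ℝ≥0∞) :
    eLpNorm f r (μ.restrict S) ≤ eLpNorm f r (μ.restrict T) :=
  eLpNorm_mono_measure _ (Measure.restrict_mono h le_rfl)

lemma eLpNorm_restrict_le_sum_of_ae_cover {ι : Type*} (s : Finset ι) {S : Set α} {A : ι → Set α}
    (hA : ∀ i ∈ s, MeasurableSet (A i)) (hS : ∀ᵐ x ∂μ.restrict S, ∃ i ∈ s, x ∈ A i)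
    {f : α → F} (hf : AEStronglyMeasurable f μ) (r : ℝ≥0∞) :
    eLpNorm f r (μ.restrict S) ≤
      quasiConst r ^ s.card * ∑ i ∈ s, eLpNorm f r (μ.restrict (A i)) := by
  let g (i : ι) : α → ℝ := (A i).indicator fun x => ‖f x‖
  have hg (i : ι) (x : α) : 0 ≤ g i x := Set.indicator_nonneg (fun _ _ => norm_nonneg _) _
  calc eLpNorm f r (μ.restrict S) ≤ eLpNorm (fun x => ∑ i ∈ s, g i x) r (μ.restrict S) := by
        refine eLpNorm_mono_ae (hS.mono fun x ⟨i, hi, hxi⟩ => ?_)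
        calc ‖f x‖ = g i x := by simp [g, hxi]
          _ ≤ ∑ i ∈ s, g i x := Finset.single_le_sum (fun j _ => hg j x) hi
          _ ≤ _ := le_abs_self _
    _ ≤ eLpNorm (fun x => ∑ i ∈ s, g i x) r μ := eLpNorm_mono_measure _ Measure.restrict_le_self
    _ ≤ quasiConst r ^ s.card * ∑ i ∈ s, eLpNorm (g i) r μ :=
        eLpNorm_sum_le_quasiConst_pow s (fun i hi => hf.norm.indicator (hA i hi)) r
    _ = _ := by
        congr 1
        refine Finset.sum_congr rfl fun i hi => ?_
        rw [eLpNorm_indicator_eq_eLpNorm_restrict (hA i hi), eLpNorm_norm]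

lemma eLpNorm_restrict_le_of_measurePreserving {Φ : α → β} (hΦ : MeasurePreserving Φ μ ν)
    {S : Set α} {T : Set β} (hS : MeasurableSet S) (hT : MeasurableSet T)
    (hST : Set.MapsTo Φ S T) {f : β → F} (hf : AEStronglyMeasurable f ν) {g : α → F}
    (hg : ∀ x ∈ S, ‖g x‖ ≤ ‖f (Φ x)‖) (r : ℝ≥0∞) :
    eLpNorm g r (μ.restrict S) ≤ eLpNorm f r (ν.restrict T) := by
  rw [← eLpNorm_comp_measurePreserving hf.restrict (hΦ.restrict_preimage hT)]
  calc eLpNorm g r (μ.restrict S) ≤ eLpNorm (f ∘ Φ) r (μ.restrict S) :=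
        eLpNorm_mono_ae ((ae_restrict_mem hS).mono hg)
    _ ≤ _ := eLpNorm_restrict_mono hST _ _

lemma eLpNorm_comp_snd [SFinite μ] (hν : ν Set.univ ≠ 0) {f : α → F}
    (hf : AEStronglyMeasurable f μ) (r : ℝ≥0∞) :
    eLpNorm (fun z : β × α => f z.2) r (ν.prod μ) =
      ν Set.univ ^ (1 / r).toReal * eLpNorm f r μ := by
  have hmap : Measure.map Prod.snd (ν.prod μ) = ν Set.univ • μ := Measure.map_snd_prod
  have := eLpNorm_map_measure (p := r) (hmap ▸ hf.smul_measure _) measurable_snd.aemeasurable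
  rw [hmap, eLpNorm_smul_measure_of_ne_zero hν] at this
  exact this.symm

lemma eLpNorm_prod_eq_lintegral [SFinite μ] {r : ℝ≥0∞} (hr : r ≠ 0) (hr' : r ≠ ∞)
    {G : β × α → F} (hG : StronglyMeasurable G) :
    eLpNorm G r (ν.prod μ) =
      (∫⁻ y, eLpNorm (fun x => G (y, x)) r μ ^ r.toReal ∂ν) ^ r.toReal⁻¹ := by
  have hr₀ : 0 < r.toReal := ENNReal.toReal_pos hr hr'
  simp only [eLpNorm_eq_lintegral_rpow_enorm_toReal hr hr', one_div,
    ENNReal.rpow_inv_rpow hr₀.ne']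
  rw [lintegral_prod _ (hG.enorm.pow_const _).aemeasurable]

lemma exists_notMem_null_eLpNorm_slice_le [SFinite μ] [IsFiniteMeasure ν] (hν : ν ≠ 0)
    {G : β × α → F} (hG : StronglyMeasurable G) {r : ℝ≥0∞} (hr : r ≠ 0) {N : Set β}
    (hN : ν N = 0) :
    ∃ y ∉ N, ν Set.univ ^ (1 / r).toReal * eLpNorm (fun x => G (y, x)) r μ ≤
      eLpNorm G r (ν.prod μ) := by
  obtain rfl | hr' := eq_or_ne r ∞
  · have : (ae ν).NeBot := ae_neBot.mpr hν
    have hslice : ∀ᵐ y ∂ν, ∀ᵐ x ∂μ, ‖G (y, x)‖ₑ ≤ eLpNorm G ∞ (ν.prod μ) :=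
      Measure.ae_ae_of_ae_prod (enorm_ae_le_eLpNormEssSup _ _)
    obtain ⟨y, hy, hyN⟩ := (hslice.and (measure_eq_zero_iff_ae_notMem.mp hN)).exists
    exact ⟨y, hyN, by simpa using eLpNormEssSup_le_of_ae_enorm_bound hy⟩
  · have hr₀ : 0 < r.toReal := ENNReal.toReal_pos hr hr'
    have hmeas : Measurable fun y => eLpNorm (fun x => G (y, x)) r μ ^ r.toReal := by
      simp only [eLpNorm_eq_lintegral_rpow_enorm_toReal hr hr', one_div,
        ENNReal.rpow_inv_rpow hr₀.ne']
      exact (hG.enorm.pow_const _).lintegral_prod_right'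
    obtain ⟨y, hyN, hy⟩ := exists_notMem_null_le_laverage hν hmeas.aemeasurable hN
    refine ⟨y, hyN, ?_⟩
    rw [eLpNorm_prod_eq_lintegral hr hr' hG, ENNReal.le_rpow_inv_iff hr₀,
      ENNReal.mul_rpow_of_nonneg _ _ hr₀.le, one_div, ENNReal.toReal_inv,
      ENNReal.rpow_inv_rpow hr₀.ne', ← measure_mul_laverage]
    gcongr

lemma eLpNorm_prod_le_of_ae_slice [SFinite μ] {G : β × α → F}
    (hG : StronglyMeasurable G) {r : ℝ≥0∞} (hr : r ≠ 0) {R : ℝ≥0∞}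
    (h : ∀ᵐ y ∂ν, eLpNorm (fun x => G (y, x)) r μ ≤ R) :
    eLpNorm G r (ν.prod μ) ≤ ν Set.univ ^ (1 / r).toReal * R := by
  obtain rfl | hr' := eq_or_ne r ∞
  · simp only [eLpNorm_exponent_top, ENNReal.div_top, ENNReal.toReal_zero, ENNReal.rpow_zero,
      one_mul] at h ⊢
    refine eLpNormEssSup_le_of_ae_enorm_bound
      ((Measure.ae_prod_iff_ae_ae (measurableSet_le hG.enorm measurable_const)).2 ?_)
    filter_upwards [h] with y hy
    exact (enorm_ae_le_eLpNormEssSup (fun x => G (y, x)) μ).mono fun x hx => hx.trans hy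
  · have hr₀ : 0 < r.toReal := ENNReal.toReal_pos hr hr'
    rw [eLpNorm_prod_eq_lintegral hr hr' hG, ENNReal.rpow_inv_le_iff hr₀,
      ENNReal.mul_rpow_of_nonneg _ _ hr₀.le, one_div, ENNReal.toReal_inv,
      ENNReal.rpow_inv_rpow hr₀.ne', mul_comm, ← lintegral_const]
    exact lintegral_mono_ae (h.mono fun y hy => by gcongr)

lemma enorm_mul_measure_rpow_le_eLpNorm {f : α → F} {c : F} {r : ℝ≥0∞} (hr : r ≠ 0) (hμ : μ ≠ 0)
    (h : ∀ᵐ x ∂μ, ‖c‖ ≤ ‖f x‖) : ‖c‖ₑ * μ Set.univ ^ (1 / r).toReal ≤ eLpNorm f r μ := by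
  rw [one_div, ENNReal.toReal_inv, ← one_div, ← eLpNorm_const c hr hμ]
  exact eLpNorm_mono_ae h

end QuasiNorm

section ShiftAlgebra

variable {E F ι : Type*} [AddCommGroup E] [AddCommGroup F] [Module ℝ F]

/-- The algebra of finite real combinations of translations of `E`. Working in this commutative
algebra turns identities between difference operators into polynomial identities. -/
abbrev ShiftAlgebra (E : Type*) := AddMonoidAlgebra ℝ E

/-- The translation by `v`, as an element of the shift algebra. -/
def shift (v : E) : ShiftAlgebra E := AddMonoidAlgebra.single v 1

lemma shift_zero : shift (0 : E) = 1 := AddMonoidAlgebra.one_def.symm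

lemma shift_add (v w : E) : shift (v + w) = shift v * shift w := by
  simp [shift, AddMonoidAlgebra.single_mul_single]

lemma shift_nsmul (k : ℕ) (v : E) : shift (k • v) = shift v ^ k := by
  simp [shift, AddMonoidAlgebra.single_pow]

lemma shift_sum (s : Finset ι) (h : ι → E) : shift (∑ a ∈ s, h a) = ∏ a ∈ s, shift (h a) := by
  induction s using Finset.induction_on with
  | empty => simp [shift_zero]
  | insert a s ha ih => rw [Finset.prod_insert ha, Finset.sum_insert ha, shift_add, ih]

/-- The action of the shift algebra on functions, under which `shift v` sends `φ` to
`x ↦ φ (x + v)`. -/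
def shiftAction : ShiftAlgebra E →ₐ[ℝ] Module.End ℝ (E → F) :=
  AddMonoidAlgebra.lift ℝ _ E
    { toFun := fun v => LinearMap.funLeft ℝ F (· + v.toAdd)
      map_one' := by ext; simp [LinearMap.funLeft_apply]
      map_mul' := fun v w => by
        ext φ x; simp [LinearMap.funLeft_apply, add_assoc] }

lemma shiftAction_shift (v : E) (φ : E → F) (x : E) : shiftAction (shift v) φ x = φ (x + v) := by
  simp [shiftAction, shift, AddMonoidAlgebra.lift_single, LinearMap.funLeft_apply]

variable [Fintype ι]

/-- The mixed difference `Δ_{h a₁} ⋯ Δ_{h aⱼ}`. -/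
def mixedDiff (h : ι → E) : Module.End ℝ (E → F) := shiftAction (∏ a, (shift (h a) - 1))

lemma mixedDiff_comp_equiv (h : ι → E) (σ : Equiv.Perm ι) :
    mixedDiff (F := F) (h ∘ σ) = mixedDiff h := by
  unfold mixedDiff
  exact congrArg _ (Equiv.prod_comp σ fun a => shift (h a) - 1)

lemma mixedDiff_of_isEmpty [IsEmpty ι] (h : ι → E) (φ : E → F) : mixedDiff h φ = φ := by
  simp [mixedDiff]

lemma mixedDiff_cons {j : ℕ} (k : E) (h : Fin j → E) (φ : E → F) (x : E) :
    mixedDiff (Fin.cons k h : Fin (j + 1) → E) φ x = mixedDiff h φ (x + k) - mixedDiff h φ x := by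
  simp [mixedDiff, Fin.prod_univ_succ, sub_mul, shiftAction_shift]

lemma mixedDiff_update_add {j : ℕ} (h : Fin j → E) (a : Fin j) (u v : E) (φ : E → F) :
    mixedDiff (Function.update h a (u + v)) φ =
      mixedDiff (Function.update h a u) φ + mixedDiff (Function.update h a v) φ +
        mixedDiff (Fin.cons v (Function.update h a u) : Fin (j + 1) → E) φ := by
  have hprod (w : E) : ∏ b, (shift (Function.update h a w b) - 1) =
      (shift w - 1) * ∏ b ∈ Finset.univ.erase a, (shift (h b) - 1) := by
    rw [← Finset.mul_prod_erase _ _ (Finset.mem_univ a), Function.update_self]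
    congr 1
    exact Finset.prod_congr rfl fun b hb => by
      rw [Function.update_of_ne (Finset.ne_of_mem_erase hb)]
  simp only [mixedDiff, Fin.prod_univ_succ, Fin.cons_zero, Fin.cons_succ, hprod]
  rw [← LinearMap.add_apply, ← LinearMap.add_apply, ← map_add, ← map_add, shift_add]
  congr 2
  ring

lemma mixedDiff_apply [DecidableEq ι] (h : ι → E) (φ : E → F) (x : E) :
    mixedDiff h φ x = ∑ S : Finset ι, (-1 : ℝ) ^ Sᶜ.card • φ (x + ∑ a ∈ S, h a) := by
  have hprod : ∏ a, (shift (h a) - 1) =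
      ∑ S : Finset ι, (-1 : ℝ) ^ Sᶜ.card • shift (∑ a ∈ S, h a) := by
    simp_rw [sub_eq_add_neg, Finset.prod_add, Finset.powerset_univ, Finset.prod_const, shift_sum,
      Algebra.smul_def, map_pow, map_neg, map_one, Finset.compl_eq_univ_sdiff, mul_comm]
  simp [mixedDiff, hprod, shiftAction_shift]

lemma sum_comp_some_perm [DecidableEq ι] {M : Type*} [AddCommMonoid M] (g : (ι → Option ι) → M) :
    ∑ σ : Equiv.Perm ι, g (some ∘ σ) = ∑ f : ι → Option ι with ∀ a, some a ∈ Set.range f, g f := by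
  refine Finset.sum_bij (fun σ _ => some ∘ σ) (fun σ _ => ?_) (fun σ _ τ _ h => ?_)
    (fun f hf => ?_) fun σ _ => rfl
  · simpa using fun a => ⟨σ.symm a, by simp⟩
  · exact Equiv.coe_fn_injective ((Option.some_injective ι).comp_left h)
  · choose τ hτ using (Finset.mem_filter.1 hf).2
    have hinj : Function.Injective τ := fun a b hab => by
      simpa [hτ] using congrArg f hab
    refine ⟨(Equiv.ofBijective τ hinj.bijective_of_finite).symm, Finset.mem_univ _, ?_⟩
    funext i
    obtain ⟨a, rfl⟩ := Finite.surjective_of_injective hinj i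
    simp [hτ]

lemma mixedDiff_multilinear_diagonal [DecidableEq ι] [Module ℝ E]
    (B : MultilinearMap ℝ (fun _ : ι => E) F) (h : ι → E) (x : E) :
    mixedDiff h (fun y => B fun _ => y) x = ∑ σ : Equiv.Perm ι, B (h ∘ σ) := by
  let v (o : Option ι) : E := o.elim x h
  let missed (f : ι → Option ι) : Finset ι := {a | some a ∉ Set.range f}
  have hexpand (T : Finset ι) : (B fun _ => x + ∑ a ∈ Tᶜ, h a) =
      ∑ f : ι → Option ι, if T ⊆ missed f then B (v ∘ f) else 0 := by
    have hsum : x + ∑ a ∈ Tᶜ, h a = ∑ o ∈ Finset.insertNone Tᶜ, v o := by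
      simp [Finset.sum_insertNone, v]
    rw [hsum, MultilinearMap.map_sum_finset, ← Finset.sum_filter]
    refine Finset.sum_congr (Finset.ext fun f => ?_) fun f _ => rfl
    simp only [Fintype.mem_piFinset, Finset.mem_insertNone, Finset.mem_compl, Option.mem_def,
      Finset.mem_filter, Finset.mem_univ, true_and, missed, Finset.subset_iff, Set.mem_range,
      not_exists]
    exact ⟨fun H a ha i hi => H i a hi ha, fun H i a hi ha => H ha i hi⟩
  have hsign (f : ι → Option ι) : (∑ T : Finset ι, if T ⊆ missed f then (-1 : ℝ) ^ T.card else 0) =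
      if missed f = ∅ then 1 else 0 := by
    rw [← Finset.sum_filter, Finset.filter_subset_univ]
    exact_mod_cast Finset.sum_powerset_neg_one_pow_card
  calc mixedDiff h (fun y => B fun _ => y) x
      = ∑ T : Finset ι, (-1 : ℝ) ^ T.card • B fun _ => x + ∑ a ∈ Tᶜ, h a := by
        rw [mixedDiff_apply, ← Equiv.sum_comp (compl_involutive.toPerm)]
        simp
    _ = ∑ f : ι → Option ι, (∑ T : Finset ι, if T ⊆ missed f then (-1 : ℝ) ^ T.card else 0) •
          B (v ∘ f) := by
        simp_rw [hexpand, Finset.smul_sum, Finset.sum_smul]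
        rw [Finset.sum_comm]
        simp
    _ = ∑ f : ι → Option ι with ∀ a, some a ∈ Set.range f, B (v ∘ f) := by
        simp_rw [hsign]
        simp [Finset.sum_filter, missed, Finset.filter_eq_empty_iff]
    _ = _ := (sum_comp_some_perm fun f => B (v ∘ f)).symm

section FreeStep

variable [Module ℝ E] {l : ℕ} (h : Fin l → E) (s : E)

lemma sum_neg_one_pow_card_mul_shift (k : ℕ) :
    ∑ S : Finset (Fin l), (-1) ^ S.card * (shift (∑ a ∈ S, h a) *
      shift (s - ∑ a ∈ S, ((a : ℝ) + 1)⁻¹ • h a) ^ k) =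
    shift (k • s) * ∏ a : Fin l, (1 - shift ((1 - k * ((a : ℝ) + 1)⁻¹) • h a)) := by
  simp_rw [Finset.prod_sub, Finset.powerset_univ, Finset.prod_const_one, mul_one, ← shift_sum,
    Finset.mul_sum, ← shift_nsmul, ← shift_add]
  refine Finset.sum_congr rfl fun S _ => ?_
  rw [mul_left_comm, ← shift_add]
  congr 2
  simp only [sub_smul, one_smul, smul_sub, Finset.sum_sub_distrib, mul_smul, Finset.smul_sum,
    Nat.cast_smul_eq_nsmul]
  abel

/-- Kemperman's identity. The step `s` is free because it cancels: expanding the powers, the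
coefficient of `shift s ^ k` contains the factor `1 - shift 0` as soon as `1 ≤ k ≤ l`. -/
lemma prod_shift_sub_one_eq_sum :
    ∏ a, (shift (h a) - 1) = ∑ S : Finset (Fin l), (-1) ^ S.card * (shift (∑ a ∈ S, h a) *
      (shift (s - ∑ a ∈ S, ((a : ℝ) + 1)⁻¹ • h a) - 1) ^ l) := by
  have hvanish (k : ℕ) (hk : k ∈ Finset.range (l + 1)) (hk₀ : k ≠ 0) :
      ∏ a : Fin l, (1 - shift ((1 - k * ((a : ℝ) + 1)⁻¹) • h a)) = 0 := by
    obtain ⟨k, rfl⟩ := Nat.exists_eq_succ_of_ne_zero hk₀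
    have hkl : k < l := by simpa using hk
    refine Finset.prod_eq_zero (Finset.mem_univ ⟨k, hkl⟩) ?_
    have : (k : ℝ) + 1 ≠ 0 := by positivity
    simp [mul_inv_cancel₀ this, shift_zero]
  symm
  calc _ = ∑ k ∈ Finset.range (l + 1), (-1) ^ (k + l) * (l.choose k) *
        ∑ S : Finset (Fin l), (-1) ^ S.card * (shift (∑ a ∈ S, h a) *
          shift (s - ∑ a ∈ S, ((a : ℝ) + 1)⁻¹ • h a) ^ k) := by
        simp_rw [sub_pow, one_pow, Finset.mul_sum]
        rw [Finset.sum_comm]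
        exact Finset.sum_congr rfl fun k _ => Finset.sum_congr rfl fun S _ => by ring
    _ = (-1) ^ l * ∏ a, (1 - shift (h a)) := by
        simp_rw [sum_neg_one_pow_card_mul_shift]
        rw [Finset.sum_eq_single_of_mem 0 (by simp) fun k hk hk₀ => by simp [hvanish k hk hk₀]]
        simp [shift_zero]
    _ = _ := by
        rw [← Fin.prod_const, ← Finset.prod_mul_distrib]
        exact Finset.prod_congr rfl fun a _ => by ring

end FreeStep

lemma shiftAction_shift_sub_one_pow (l : ℕ) (h : E) (φ : E → F) :
    shiftAction ((shift h - 1) ^ l) φ = (fwdDiff h)^[l] φ := by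
  have hfwd : ⇑(shiftAction (shift h - 1) : Module.End ℝ (E → F)) = fwdDiff h := by
    funext φ x
    simp [fwdDiff, shiftAction_shift]
  rw [map_pow, Module.End.pow_apply, hfwd]

lemma mixedDiff_apply_eq_sum_fwdDiff [Module ℝ E] {l : ℕ} (h : Fin l → E) (s : E) (φ : E → F)
    (x : E) :
    mixedDiff h φ x = ∑ S : Finset (Fin l), (-1 : ℝ) ^ S.card •
      (fwdDiff (s - ∑ a ∈ S, ((a : ℝ) + 1)⁻¹ • h a))^[l] φ (x + ∑ a ∈ S, h a) := by
  have hsmul (k : ℕ) (X : ShiftAlgebra E) : (-1) ^ k * X = (-1 : ℝ) ^ k • X := by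
    simp only [Algebra.smul_def, map_pow, map_neg, map_one]
  simp only [mixedDiff, prod_shift_sub_one_eq_sum h s, hsmul, map_sum, map_smul, map_mul,
    LinearMap.sum_apply, LinearMap.smul_apply, Finset.sum_apply, Pi.smul_apply,
    Module.End.mul_apply, shiftAction_shift, shiftAction_shift_sub_one_pow]

end ShiftAlgebra

lemma diffl_eq_fwdDiff_iterate {n : ℕ} (l : ℕ) (h : Rn n) (g : Rn n → ℝ) :
    diffl l h g = (fwdDiff h)^[l] g := by
  funext x
  rw [fwdDiff_iter_eq_sum_shift, diffl]
  refine Finset.sum_congr rfl fun j hj => ?_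
  have hjl : (-1 : ℝ) ^ (l + j) = (-1) ^ (l - j) := by
    rw [show l + j = l - j + 2 * j by grind, pow_add, pow_mul]
    simp
  simp [hjl, Nat.cast_smul_eq_nsmul, mul_comm]

section CornerSet

variable {E ι : Type*} [AddCommGroup E] {Ω : Set E}

/-- The set of points `x` all of whose translates `x + ∑ a ∈ S, h a` lie in `Ω`; it is the domain
on which `mixedDiff h φ` only involves values of `φ` in `Ω`. -/
def cornerSet (Ω : Set E) (h : ι → E) : Set E := {x | ∀ S : Finset ι, x + ∑ a ∈ S, h a ∈ Ω}

lemma cornerSet_subset (h : ι → E) : cornerSet Ω h ⊆ Ω := fun x hx => by simpa using hx ∅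

lemma cornerSet_of_isEmpty [IsEmpty ι] (h : ι → E) : cornerSet Ω h = Ω := by
  ext x
  simp [cornerSet, Finset.eq_empty_of_isEmpty]

lemma cornerSet_comp_equiv (h : ι → E) (σ : Equiv.Perm ι) :
    cornerSet Ω (h ∘ σ) = cornerSet Ω h := by
  ext x
  refine (Equiv.finsetCongr σ).forall_congr fun {S} => ?_
  simp

lemma mem_cornerSet_cons {j : ℕ} {k : E} {h : Fin j → E} {x : E} :
    x ∈ cornerSet Ω (Fin.cons k h : Fin (j + 1) → E) ↔
      x ∈ cornerSet Ω h ∧ x + k ∈ cornerSet Ω h := by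
  have hsum (T : Finset (Fin (j + 1))) : ∑ a ∈ T, (Fin.cons k h : Fin (j + 1) → E) a =
      (if 0 ∈ T then k else 0) + ∑ a with a.succ ∈ T, h a := by
    rw [← Finset.univ_inter T, ← Finset.sum_ite_mem, Fin.sum_univ_succ, Finset.sum_filter]
    simp
  constructor
  · intro hx
    refine ⟨fun S => ?_, fun S => ?_⟩
    · simpa [hsum] using hx (S.map (Fin.succEmb j))
    · simpa [hsum, add_assoc] using hx (insert 0 (S.map (Fin.succEmb j)))
  · rintro ⟨hx, hxk⟩ T
    rw [hsum]
    split_ifs with h₀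
    · simpa [add_assoc] using hxk _
    · simpa using hx _

lemma cornerSet_eq_iInter (h : ι → E) :
    cornerSet Ω h = ⋂ S : Finset ι, (· + ∑ a ∈ S, h a) ⁻¹' Ω := by
  ext x
  simp [cornerSet]

lemma isOpen_cornerSet [Finite ι] [TopologicalSpace E] [ContinuousAdd E] (hΩ : IsOpen Ω)
    (h : ι → E) : IsOpen (cornerSet Ω h) := by
  rw [cornerSet_eq_iInter]
  exact isOpen_iInter_of_finite fun S => hΩ.preimage (continuous_add_const _)

lemma convex_cornerSet [Module ℝ E] (hΩ : Convex ℝ Ω) (h : ι → E) :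
    Convex ℝ (cornerSet Ω h) := by
  rw [cornerSet_eq_iInter]
  exact convex_iInter fun S => hΩ.translate_preimage_left _

end CornerSet

lemma norm_sum_le_card_mul_norm {E ι : Type*} [SeminormedAddCommGroup E] [Fintype ι] (h : ι → E)
    (S : Finset ι) : ‖∑ a ∈ S, h a‖ ≤ Fintype.card ι * ‖h‖ := by
  calc ‖∑ a ∈ S, h a‖ ≤ S.card • ‖h‖ :=
        (norm_sum_le_of_le S fun a _ => norm_le_pi_norm h a).trans_eq (by simp)
    _ ≤ Fintype.card ι * ‖h‖ := by
        rw [nsmul_eq_mul]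
        gcongr
        exact S.card_le_univ

lemma ball_subset_cornerSet {E ι : Type*} [SeminormedAddCommGroup E] [Fintype ι] {Ω : Set E}
    {x₀ : E} {ρ : ℝ} (hΩ : Metric.ball x₀ (2 * ρ) ⊆ Ω) {h : ι → E}
    (hh : Fintype.card ι * ‖h‖ ≤ ρ) : Metric.ball x₀ ρ ⊆ cornerSet Ω h := by
  intro x hx S
  apply hΩ
  rw [mem_ball_iff_norm] at hx ⊢
  calc ‖x + ∑ a ∈ S, h a - x₀‖ = ‖(x - x₀) + ∑ a ∈ S, h a‖ := by congr 1; abel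
    _ ≤ ‖x - x₀‖ + ‖∑ a ∈ S, h a‖ := norm_add_le _ _
    _ < 2 * ρ := by linarith [norm_sum_le_card_mul_norm h S]

lemma measurable_mixedDiff {E ι : Type*} [AddCommGroup E] [MeasurableSpace E] [MeasurableAdd E]
    [Fintype ι] (h : ι → E) {φ : E → ℝ} (hφ : Measurable φ) : Measurable (mixedDiff h φ) := by
  have : mixedDiff h φ =
      fun x => ∑ S : Finset ι, (-1 : ℝ) ^ Sᶜ.card • φ (x + ∑ a ∈ S, h a) :=
    funext (mixedDiff_apply h φ)
  rw [this]
  fun_prop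

section MixedModulus

variable {n j : ℕ}

/-- The modulus of smoothness of `φ` in `L_r(Ω)` formed with mixed differences of order `j` whose
steps have sup norm at most `τ`. -/
def mixedModulus (j : ℕ) (r : ℝ≥0∞) (τ : ℝ) (Ω : Set (Rn n)) (φ : Rn n → ℝ) : ℝ≥0∞ :=
  ⨆ (h : Fin j → Rn n) (_ : ‖h‖ ≤ τ), eLpNorm (mixedDiff h φ) r (volume.restrict (cornerSet Ω h))

variable {r : ℝ≥0∞} {τ : ℝ} {Ω : Set (Rn n)}

lemma eLpNorm_mixedDiff_le_mixedModulus (φ : Rn n → ℝ) {h : Fin j → Rn n} (hh : ‖h‖ ≤ τ) :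
    eLpNorm (mixedDiff h φ) r (volume.restrict (cornerSet Ω h)) ≤ mixedModulus j r τ Ω φ :=
  le_iSup₂ (f := fun (h : Fin j → Rn n) (_ : ‖h‖ ≤ τ) =>
    eLpNorm (mixedDiff h φ) r (volume.restrict (cornerSet Ω h))) h hh

lemma mixedModulus_zero (hτ : 0 ≤ τ) (φ : Rn n → ℝ) :
    mixedModulus 0 r τ Ω φ = eLpNorm φ r (volume.restrict Ω) := by
  have (h : Fin 0 → Rn n) : ‖h‖ ≤ τ := (pi_norm_le_iff_of_nonneg hτ).2 nofun
  simp [mixedModulus, mixedDiff_of_isEmpty, cornerSet_of_isEmpty, this]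

lemma mixedModulus_le_const_mul_eLpNorm (hΩ : IsOpen Ω) {φ : Rn n → ℝ} (hφ : Measurable φ) :
    mixedModulus j r τ Ω φ ≤
      quasiConst r ^ 2 ^ j * 2 ^ j * eLpNorm φ r (volume.restrict Ω) := by
  refine iSup₂_le fun h _ => ?_
  have hterm (S : Finset (Fin j)) :
      eLpNorm (fun x => (-1 : ℝ) ^ Sᶜ.card • φ (x + ∑ a ∈ S, h a)) r
        (volume.restrict (cornerSet Ω h)) ≤ eLpNorm φ r (volume.restrict Ω) :=
    eLpNorm_restrict_le_of_measurePreserving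
      (measurePreserving_add_right volume (∑ a ∈ S, h a)) (isOpen_cornerSet hΩ h).measurableSet
      hΩ.measurableSet (fun x hx => hx S) hφ.aestronglyMeasurable (fun x _ => by simp) r
  calc _ = eLpNorm (fun x => ∑ S : Finset (Fin j), (-1 : ℝ) ^ Sᶜ.card • φ (x + ∑ a ∈ S, h a)) r
        (volume.restrict (cornerSet Ω h)) := by
        rw [funext (mixedDiff_apply h φ)]
    _ ≤ quasiConst r ^ (Finset.univ : Finset (Finset (Fin j))).card *
          ∑ _S : Finset (Fin j), eLpNorm φ r (volume.restrict Ω) := by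
        refine (eLpNorm_sum_le_quasiConst_pow _ (fun S _ => ?_) r).trans ?_
        · exact Measurable.aestronglyMeasurable (by fun_prop)
        · gcongr with S
          exact hterm S
    _ = _ := by simp [mul_assoc]

lemma mixedModulus_ne_top (hΩ : IsOpen Ω) {φ : Rn n → ℝ} (hφ : Measurable φ)
    (hfin : eLpNorm φ r (volume.restrict Ω) ≠ ∞) : mixedModulus j r τ Ω φ ≠ ∞ := by
  have := quasiConst_pow_ne_top r (2 ^ j)
  exact ne_top_of_le_ne_top (by finiteness) (mixedModulus_le_const_mul_eLpNorm hΩ hφ)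

end MixedModulus

section Cubes

variable {n : ℕ}

lemma openCube_eq_ball (x : Rn n) {s : ℝ} (hs : 0 < s) : openCube x s = Metric.ball x s := by
  ext y
  simp [openCube, dist_pi_lt_iff hs, Real.dist_eq]

lemma openCube_eq_pi (x : Rn n) (s : ℝ) :
    openCube x s = Set.univ.pi fun i => Metric.ball (x i) s := by
  ext y
  simp [openCube, Real.dist_eq]

lemma isOpen_openCube (x : Rn n) (s : ℝ) : IsOpen (openCube x s) := by
  rw [openCube_eq_pi]
  exact isOpen_set_pi Set.finite_univ fun _ _ => Metric.isOpen_ball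

lemma measurableSet_openCube (x : Rn n) (s : ℝ) : MeasurableSet (openCube x s) :=
  (isOpen_openCube x s).measurableSet

lemma convex_openCube (x : Rn n) (s : ℝ) : Convex ℝ (openCube x s) := by
  rw [openCube_eq_pi]
  exact convex_pi fun _ _ => convex_ball _ _

end Cubes

section FreeStepBound

variable {n : ℕ}

lemma difflOn_of_convex {l : ℕ} {Ω : Set (Rn n)} (hΩ : Convex ℝ Ω) (h : Rn n) (g : Rn n → ℝ)
    (x : Rn n) :
    difflOn l Ω h g x = if x ∈ Ω ∧ x + (l : ℝ) • h ∈ Ω then diffl l h g x else 0 := by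
  have hseg : (∀ τ ∈ Set.Icc (0 : ℝ) 1, x + (τ * l) • h ∈ Ω) ↔ x ∈ Ω ∧ x + (l : ℝ) • h ∈ Ω := by
    refine ⟨fun H => ⟨by simpa using H 0 (by simp), by simpa using H 1 (by simp)⟩, ?_⟩
    rintro ⟨h₀, h₁⟩ τ hτ
    simpa [smul_smul] using hΩ.add_smul_mem h₀ h₁ hτ
  simp only [difflOn, hseg]

lemma measurable_diffl (l : ℕ) {g : Rn n → ℝ} (hg : Measurable g) :
    Measurable fun z : Rn n × Rn n => diffl l z.1 g z.2 := by
  unfold diffl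
  fun_prop

lemma measurable_difflOn (l : ℕ) {Ω : Set (Rn n)} (hΩ : Convex ℝ Ω) (hΩm : MeasurableSet Ω)
    {g : Rn n → ℝ} (hg : Measurable g) :
    Measurable fun z : Rn n × Rn n => difflOn l Ω z.1 g z.2 := by
  simp_rw [difflOn_of_convex hΩ]
  refine Measurable.ite ((measurable_snd hΩm).inter ?_) (measurable_diffl l hg) measurable_const
  exact measurableSet_preimage (f := fun z : Rn n × Rn n => z.2 + (l : ℝ) • z.1) (by fun_prop) hΩm

lemma measurePreserving_shear {E : Type*} [AddCommGroup E] [MeasurableSpace E] [MeasurableAdd₂ E]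
    (μ : Measure E) [SFinite μ] [μ.IsAddRightInvariant] {c : E → E} (hc : Measurable c) (v : E) :
    MeasurePreserving (fun z : E × E => (z.1 + c z.2, z.2 + v)) (μ.prod μ) (μ.prod μ) := by
  have hskew : MeasurePreserving (fun z : E × E => (z.1 + v, z.2 + c z.1))
      (μ.prod μ) (μ.prod μ) :=
    (measurePreserving_add_right μ v).skew_product (g := fun x y => y + c x)
      (by simp only [Function.uncurry_def]; fun_prop)
      (.of_forall fun x => (measurePreserving_add_right μ (c x)).map_eq)
  exact (Measure.measurePreserving_swap.comp hskew).comp Measure.measurePreserving_swap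

lemma norm_sum_inv_smul_le {E : Type*} [SeminormedAddCommGroup E] [NormedSpace ℝ E] {l : ℕ}
    (h : Fin l → E) (S : Finset (Fin l)) : ‖∑ a ∈ S, ((a : ℝ) + 1)⁻¹ • h a‖ ≤ l * ‖h‖ := by
  refine (norm_sum_le_card_mul_norm (fun a : Fin l => ((a : ℝ) + 1)⁻¹ • h a) S).trans ?_
  rw [Fintype.card_fin]
  gcongr
  refine (pi_norm_le_iff_of_nonneg (norm_nonneg h)).2 fun a => ?_
  calc ‖((a : ℝ) + 1)⁻¹ • h a‖ = ((a : ℝ) + 1)⁻¹ * ‖h a‖ := by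
        rw [norm_smul, Real.norm_of_nonneg (by positivity)]
    _ ≤ 1 * ‖h‖ := by
        gcongr
        · exact inv_le_one_of_one_le₀ (by linarith [(a : ℕ).cast_nonneg (α := ℝ)])
        · exact norm_le_pi_norm h a
    _ = ‖h‖ := one_mul _

variable {l : ℕ} {Ω : Set (Rn n)} {x₀ : Rn n} {ρ d θ ε τ : ℝ}

lemma add_smul_freeStep_mem (hl : 0 < l) (hΩ : Convex ℝ Ω) (hball : Metric.ball x₀ ρ ⊆ Ω)
    (hθ : 0 < θ) (hθ₁ : θ ≤ 1) (hτ : 4 * l ^ 2 * τ ≤ θ * ρ) {u x b H : Rn n}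
    (hu : ‖u‖ < θ * ρ / (2 * l)) (hb : ‖b‖ ≤ l * τ) (hH : ‖H‖ ≤ l * τ) (hx : x + H ∈ Ω) :
    x + H + (l : ℝ) • (u + ((θ / l) • (x₀ - x) - b)) ∈ Ω := by
  have hl₀ : (1 : ℝ) ≤ l := by exact_mod_cast hl
  have hmem : x₀ + (H + (l / θ) • (u - b)) ∈ Ω := by
    refine hball (mem_ball_iff_norm.2 ?_)
    have hu' : l / θ * ‖u‖ < ρ / 2 := by
      calc l / θ * ‖u‖ < l / θ * (θ * ρ / (2 * l)) := by gcongr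
        _ = ρ / 2 := by field_simp
    have hb' : l / θ * ‖b‖ ≤ ρ / 4 := by
      calc l / θ * ‖b‖ ≤ l / θ * (l * τ) := by gcongr
        _ = (4 * l ^ 2 * τ) / (4 * θ) := by field_simp
        _ ≤ θ * ρ / (4 * θ) := by gcongr
        _ = ρ / 4 := by field_simp
    have hH' : ‖H‖ ≤ ρ / 4 := by
      have hτ₀ : 0 ≤ l * τ := (norm_nonneg _).trans hb
      nlinarith [show 0 ≤ l / θ * ‖u‖ by positivity]
    calc ‖x₀ + (H + (l / θ) • (u - b)) - x₀‖ = ‖H + (l / θ) • (u - b)‖ := by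
          rw [add_sub_cancel_left]
      _ ≤ ‖H‖ + l / θ * (‖u‖ + ‖b‖) := by
          refine (norm_add_le _ _).trans ?_
          rw [norm_smul, Real.norm_of_nonneg (by positivity)]
          gcongr
          exact norm_sub_le _ _
      _ < ρ := by linarith
  convert hΩ hx hmem (sub_nonneg.2 hθ₁) hθ.le (sub_add_cancel 1 θ) using 1
  ext i
  simp
  field_simp
  ring

lemma norm_freeStep_lt (hl : 0 < l) (hθ : 0 < θ) (hτ : 4 * l ^ 2 * τ ≤ θ * ρ)
    {u x b : Rn n} (hu : ‖u‖ < θ * ρ / (2 * l)) (hb : ‖b‖ ≤ l * τ) (hx : ‖x - x₀‖ ≤ d) :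
    ‖u + ((θ / l) • (x₀ - x) - b)‖ < θ * (d + ρ) := by
  have hl₀ : (1 : ℝ) ≤ l := by exact_mod_cast hl
  have hρ : 0 < θ * ρ := by
    have := (norm_nonneg u).trans_lt hu
    rwa [div_pos_iff_of_pos_right (by positivity)] at this
  have hu' : ‖u‖ < θ * ρ / 2 :=
    hu.trans_le (div_le_div_of_nonneg_left hρ.le two_pos (by linarith))
  have hb' : ‖b‖ ≤ θ * ρ / 4 := by nlinarith [(norm_nonneg _).trans hb]
  have hx' : θ / l * ‖x₀ - x‖ ≤ θ * d := by
    rw [norm_sub_rev]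
    gcongr
    exact div_le_self hθ.le hl₀
  calc ‖u + ((θ / l) • (x₀ - x) - b)‖ ≤ ‖u‖ + (θ / l * ‖x₀ - x‖ + ‖b‖) := by
        refine (norm_add_le _ _).trans ?_
        grw [norm_sub_le]
        rw [norm_smul, Real.norm_of_nonneg (by positivity)]
    _ < θ * (d + ρ) := by linarith

lemma eLpNorm_freeStep_le_difflOn (hl : 0 < l) (hΩo : IsOpen Ω) (hΩ : Convex ℝ Ω)
    (hball : Metric.ball x₀ ρ ⊆ Ω) (hd : ∀ x ∈ Ω, ‖x - x₀‖ ≤ d) (hθ : 0 < θ) (hθ₁ : θ ≤ 1)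
    (hε₀ : 0 < ε) (hε : θ * (d + ρ) ≤ ε) (hτ : 4 * l ^ 2 * τ ≤ θ * ρ) {φ : Rn n → ℝ}
    (hφ : Measurable φ) {r : ℝ≥0∞} {h : Fin l → Rn n} (hh : ‖h‖ ≤ τ) (S : Finset (Fin l)) :
    eLpNorm (fun z : Rn n × Rn n => (-1 : ℝ) ^ S.card •
        (fwdDiff (z.1 + (θ / l : ℝ) • (x₀ - z.2) - ∑ a ∈ S, ((a : ℝ) + 1)⁻¹ • h a))^[l] φ
          (z.2 + ∑ a ∈ S, h a)) r
        ((volume.restrict (Metric.ball 0 (θ * ρ / (2 * l)))).prod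
          (volume.restrict (cornerSet Ω h))) ≤
      eLpNorm (fun z : Rn n × Rn n => difflOn l Ω z.1 φ z.2) r
        ((volume.restrict (openCube 0 ε)).prod (volume.restrict Ω)) := by
  set b := ∑ a ∈ S, ((a : ℝ) + 1)⁻¹ • h a
  set H := ∑ a ∈ S, h a
  have hb : ‖b‖ ≤ l * τ := (norm_sum_inv_smul_le h S).trans (by gcongr)
  have hH : ‖H‖ ≤ l * τ := (norm_sum_le_card_mul_norm h S).trans (by rw [Fintype.card_fin]; gcongr)
  rw [Measure.prod_restrict, Measure.prod_restrict]
  refine eLpNorm_restrict_le_of_measurePreserving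
    (measurePreserving_shear volume (c := fun x => (θ / l : ℝ) • (x₀ - x) - b) (by fun_prop) H)
    (Metric.isOpen_ball.measurableSet.prod (isOpen_cornerSet hΩo h).measurableSet)
    ((measurableSet_openCube 0 ε).prod hΩo.measurableSet) ?_
    (measurable_difflOn l hΩ hΩo.measurableSet hφ).aestronglyMeasurable ?_ r
  · rintro ⟨u, x⟩ ⟨hu, hx⟩
    refine ⟨?_, hx S⟩
    rw [openCube_eq_ball 0 hε₀, mem_ball_zero_iff]
    exact (norm_freeStep_lt hl hθ hτ (mem_ball_zero_iff.1 hu) hb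
      (hd x (cornerSet_subset h hx))).trans_le hε
  · rintro ⟨u, x⟩ ⟨hu, hx⟩
    have hend := add_smul_freeStep_mem hl hΩ hball hθ hθ₁ hτ (mem_ball_zero_iff.1 hu) hb hH (hx S)
    rw [difflOn_of_convex hΩ, if_pos ⟨hx S, hend⟩, diffl_eq_fwdDiff_iterate, add_sub_assoc]
    simp [H]

/-- The free step of `mixedDiff_apply_eq_sum_fwdDiff` is chosen to point from `x` towards the
centre `x₀` and is then averaged over a small ball, so that all the differences involved stay in
the convex set `Ω`. -/
theorem mixedModulus_le_const_mul_difflOn (hl : 0 < l) (hΩo : IsOpen Ω) (hΩ : Convex ℝ Ω)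
    (hball : Metric.ball x₀ ρ ⊆ Ω) (hd : ∀ x ∈ Ω, ‖x - x₀‖ ≤ d) (hρ : 0 < ρ) (hθ : 0 < θ)
    (hθ₁ : θ ≤ 1) (hε₀ : 0 < ε) (hε : θ * (d + ρ) ≤ ε) (hτ : 4 * l ^ 2 * τ ≤ θ * ρ)
    {φ : Rn n → ℝ} (hφ : Measurable φ) (r : ℝ≥0∞) :
    volume (Metric.ball (0 : Rn n) (θ * ρ / (2 * l))) ^ (1 / r).toReal *
        mixedModulus l r τ Ω φ ≤
      quasiConst r ^ 2 ^ l * 2 ^ l * eLpNorm (fun z : Rn n × Rn n => difflOn l Ω z.1 φ z.2) r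
        ((volume.restrict (openCube 0 ε)).prod (volume.restrict Ω)) := by
  simp only [mixedModulus, ENNReal.mul_iSup]
  refine iSup₂_le fun h hh => ?_
  set U := Metric.ball (0 : Rn n) (θ * ρ / (2 * l))
  set ω := eLpNorm (fun z : Rn n × Rn n => difflOn l Ω z.1 φ z.2) r
    ((volume.restrict (openCube 0 ε)).prod (volume.restrict Ω))
  have hU : volume.restrict U Set.univ ≠ 0 := by
    rw [Measure.restrict_apply_univ]
    exact (Metric.measure_ball_pos volume _ (by positivity)).ne'
  calc volume U ^ (1 / r).toReal * eLpNorm (mixedDiff h φ) r (volume.restrict (cornerSet Ω h))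
      = eLpNorm (fun z : Rn n × Rn n => mixedDiff h φ z.2) r
          ((volume.restrict U).prod (volume.restrict (cornerSet Ω h))) := by
        rw [eLpNorm_comp_snd hU (measurable_mixedDiff h hφ).aestronglyMeasurable,
          Measure.restrict_apply_univ]
    _ = eLpNorm (fun z : Rn n × Rn n => ∑ S : Finset (Fin l), (-1 : ℝ) ^ S.card •
          (fwdDiff (z.1 + (θ / l : ℝ) • (x₀ - z.2) - ∑ a ∈ S, ((a : ℝ) + 1)⁻¹ • h a))^[l] φ
            (z.2 + ∑ a ∈ S, h a)) r
          ((volume.restrict U).prod (volume.restrict (cornerSet Ω h))) := by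
        congr 1
        funext z
        exact mixedDiff_apply_eq_sum_fwdDiff h _ φ z.2
    _ ≤ quasiConst r ^ (Finset.univ : Finset (Finset (Fin l))).card *
          ∑ _S : Finset (Fin l), ω := by
        refine (eLpNorm_sum_le_quasiConst_pow _ (fun S _ => ?_) r).trans ?_
        · simp_rw [← diffl_eq_fwdDiff_iterate]
          exact Measurable.aestronglyMeasurable (Measurable.fun_const_smul
            ((measurable_diffl l hφ).comp (f := fun z : Rn n × Rn n =>
              (z.1 + (θ / l : ℝ) • (x₀ - z.2) - ∑ a ∈ S, ((a : ℝ) + 1)⁻¹ • h a,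
                z.2 + ∑ a ∈ S, h a)) (by fun_prop)) _)
        · gcongr with S
          exact eLpNorm_freeStep_le_difflOn hl hΩo hΩ hball hd hθ hθ₁ hε₀ hε hτ hφ hh S
    _ = _ := by simp [mul_assoc]

end FreeStepBound

lemma measurableSet_inter_translate {E : Type*} [Add E] [MeasurableSpace E] [MeasurableAdd E]
    {R : Set E} (hR : MeasurableSet R) (k : E) : MeasurableSet {x | x ∈ R ∧ x + k ∈ R} :=
  hR.inter (measurable_add_const k hR)

section ConstantApproximation

variable {E F : Type*} [NormedAddCommGroup E] [NormedSpace ℝ E] [MeasurableSpace E] [BorelSpace E]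
  {μ : Measure E} [μ.IsAddRightInvariant]
  [NormedAddCommGroup F] [MeasurableSpace F] [BorelSpace F] [SecondCountableTopology F]
  {R : Set E} {ψ : E → F} {r ω : ℝ≥0∞} {τ : ℝ}

lemma eLpNorm_translate_nsmul_sub_le (hRm : MeasurableSet R) (hR : Convex ℝ R) (hψ : Measurable ψ)
    {k : E} (hω : eLpNorm (fun x => ψ (x + k) - ψ x) r (μ.restrict {x | x ∈ R ∧ x + k ∈ R}) ≤ ω)
    (N : ℕ) :
    eLpNorm (fun x => ψ (x + N • k) - ψ x) r (μ.restrict {x | x ∈ R ∧ x + N • k ∈ R}) ≤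
      quasiConst r ^ N * (N * ω) := by
  have hterm (i : ℕ) (hi : i ∈ Finset.range N) :
      eLpNorm (fun x => ψ (x + (i + 1) • k) - ψ (x + i • k)) r
        (μ.restrict {x | x ∈ R ∧ x + N • k ∈ R}) ≤ ω := by
    refine (eLpNorm_restrict_le_of_measurePreserving (measurePreserving_add_right μ (i • k))
      (measurableSet_inter_translate hRm _) (measurableSet_inter_translate hRm k) ?_
      (by fun_prop : Measurable fun x => ψ (x + k) - ψ x).aestronglyMeasurable
      (fun x _ => by simp [add_assoc, add_smul]) r).trans hω
    rintro x ⟨hx, hxN⟩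
    have hmem (j : ℕ) (hj : j ≤ N) : x + j • k ∈ R := by
      obtain rfl | hN := N.eq_zero_or_pos
      · simpa [Nat.le_zero.1 hj] using hx
      · have hN' : (0 : ℝ) < N := by exact_mod_cast hN
        have := hR.add_smul_mem hx hxN (t := j / N)
          ⟨by positivity, (div_le_one hN').2 (by exact_mod_cast hj)⟩
        rwa [← Nat.cast_smul_eq_nsmul ℝ N, smul_smul, div_mul_cancel₀ _ hN'.ne',
          Nat.cast_smul_eq_nsmul] at this
    exact ⟨hmem i (Finset.mem_range.1 hi).le, by
      simpa [add_smul, add_assoc] using hmem (i + 1) (Finset.mem_range.1 hi)⟩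
  calc _ = eLpNorm (fun x => ∑ i ∈ Finset.range N, (ψ (x + (i + 1) • k) - ψ (x + i • k))) r
        (μ.restrict {x | x ∈ R ∧ x + N • k ∈ R}) := by
        congr 1
        funext x
        simp [Finset.sum_range_sub fun i => ψ (x + i • k)]
    _ ≤ quasiConst r ^ (Finset.range N).card * ∑ _i ∈ Finset.range N, ω := by
        refine (eLpNorm_sum_le_quasiConst_pow _ (fun i _ => ?_) r).trans ?_
        · exact Measurable.aestronglyMeasurable (by fun_prop)
        · gcongr with i hi
          exact hterm i hi
    _ = _ := by simp

lemma eLpNorm_translate_sub_le_of_norm_lt (hRm : MeasurableSet R) (hR : Convex ℝ R)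
    (hψ : Measurable ψ) {N : ℕ}
    (hω : ∀ k : E, ‖k‖ ≤ τ →
      eLpNorm (fun x => ψ (x + k) - ψ x) r (μ.restrict {x | x ∈ R ∧ x + k ∈ R}) ≤ ω)
    {u : E} (hu : ‖u‖ < N * τ) :
    eLpNorm (fun x => ψ (x + u) - ψ x) r (μ.restrict {x | x ∈ R ∧ x + u ∈ R}) ≤
      quasiConst r ^ N * (N * ω) := by
  obtain rfl | hN := N.eq_zero_or_pos
  · exact absurd hu (by simp)
  have hN₀ : (0 : ℝ) < N := by exact_mod_cast hN
  have hu' : N • (N : ℝ)⁻¹ • u = u := by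
    rw [← Nat.cast_smul_eq_nsmul ℝ, smul_inv_smul₀ hN₀.ne']
  have hk : ‖(N : ℝ)⁻¹ • u‖ ≤ τ := by
    rw [norm_smul, Real.norm_of_nonneg (by positivity), inv_mul_le_iff₀ hN₀]
    exact hu.le
  simpa only [hu'] using eLpNorm_translate_nsmul_sub_le hRm hR hψ (hω _ hk) N

variable [SecondCountableTopology E] [SFinite μ]

lemma eLpNorm_pair_sub_le (hr : r ≠ 0) (hRm : MeasurableSet R) (hR : Convex ℝ R)
    (hψ : Measurable ψ) {N : ℕ} (hN : ∀ x ∈ R, ∀ y ∈ R, ‖y - x‖ < N * τ)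
    (hω : ∀ k : E, ‖k‖ ≤ τ →
      eLpNorm (fun x => ψ (x + k) - ψ x) r (μ.restrict {x | x ∈ R ∧ x + k ∈ R}) ≤ ω) :
    eLpNorm (fun z : E × E => ψ z.1 - ψ z.2) r ((μ.restrict R).prod (μ.restrict R)) ≤
      μ (Metric.ball 0 (N * τ)) ^ (1 / r).toReal * (quasiConst r ^ N * (N * ω)) := by
  let A : Set (E × E) := {z | z.2 ∈ R ∧ z.2 + z.1 ∈ R}
  have hA : MeasurableSet A :=
    (measurable_snd hRm).inter ((measurable_snd.add measurable_fst) hRm)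
  let G : E × E → F := A.indicator fun z => ψ (z.2 + z.1) - ψ z.2
  have hG : Measurable G := Measurable.indicator (by fun_prop) hA
  have hslice (u : E) (hu : u ∈ Metric.ball (0 : E) (N * τ)) :
      eLpNorm (fun x => G (u, x)) r μ ≤ quasiConst r ^ N * (N * ω) := by
    have := eLpNorm_translate_sub_le_of_norm_lt hRm hR hψ hω (mem_ball_zero_iff.1 hu)
    rw [← eLpNorm_indicator_eq_eLpNorm_restrict (measurableSet_inter_translate hRm u)] at this
    exact this
  calc eLpNorm (fun z : E × E => ψ z.1 - ψ z.2) r ((μ.restrict R).prod (μ.restrict R))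
      ≤ eLpNorm G r ((μ.prod μ).restrict (Metric.ball 0 (N * τ) ×ˢ Set.univ)) := by
        rw [Measure.prod_restrict]
        refine eLpNorm_restrict_le_of_measurePreserving
          (measurePreserving_shear μ (c := fun x => -x) measurable_neg 0)
          (hRm.prod hRm) (Metric.isOpen_ball.measurableSet.prod .univ) ?_
          hG.aestronglyMeasurable ?_ r
        · rintro ⟨y, x⟩ ⟨hy, hx⟩
          exact ⟨by simpa [← sub_eq_add_neg] using hN x hx y hy, trivial⟩
        · rintro ⟨y, x⟩ ⟨hy, hx⟩
          simp [G, A, hy, hx]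
    _ ≤ _ := by
        rw [← Measure.prod_restrict, Measure.restrict_univ]
        refine (eLpNorm_prod_le_of_ae_slice hG.stronglyMeasurable hr
          ((ae_restrict_mem Metric.isOpen_ball.measurableSet).mono hslice)).trans_eq ?_
        rw [Measure.restrict_apply_univ]

/-- Some value of `ψ` on `R` will do, since `ψ` differs little from `ψ y` for most `y`. -/
theorem exists_eLpNorm_sub_const_le (hr : r ≠ 0) (hRm : MeasurableSet R) (hR : Convex ℝ R)
    (hR₀ : μ R ≠ 0) (hR₁ : μ R ≠ ∞) (hψ : Measurable ψ) {N : ℕ}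
    (hN : ∀ x ∈ R, ∀ y ∈ R, ‖y - x‖ < N * τ)
    (hω : ∀ k : E, ‖k‖ ≤ τ →
      eLpNorm (fun x => ψ (x + k) - ψ x) r (μ.restrict {x | x ∈ R ∧ x + k ∈ R}) ≤ ω) :
    ∃ a : F, μ R ^ (1 / r).toReal * eLpNorm (fun x => ψ x - a) r (μ.restrict R) ≤
      μ (Metric.ball 0 (N * τ)) ^ (1 / r).toReal * (quasiConst r ^ N * (N * ω)) := by
  have : IsFiniteMeasure (μ.restrict R) := isFiniteMeasure_restrict.2 hR₁
  obtain ⟨y, -, hy⟩ := exists_notMem_null_eLpNorm_slice_le (ν := μ.restrict R) (μ := μ.restrict R)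
    (by rwa [Ne, Measure.restrict_eq_zero])
    (Measurable.stronglyMeasurable (by fun_prop : Measurable fun z : E × E => ψ z.1 - ψ z.2)) hr
    measure_empty
  refine ⟨ψ y, ?_⟩
  rw [Measure.restrict_apply_univ] at hy
  calc μ R ^ (1 / r).toReal * eLpNorm (fun x => ψ x - ψ y) r (μ.restrict R)
      = μ R ^ (1 / r).toReal * eLpNorm (fun x => ψ y - ψ x) r (μ.restrict R) := by
        rw [← eLpNorm_neg]
        simp [Pi.neg_def]
    _ ≤ _ := hy.trans (eLpNorm_pair_sub_le hr hRm hR hψ hN hω)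

end ConstantApproximation

section Stability

variable {E F : Type*} [NormedAddCommGroup E] [NormedAddCommGroup F] {τ η : ℝ}

/-- Approximate additivity on the closed ball of radius `τ`, with error `η` (the hypothesis of
Hyers–Ulam type theorems). -/
def ApproxAdditive (τ η : ℝ) (f : E → F) : Prop :=
  ∀ u v, ‖u‖ ≤ τ → ‖v‖ ≤ τ → ‖u + v‖ ≤ τ → ‖f (u + v) - f u - f v‖ ≤ η

lemma ApproxAdditive.norm_zero_le {f : E → F} (hf : ApproxAdditive τ η f) (hτ : 0 ≤ τ) :
    ‖f 0‖ ≤ η := by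
  simpa using hf 0 0 (by simpa) (by simpa) (by simpa)

lemma ApproxAdditive.norm_add_le {f : E → F} (hf : ApproxAdditive τ η f) {u v : E} (hu : ‖u‖ ≤ τ)
    (hv : ‖v‖ ≤ τ) (huv : ‖u + v‖ ≤ τ) : ‖f (u + v)‖ ≤ ‖f u‖ + ‖f v‖ + η := by
  calc ‖f (u + v)‖ = ‖(f (u + v) - f u - f v) + (f u + f v)‖ := by congr 1; abel
    _ ≤ η + (‖f u‖ + ‖f v‖) := norm_add_le_of_le (hf u v hu hv huv) (_root_.norm_add_le _ _)
    _ = _ := by ring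

variable [NormedSpace ℝ F]

lemma ApproxAdditive.sub_linearMap [Module ℝ E] {f : E → F} (hf : ApproxAdditive τ η f)
    (L : E →ₗ[ℝ] F) : ApproxAdditive τ η fun u => f u - L u := fun u v hu hv huv => by
  convert hf u v hu hv huv using 2
  simp only [map_add]
  abel

/-- Halving: `g x` is half of `g (2 x)` up to `η / 2`, so the supremum of `‖g‖` is at most half of
itself plus a multiple of `η`. -/
lemma ApproxAdditive.norm_le_of_apply_eq_zero {g : ℝ → F} (hg : ApproxAdditive τ η g)
    (hτ : 0 < τ) (hg₀ : g τ = 0) {M : ℝ} (hM : ∀ x ∈ Set.Icc 0 τ, ‖g x‖ ≤ M) {x : ℝ}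
    (hx : x ∈ Set.Icc 0 τ) : ‖g x‖ ≤ 3 * η := by
  have hnorm {x : ℝ} (hx : x ∈ Set.Icc 0 τ) : ‖x‖ ≤ τ := by
    rw [Real.norm_of_nonneg hx.1]
    exact hx.2
  set A := (fun x => ‖g x‖) '' Set.Icc 0 τ
  have hbdd : BddAbove A := ⟨M, by rintro _ ⟨x, hx, rfl⟩; exact hM x hx⟩
  have hsup {x : ℝ} (hx : x ∈ Set.Icc 0 τ) : ‖g x‖ ≤ sSup A :=
    le_csSup hbdd (Set.mem_image_of_mem _ hx)
  have hhalf {x : ℝ} (hx : 0 ≤ x) (hx₂ : x ≤ τ / 2) : ‖g x‖ ≤ sSup A / 2 + η / 2 := by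
    have hx' : x ∈ Set.Icc 0 τ := ⟨hx, by linarith⟩
    have h2x : x + x ∈ Set.Icc 0 τ := ⟨by linarith, by linarith⟩
    have hdouble : ‖(2 : ℝ) • g x‖ ≤ ‖g (x + x)‖ + η := by
      calc ‖(2 : ℝ) • g x‖ = ‖g (x + x) - (g (x + x) - g x - g x)‖ := by
            congr 1
            rw [two_smul]
            abel
        _ ≤ ‖g (x + x)‖ + η :=
            norm_sub_le_of_le le_rfl (hg x x (hnorm hx') (hnorm hx') (hnorm h2x))
    rw [norm_smul, Real.norm_two] at hdouble
    linarith [hsup h2x]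
  have hstep {x : ℝ} (hx : x ∈ Set.Icc 0 τ) : ‖g x‖ ≤ sSup A / 2 + 3 / 2 * η := by
    obtain hx₂ | hx₂ := le_total x (τ / 2)
    · have hη : 0 ≤ η := (norm_nonneg _).trans (hg.norm_zero_le hτ.le)
      linarith [hhalf hx.1 hx₂]
    · have hy : τ - x ∈ Set.Icc 0 τ := ⟨by linarith [hx.2], by linarith [hx.1]⟩
      have hrefl : ‖g x‖ ≤ η + ‖g (τ - x)‖ := by
        calc ‖g x‖ = ‖(g (x + (τ - x)) - g x - g (τ - x)) + g (τ - x)‖ := by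
              rw [sub_add_cancel, add_sub_cancel, hg₀, zero_sub, norm_neg]
          _ ≤ η + ‖g (τ - x)‖ := norm_add_le_of_le
              (hg _ _ (hnorm hx) (hnorm hy) (by simp [abs_of_pos hτ])) le_rfl
      linarith [hhalf hy.1 (by linarith)]
  have : sSup A ≤ sSup A / 2 + 3 / 2 * η :=
    csSup_le ⟨_, Set.mem_image_of_mem _ hx⟩ (by rintro _ ⟨y, hy, rfl⟩; exact hstep hy)
  linarith [hsup hx]

lemma ApproxAdditive.norm_le_of_real {f : ℝ → F} (hf : ApproxAdditive τ η f) (hτ : 0 < τ) {M : ℝ}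
    (hM : ∀ x, ‖x‖ ≤ τ → ‖f x‖ ≤ M) {x : ℝ} (hx : ‖x‖ ≤ τ) : ‖f x‖ ≤ ‖f τ‖ + 5 * η := by
  let L : ℝ →ₗ[ℝ] F := LinearMap.toSpanSingleton ℝ F (τ⁻¹ • f τ)
  have hL {y : ℝ} (hy : ‖y‖ ≤ τ) : ‖L y‖ ≤ ‖f τ‖ := by
    rw [LinearMap.toSpanSingleton_apply, norm_smul, norm_smul, norm_inv, Real.norm_of_nonneg hτ.le,
      ← mul_assoc, ← div_eq_mul_inv]
    exact mul_le_of_le_one_left (norm_nonneg _) ((div_le_one hτ).2 hy)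
  have hg := hf.sub_linearMap L
  have hpos {y : ℝ} (hy : y ∈ Set.Icc 0 τ) : ‖f y - L y‖ ≤ 3 * η := by
    refine hg.norm_le_of_apply_eq_zero hτ ?_ (M := M + ‖f τ‖) (fun z hz => ?_) hy
    · simp [L, hτ.ne']
    · have hz' : ‖z‖ ≤ τ := by rw [Real.norm_of_nonneg hz.1]; exact hz.2
      exact norm_sub_le_of_le (hM z hz') (hL hz')
  have habs : ‖f x - L x‖ ≤ 5 * η := by
    have hη : 0 ≤ η := (norm_nonneg _).trans (hg.norm_zero_le hτ.le)
    obtain hx₀ | hx₀ := le_total 0 x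
    · linarith [hpos ⟨hx₀, (Real.le_norm_self x).trans hx⟩]
    · have hneg := hpos (y := -x) ⟨by linarith, (Real.norm_eq_abs x ▸ neg_le_abs x).trans hx⟩
      have hzero := hg.norm_zero_le hτ.le
      have hadd := hg x (-x) hx (by rwa [norm_neg]) (by simpa using hτ.le)
      rw [add_neg_cancel] at hadd
      calc ‖f x - L x‖ = ‖(f 0 - L 0) - (f 0 - L 0 - (f x - L x) - (f (-x) - L (-x)))
              - (f (-x) - L (-x))‖ := by congr 1; abel
        _ ≤ η + η + 3 * η := norm_sub_le_of_le (norm_sub_le_of_le hzero hadd) hneg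
        _ = 5 * η := by ring
  calc ‖f x‖ = ‖L x + (f x - L x)‖ := by rw [add_sub_cancel]
    _ ≤ ‖f τ‖ + 5 * η := norm_add_le_of_le (hL hx) habs

variable {κ : Type*} [Fintype κ] [DecidableEq κ]

lemma ApproxAdditive.norm_le_of_pi {f : (κ → ℝ) → F} (hf : ApproxAdditive τ η f) (hτ : 0 < τ)
    {M K : ℝ} (hM : ∀ u, ‖u‖ ≤ τ → ‖f u‖ ≤ M) (hK : ∀ i, ‖f (Pi.single i τ)‖ ≤ K) {u : κ → ℝ}
    (hu : ‖u‖ ≤ τ) : ‖f u‖ ≤ Fintype.card κ * K + (6 * Fintype.card κ + 1) * η := by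
  have hcoord (i : κ) {x : ℝ} (hx : ‖x‖ ≤ τ) : ‖f (Pi.single i x)‖ ≤ K + 5 * η := by
    have hfi : ApproxAdditive τ η fun x : ℝ => f (Pi.single i x) := fun x y hx hy hxy => by
      simpa only [Pi.single_add] using hf (Pi.single i x) (Pi.single i y)
        ((Pi.norm_single ..).trans_le hx) ((Pi.norm_single ..).trans_le hy)
        (by rwa [← Pi.single_add, Pi.norm_single])
    exact (hfi.norm_le_of_real hτ (fun x hx => hM _ ((Pi.norm_single ..).trans_le hx)) hx).trans
      (by gcongr; exact hK i)
  have hui (i : κ) : ‖u i‖ ≤ τ := (norm_le_pi_norm u i).trans hu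
  have hpart (s : Finset κ) : ‖∑ i ∈ s, Pi.single i (u i)‖ ≤ τ := by
    refine (pi_norm_le_iff_of_nonneg hτ.le).2 fun i => ?_
    rw [Finset.sum_apply, Finset.sum_pi_single]
    split_ifs
    · exact hui i
    · simpa using hτ.le
  have hsum (s : Finset κ) :
      ‖f (∑ i ∈ s, Pi.single i (u i))‖ ≤ s.card * K + (6 * s.card + 1) * η := by
    induction s using Finset.induction_on with
    | empty => simpa using hf.norm_zero_le hτ.le
    | insert i s hi ih =>
      have hadd := hf.norm_add_le ((Pi.norm_single ..).trans_le (hui i)) (hpart s)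
        (by simpa [Finset.sum_insert hi] using hpart (insert i s))
      rw [Finset.sum_insert hi, Finset.card_insert_of_notMem hi]
      push_cast
      linarith [hcoord i (hui i)]
  simpa only [Finset.univ_sum_single, Finset.card_univ] using hsum Finset.univ

variable {ι : Type*} [Fintype ι] [DecidableEq ι]

/-- Approximate additivity in each of the variables separately, the others being bounded by `τ`. -/
def ApproxMultiadditive (τ η : ℝ) (f : (ι → E) → F) : Prop :=
  ∀ h a, ‖h‖ ≤ τ → ApproxAdditive τ η fun u => f (Function.update h a u)

lemma norm_update_le {h : ι → E} (hh : ‖h‖ ≤ τ) (a : ι) {u : E} (hu : ‖u‖ ≤ τ) :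
    ‖Function.update h a u‖ ≤ τ := by
  refine (pi_norm_le_iff_of_nonneg ((norm_nonneg h).trans hh)).2 fun b => ?_
  obtain rfl | hb := eq_or_ne b a
  · rwa [Function.update_self]
  · rw [Function.update_of_ne hb]
    exact (norm_le_pi_norm h b).trans hh

lemma ApproxMultiadditive.sub_multilinearMap [Module ℝ E] {f : (ι → E) → F}
    (hf : ApproxMultiadditive τ η f) (B : MultilinearMap ℝ (fun _ : ι => E) F) :
    ApproxMultiadditive τ η fun h => f h - B h :=
  fun h a hh => (hf h a hh).sub_linearMap (B.toLinearMap h a)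

lemma ApproxMultiadditive.norm_le_of_apply_single_eq_zero {f : (ι → κ → ℝ) → F}
    (hf : ApproxMultiadditive τ η f) (hτ : 0 < τ) (hη : 0 ≤ η) {M : ℝ}
    (hM : ∀ h, ‖h‖ ≤ τ → ‖f h‖ ≤ M) (hf₀ : ∀ i : ι → κ, f (fun a => Pi.single (i a) τ) = 0)
    {h : ι → κ → ℝ} (hh : ‖h‖ ≤ τ) :
    ‖f h‖ ≤ (7 * Fintype.card κ + 1) ^ Fintype.card ι * η := by
  suffices H : ∀ (s : Finset ι) (h : ι → κ → ℝ), ‖h‖ ≤ τ →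
      (∀ a ∉ s, ∃ i, h a = Pi.single i τ) → ‖f h‖ ≤ (7 * Fintype.card κ + 1) ^ s.card * η by
    simpa using H Finset.univ h hh (by simp)
  intro s
  induction s using Finset.induction_on with
  | empty =>
    intro h _ hs
    choose i hi using fun a => hs a (Finset.notMem_empty a)
    simp [show h = fun a => Pi.single (i a) τ from funext hi, hf₀, hη]
  | insert b s hb ih =>
    intro h hh hs
    have hτ' (i : κ) : ‖(Pi.single i τ : κ → ℝ)‖ ≤ τ := by
      rw [Pi.norm_single, Real.norm_of_nonneg hτ.le]
    have hslot := (hf h b hh).norm_le_of_pi hτ (u := h b)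
      (fun u hu => hM _ (norm_update_le hh b hu))
      (fun i => ih _ (norm_update_le hh b (hτ' i)) fun a ha => ?_)
      ((norm_le_pi_norm h b).trans hh)
    · rw [Function.update_eq_self] at hslot
      refine hslot.trans ?_
      have hpow : 1 ≤ (7 * Fintype.card κ + 1 : ℝ) ^ s.card :=
        one_le_pow₀ (by linarith [(Fintype.card κ).cast_nonneg (α := ℝ)])
      rw [Finset.card_insert_of_notMem hb, pow_succ]
      nlinarith [mul_le_mul_of_nonneg_left hpow
        (by positivity : 0 ≤ (6 * Fintype.card κ + 1 : ℝ) * η)]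
    · obtain rfl | hab := eq_or_ne a b
      · exact ⟨i, Function.update_self ..⟩
      · rw [Function.update_of_ne hab]
        exact hs a (by simp [hab, ha])

end Stability

section MultilinearPi

variable {ι κ F : Type*} [AddCommGroup F] [Module ℝ F]

lemma multilinearMap_apply_eq_sum_single [Fintype ι] [Fintype κ] [DecidableEq κ]
    (B : MultilinearMap ℝ (fun _ : ι => κ → ℝ) F) (h : ι → κ → ℝ) :
    B h = ∑ i : ι → κ, (∏ a, h a (i a)) • B fun a => Pi.single (i a) 1 := by
  conv_lhs => rw [show h = fun a => ∑ b, h a b • Pi.single b (1 : ℝ) from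
    funext fun a => pi_eq_sum_univ' (h a), B.map_sum]
  simp only [B.map_smul_univ]

lemma exists_multilinearMap_apply_single_eq [Finite ι] [Finite κ] [DecidableEq κ] {τ : ℝ}
    (hτ : τ ≠ 0) (y : (ι → κ) → F) : ∃ B : MultilinearMap ℝ (fun _ : ι => κ → ℝ) F,
      ∀ i : ι → κ, B (fun a => Pi.single (i a) τ) = y i := by
  have := Fintype.ofFinite ι
  have := Fintype.ofFinite κ
  let monomial (i : ι → κ) : MultilinearMap ℝ (fun _ : ι => κ → ℝ) ℝ :=
    (MultilinearMap.mkPiAlgebra ℝ ι ℝ).compLinearMap fun a => LinearMap.proj (i a)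
  refine ⟨∑ i, (monomial i).smulRight ((τ ^ Fintype.card ι)⁻¹ • y i), fun i => ?_⟩
  have hdelta (i' : ι → κ) :
      monomial i' (fun a => Pi.single (i a) τ) = if i' = i then τ ^ Fintype.card ι else 0 := by
    split_ifs with h
    · simp [monomial, h]
    · obtain ⟨a, ha⟩ := Function.ne_iff.1 h
      exact Finset.prod_eq_zero (Finset.mem_univ a) (Pi.single_eq_of_ne ha _)
  simp [hdelta, ite_smul, smul_smul, hτ]

lemma exists_norm_multilinearMap_apply_le [Fintype ι] [Fintype κ]
    (B : MultilinearMap ℝ (fun _ : ι => κ → ℝ) ℝ) (τ : ℝ) : ∃ M, ∀ h, ‖h‖ ≤ τ → ‖B h‖ ≤ M := by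
  have hB : Continuous B := by
    rw [funext (multilinearMap_apply_eq_sum_single B)]
    fun_prop
  obtain ⟨M, hM⟩ := (isCompact_closedBall (0 : ι → κ → ℝ) τ).exists_bound_of_continuousOn
    hB.continuousOn
  exact ⟨M, fun h hh => hM h (mem_closedBall_zero_iff.2 hh)⟩

lemma exists_mvPolynomial_eval_eq_multilinearMap [Fintype ι] [Finite κ]
    (B : MultilinearMap ℝ (fun _ : ι => κ → ℝ) ℝ) :
    ∃ P : MvPolynomial κ ℝ, P.totalDegree ≤ Fintype.card ι ∧
      ∀ x, MvPolynomial.eval x P = B fun _ => x := by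
  have := Fintype.ofFinite κ
  refine ⟨∑ i : ι → κ, MvPolynomial.C (B fun a => Pi.single (i a) 1) *
    ∏ a, MvPolynomial.X (i a), ?_, fun x => ?_⟩
  · refine MvPolynomial.totalDegree_finsetSum_le fun i _ => ?_
    refine (MvPolynomial.totalDegree_mul _ _).trans ?_
    rw [MvPolynomial.totalDegree_C, zero_add]
    refine (MvPolynomial.totalDegree_finsetProd _ _).trans ?_
    simp
  · rw [multilinearMap_apply_eq_sum_single]
    simp [mul_comm]

end MultilinearPi

section LocalApproximation

variable {n j N : ℕ} {r : ℝ≥0∞} {Ω : Set (Rn n)} {x₀ : Rn n} {ρ τ : ℝ}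

/-- The geometric setting for polynomial approximation on `Ω`: steps of length `τ` are so short that
`j` of them do not leave a fixed ball inside `Ω`, and `N` of them exceed the diameter of `Ω`. -/
structure IsStepDomain (Ω : Set (Rn n)) (x₀ : Rn n) (ρ τ : ℝ) (j N : ℕ) : Prop where
  isOpen : IsOpen Ω
  convex : Convex ℝ Ω
  radius_pos : 0 < ρ
  step_pos : 0 < τ
  ball_subset : Metric.ball x₀ (2 * ρ) ⊆ Ω
  mul_step_le : j * τ ≤ ρ
  norm_sub_lt : ∀ x ∈ Ω, ∀ y ∈ Ω, ‖y - x‖ < N * τ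

lemma IsStepDomain.of_succ (hD : IsStepDomain Ω x₀ ρ τ (j + 1) N) : IsStepDomain Ω x₀ ρ τ j N where
  __ := hD
  mul_step_le := by
    have := hD.mul_step_le
    push_cast at this
    linarith [hD.step_pos]

lemma IsStepDomain.center_mem (hD : IsStepDomain Ω x₀ ρ τ j N) : x₀ ∈ Ω :=
  hD.ball_subset (Metric.mem_ball_self (by linarith [hD.radius_pos]))

lemma IsStepDomain.isBounded (hD : IsStepDomain Ω x₀ ρ τ j N) : Bornology.IsBounded Ω :=
  Metric.isBounded_ball.subset fun _ hx =>
    mem_ball_iff_norm.2 (hD.norm_sub_lt _ hD.center_mem _ hx)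

lemma IsStepDomain.ball_subset_cornerSet (hD : IsStepDomain Ω x₀ ρ τ j N) {h : Fin j → Rn n}
    (hh : ‖h‖ ≤ τ) : Metric.ball x₀ ρ ⊆ cornerSet Ω h := by
  refine _root_.ball_subset_cornerSet hD.ball_subset (le_trans ?_ hD.mul_step_le)
  rw [Fintype.card_fin]
  gcongr

lemma IsStepDomain.rpow_volume_ball_ne_zero (hD : IsStepDomain Ω x₀ ρ τ j N) (r : ℝ≥0∞) :
    volume (Metric.ball x₀ ρ) ^ (1 / r).toReal ≠ 0 := by
  simp [(Metric.measure_ball_pos volume x₀ hD.radius_pos).ne', measure_ball_lt_top.ne]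

lemma rpow_volume_ball_ne_top (x : Rn n) (ε : ℝ) (r : ℝ≥0∞) :
    volume (Metric.ball x ε) ^ (1 / r).toReal ≠ ∞ :=
  ENNReal.rpow_ne_top_of_nonneg ENNReal.toReal_nonneg measure_ball_lt_top.ne

lemma norm_cons_le {E : Type*} [SeminormedAddCommGroup E] {k : E} {h : Fin j → E} (hk : ‖k‖ ≤ τ)
    (hh : ‖h‖ ≤ τ) : ‖(Fin.cons k h : Fin (j + 1) → E)‖ ≤ τ := by
  refine (pi_norm_le_iff_of_nonneg ((norm_nonneg k).trans hk)).2 fun a => ?_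
  refine Fin.cases ?_ (fun b => ?_) a
  · rwa [Fin.cons_zero]
  · rw [Fin.cons_succ]
    exact (norm_le_pi_norm h b).trans hh

lemma IsStepDomain.exists_eLpNorm_mixedDiff_sub_const_le (hD : IsStepDomain Ω x₀ ρ τ j N)
    (hr : r ≠ 0) : ∃ C : ℝ≥0∞, C ≠ ∞ ∧ ∀ φ : Rn n → ℝ, Measurable φ → ∀ h : Fin j → Rn n, ‖h‖ ≤ τ →
      ∃ a : ℝ, eLpNorm (fun x => mixedDiff h φ x - a) r (volume.restrict (cornerSet Ω h)) ≤
        C * mixedModulus (j + 1) r τ Ω φ := by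
  set V := volume (Metric.ball x₀ ρ) ^ (1 / r).toReal
  set W := volume (Metric.ball (0 : Rn n) (N * τ)) ^ (1 / r).toReal
  have hV₀ : V ≠ 0 := hD.rpow_volume_ball_ne_zero r
  refine ⟨V⁻¹ * (W * (quasiConst r ^ N * N)), ?_, fun φ hφ h hh => ?_⟩
  · have := rpow_volume_ball_ne_top (0 : Rn n) (N * τ) r
    have := quasiConst_pow_ne_top r N
    finiteness
  · have hball := hD.ball_subset_cornerSet hh
    obtain ⟨a, ha⟩ := exists_eLpNorm_sub_const_le (μ := volume) hr
      (isOpen_cornerSet hD.isOpen h).measurableSet (convex_cornerSet hD.convex h)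
      ((Metric.measure_ball_pos volume x₀ hD.radius_pos).trans_le (measure_mono hball)).ne'
      (measure_ne_top_of_subset (cornerSet_subset h) hD.isBounded.measure_lt_top.ne)
      (measurable_mixedDiff h hφ)
      (fun x hx y hy => hD.norm_sub_lt x (cornerSet_subset h hx) y (cornerSet_subset h hy))
      (ω := mixedModulus (j + 1) r τ Ω φ) fun k hk => by
        simpa only [← mixedDiff_cons, ← mem_cornerSet_cons, Set.ofPred_mem_eq] using
          eLpNorm_mixedDiff_le_mixedModulus φ (norm_cons_le hk hh)
    refine ⟨a, ?_⟩
    rw [mul_assoc, ← ENNReal.mul_le_iff_le_inv hV₀ (rpow_volume_ball_ne_top x₀ ρ r)]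
    refine le_trans ?_ (ha.trans_eq (by ring))
    gcongr ?_ * _
    exact ENNReal.rpow_le_rpow (measure_mono hball) ENNReal.toReal_nonneg

lemma exists_symmetric_eLpNorm_mixedDiff_sub_le {φ : Rn n → ℝ} {D : ℝ≥0∞}
    (hφ : ∀ h : Fin j → Rn n, ‖h‖ ≤ τ →
      ∃ a : ℝ, eLpNorm (fun x => mixedDiff h φ x - a) r (volume.restrict (cornerSet Ω h)) ≤ D) :
    ∃ c : (Fin j → Rn n) → ℝ, (∀ h (σ : Equiv.Perm (Fin j)), c (h ∘ σ) = c h) ∧ ∀ h, ‖h‖ ≤ τ →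
      eLpNorm (fun x => mixedDiff h φ x - c h) r (volume.restrict (cornerSet Ω h)) ≤ D := by
  refine ⟨fun h => Classical.epsilon fun a : ℝ =>
    eLpNorm (fun x => mixedDiff h φ x - a) r (volume.restrict (cornerSet Ω h)) ≤ D,
    fun h σ => ?_, fun h hh => Classical.epsilon_spec (hφ h hh)⟩
  simp only [mixedDiff_comp_equiv, cornerSet_comp_equiv]

lemma IsStepDomain.enorm_le_of_norm_le (hD : IsStepDomain Ω x₀ ρ τ j N) (hr : r ≠ 0) {a : ℝ}
    {f : Rn n → ℝ} (h : ∀ x, ‖a‖ ≤ ‖f x‖) :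
    ‖a‖ₑ ≤ (volume (Metric.ball x₀ ρ) ^ (1 / r).toReal)⁻¹ *
      eLpNorm f r (volume.restrict (Metric.ball x₀ ρ)) := by
  rw [← ENNReal.mul_le_iff_le_inv (hD.rpow_volume_ball_ne_zero r) (rpow_volume_ball_ne_top x₀ ρ r),
    mul_comm, ← Measure.restrict_apply_univ]
  refine enorm_mul_measure_rpow_le_eLpNorm hr ?_ (Eventually.of_forall h)
  rw [Ne, Measure.restrict_eq_zero]
  exact (Metric.measure_ball_pos volume x₀ hD.radius_pos).ne'

section ApproximatingConstants

variable {φ : Rn n → ℝ} {c : (Fin j → Rn n) → ℝ} {D : ℝ≥0∞}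

lemma IsStepDomain.enorm_le_of_eLpNorm_mixedDiff_sub_le (hD : IsStepDomain Ω x₀ ρ τ j N)
    (hr : r ≠ 0) (hφ : Measurable φ) {h : Fin j → Rn n} (hh : ‖h‖ ≤ τ)
    (hc : eLpNorm (fun x => mixedDiff h φ x - c h) r (volume.restrict (cornerSet Ω h)) ≤ D) :
    ‖c h‖ₑ ≤ (volume (Metric.ball x₀ ρ) ^ (1 / r).toReal)⁻¹ *
      (quasiConst r * (mixedModulus j r τ Ω φ + D)) := by
  have hball := hD.ball_subset_cornerSet hh
  have hm := measurable_mixedDiff h hφ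
  refine (hD.enorm_le_of_norm_le hr (f := fun x => mixedDiff h φ x - (mixedDiff h φ x - c h))
    fun x => by simp).trans ?_
  gcongr
  refine (eLpNorm_sub_le_quasiConst hm.aestronglyMeasurable
    (hm.sub_const _).aestronglyMeasurable r).trans ?_
  gcongr
  · exact (eLpNorm_restrict_mono hball _ r).trans (eLpNorm_mixedDiff_le_mixedModulus φ hh)
  · exact (eLpNorm_restrict_mono hball _ r).trans hc

lemma IsStepDomain.enorm_update_add_le (hD : IsStepDomain Ω x₀ ρ τ (j + 1) N) (hr : r ≠ 0)
    (hφ : Measurable φ) (hc : ∀ h : Fin j → Rn n, ‖h‖ ≤ τ →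
      eLpNorm (fun x => mixedDiff h φ x - c h) r (volume.restrict (cornerSet Ω h)) ≤ D)
    {h : Fin j → Rn n} (hh : ‖h‖ ≤ τ) (a : Fin j) {u v : Rn n} (hu : ‖u‖ ≤ τ) (hv : ‖v‖ ≤ τ)
    (huv : ‖u + v‖ ≤ τ) :
    ‖c (Function.update h a (u + v)) - c (Function.update h a u) - c (Function.update h a v)‖ₑ ≤
      (volume (Metric.ball x₀ ρ) ^ (1 / r).toReal)⁻¹ *
        (quasiConst r ^ 4 * (3 * D + mixedModulus (j + 1) r τ Ω φ)) := by
  have hcons := norm_cons_le hv (norm_update_le hh a hu)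
  let g (k : Fin j → Rn n) (x : Rn n) : ℝ := mixedDiff k φ x - c k
  have hg {k : Fin j → Rn n} (hk : ‖k‖ ≤ τ) :
      eLpNorm (g k) r (volume.restrict (Metric.ball x₀ ρ)) ≤ D :=
    (eLpNorm_restrict_mono (hD.of_succ.ball_subset_cornerSet hk) _ r).trans (hc k hk)
  let f : Fin 4 → Rn n → ℝ := ![-g (Function.update h a (u + v)), g (Function.update h a u),
    g (Function.update h a v),
    mixedDiff (Fin.cons v (Function.update h a u) : Fin (j + 1) → Rn n) φ]
  have hgm (k : Fin j → Rn n) : Measurable (g k) := (measurable_mixedDiff k hφ).sub_const _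
  have hfm (i : Fin 4) : Measurable (f i) := by
    fin_cases i
    exacts [(hgm _).neg, hgm _, hgm _, measurable_mixedDiff _ hφ]
  refine (hD.enorm_le_of_norm_le hr (f := fun x => ∑ i, f i x) fun x => le_of_eq ?_).trans ?_
  · congr 1
    simp only [f, g, Fin.sum_univ_four, mixedDiff_update_add h a u v φ, Matrix.cons_val,
      Pi.neg_apply, Pi.add_apply]
    ring
  · gcongr
    refine (eLpNorm_sum_le_quasiConst_pow Finset.univ
      (fun i _ => (hfm i).aestronglyMeasurable) r).trans ?_
    rw [Finset.card_univ, Fintype.card_fin, Fin.sum_univ_four]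
    gcongr quasiConst r ^ 4 * ?_
    calc _ ≤ D + D + D + mixedModulus (j + 1) r τ Ω φ := by
          gcongr
          · exact (eLpNorm_neg _ r _).trans_le (hg (norm_update_le hh a huv))
          · exact hg (norm_update_le hh a hu)
          · exact hg (norm_update_le hh a hv)
          · exact (eLpNorm_restrict_mono (hD.ball_subset_cornerSet hcons) _ r).trans
              (eLpNorm_mixedDiff_le_mixedModulus φ hcons)
      _ = _ := by ring

end ApproximatingConstants

/-- The polynomial is the diagonal of the multilinear form that agrees with `c` on the tuples of
vectors `τ eᵢ`, divided by `j!`; polarization recovers the form, and stability compares it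
with `c`. -/
lemma exists_mvPolynomial_norm_mixedDiff_sub_le {ι κ : Type*} [Fintype ι] [DecidableEq ι]
    [Fintype κ] {τ η : ℝ} (hτ : 0 < τ) (hη : 0 ≤ η) {c : (ι → κ → ℝ) → ℝ}
    (hc : ApproxMultiadditive τ η c) (hsymm : ∀ h (σ : Equiv.Perm ι), c (h ∘ σ) = c h) {M : ℝ}
    (hM : ∀ h, ‖h‖ ≤ τ → ‖c h‖ ≤ M) :
    ∃ P : MvPolynomial κ ℝ, P.totalDegree ≤ Fintype.card ι ∧ ∀ h, ‖h‖ ≤ τ → ∀ x,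
      ‖mixedDiff h (fun y => MvPolynomial.eval y P) x - c h‖ ≤
        (7 * Fintype.card κ + 1) ^ Fintype.card ι * η := by
  obtain ⟨B, hB⟩ := exists_multilinearMap_apply_single_eq hτ.ne'
    fun i : ι → κ => c fun a => Pi.single (i a) τ
  obtain ⟨M', hM'⟩ := exists_norm_multilinearMap_apply_le B τ
  have hstable {h : ι → κ → ℝ} (hh : ‖h‖ ≤ τ) :
      ‖c h - B h‖ ≤ (7 * Fintype.card κ + 1) ^ Fintype.card ι * η :=
    (hc.sub_multilinearMap B).norm_le_of_apply_single_eq_zero hτ hη (M := M + M')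
      (fun h hh => norm_sub_le_of_le (hM h hh) (hM' h hh)) (fun i => by rw [hB, sub_self]) hh
  obtain ⟨P, hP, hPB⟩ := exists_mvPolynomial_eval_eq_multilinearMap B
  refine ⟨((Fintype.card ι).factorial : ℝ)⁻¹ • P, (MvPolynomial.totalDegree_smul_le _ _).trans hP,
    fun h hh x => ?_⟩
  have hdiff : mixedDiff h (fun y => MvPolynomial.eval y (((Fintype.card ι).factorial : ℝ)⁻¹ • P)) x
      - c h = ((Fintype.card ι).factorial : ℝ)⁻¹ * ∑ σ : Equiv.Perm ι, (B (h ∘ σ) - c (h ∘ σ)) := by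
    have hsmul : (fun y => MvPolynomial.eval y (((Fintype.card ι).factorial : ℝ)⁻¹ • P)) =
        ((Fintype.card ι).factorial : ℝ)⁻¹ • fun y => B fun _ => y := by
      ext y
      simp [hPB]
    rw [hsmul, map_smul, Pi.smul_apply, mixedDiff_multilinear_diagonal, Finset.sum_sub_distrib]
    simp only [hsymm, Finset.sum_const, Finset.card_univ, Fintype.card_perm, nsmul_eq_mul,
      smul_eq_mul]
    field_simp
  rw [hdiff, norm_mul, norm_inv, RCLike.norm_natCast, inv_mul_le_iff₀ (by positivity)]
  refine (norm_sum_le_of_le _ fun σ _ => ?_).trans_eq (b := ∑ _σ : Equiv.Perm ι,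
    (7 * Fintype.card κ + 1 : ℝ) ^ Fintype.card ι * η) (by simp [Fintype.card_perm])
  rw [norm_sub_rev]
  exact hstable ((pi_norm_comp_le h σ).trans hh)

lemma IsStepDomain.exists_approxMultiadditive (hD : IsStepDomain Ω x₀ ρ τ (j + 1) N) (hr : r ≠ 0) :
    ∃ C : ℝ≥0∞, C ≠ ∞ ∧ ∀ φ : Rn n → ℝ, Measurable φ → eLpNorm φ r (volume.restrict Ω) ≠ ∞ →
      ∃ c : (Fin j → Rn n) → ℝ, (∀ h (σ : Equiv.Perm (Fin j)), c (h ∘ σ) = c h) ∧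
        ApproxMultiadditive τ (C * mixedModulus (j + 1) r τ Ω φ).toReal c ∧
        (∃ M, ∀ h, ‖h‖ ≤ τ → ‖c h‖ ≤ M) ∧ ∀ h, ‖h‖ ≤ τ →
          eLpNorm (fun x => mixedDiff h φ x - c h) r (volume.restrict (cornerSet Ω h)) ≤
            C * mixedModulus (j + 1) r τ Ω φ := by
  obtain ⟨C, hC, hconst⟩ := hD.of_succ.exists_eLpNorm_mixedDiff_sub_const_le hr
  set V := (volume (Metric.ball x₀ ρ) ^ (1 / r).toReal)⁻¹
  have hV : V ≠ ∞ := ENNReal.inv_ne_top.2 (hD.rpow_volume_ball_ne_zero r)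
  let C' := V * (quasiConst r ^ 4 * (3 * C + 1))
  have hC' : C + C' ≠ ∞ := by
    have := quasiConst_pow_ne_top r 4
    finiteness
  refine ⟨C + C', hC', fun φ hφ hfin => ?_⟩
  obtain ⟨c, hsymm, hc⟩ := exists_symmetric_eLpNorm_mixedDiff_sub_le (hconst φ hφ)
  refine ⟨c, hsymm, fun h a hh u v hu hv huv => ?_,
    ⟨_, fun h hh => (toReal_enorm (c h)).symm.trans_le (ENNReal.toReal_mono ?_
      (hD.of_succ.enorm_le_of_eLpNorm_mixedDiff_sub_le hr hφ hh (hc h hh)))⟩,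
    fun h hh => (hc h hh).trans (by gcongr; exact le_self_add)⟩
  · rw [← toReal_enorm]
    refine ENNReal.toReal_mono (ENNReal.mul_ne_top hC' (mixedModulus_ne_top hD.isOpen hφ hfin))
      ((hD.enorm_update_add_le hr hφ hc hh a hu hv huv).trans ?_)
    calc _ = C' * mixedModulus (j + 1) r τ Ω φ := by ring
      _ ≤ _ := by gcongr; exact le_add_self
  · have := mixedModulus_ne_top (j := j) (τ := τ) hD.isOpen hφ hfin
    have := mixedModulus_ne_top (j := j + 1) (τ := τ) hD.isOpen hφ hfin
    have := quasiConst_ne_top r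
    finiteness

lemma measurable_sub_eval {φ : Rn n → ℝ} (hφ : Measurable φ) (P : MvPolynomial (Fin n) ℝ) :
    Measurable fun x => φ x - MvPolynomial.eval x P :=
  hφ.sub P.continuous_eval.measurable

lemma eLpNorm_eval_ne_top (hΩ : Bornology.IsBounded Ω) (hΩm : MeasurableSet Ω)
    (P : MvPolynomial (Fin n) ℝ) :
    eLpNorm (fun x => MvPolynomial.eval x P) r (volume.restrict Ω) ≠ ∞ := by
  obtain ⟨C, hC⟩ := hΩ.isCompact_closure.exists_bound_of_continuousOn
    P.continuous_eval.continuousOn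
  have := hΩ.measure_lt_top (μ := volume).ne
  refine ne_top_of_le_ne_top ?_ (eLpNorm_le_of_ae_bound (C := C) (ae_restrict_of_forall_mem
    hΩm fun x hx => hC x (subset_closure hx)))
  rw [Measure.restrict_apply_univ]
  finiteness

lemma eLpNorm_cornerSet_le_of_norm_le {h : Fin j → Rn n} {ψ : Rn n → ℝ} {K : ℝ} {D : ℝ≥0∞}
    (hD : D ≠ ∞) (hK : 0 ≤ K) (hψ : ∀ x, ‖ψ x‖ ≤ K * D.toReal) :
    eLpNorm ψ r (volume.restrict (cornerSet Ω h)) ≤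
      ENNReal.ofReal K * D * volume Ω ^ (1 / r).toReal := by
  refine (eLpNorm_restrict_mono (cornerSet_subset h) _ r).trans
    ((eLpNorm_le_of_ae_bound (ae_of_all _ hψ)).trans_eq ?_)
  rw [ENNReal.ofReal_mul hK, ENNReal.ofReal_toReal hD, Measure.restrict_apply_univ, one_div,
    ENNReal.toReal_inv, mul_comm]

lemma IsStepDomain.exists_mvPolynomial_mixedModulus_sub_le (hD : IsStepDomain Ω x₀ ρ τ (j + 1) N)
    (hr : r ≠ 0) : ∃ C : ℝ≥0∞, C ≠ ∞ ∧ ∀ φ : Rn n → ℝ, Measurable φ →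
      eLpNorm φ r (volume.restrict Ω) ≠ ∞ → ∃ P : MvPolynomial (Fin n) ℝ, P.totalDegree ≤ j ∧
        mixedModulus j r τ Ω (fun x => φ x - MvPolynomial.eval x P) ≤
          C * mixedModulus (j + 1) r τ Ω φ := by
  obtain ⟨C, hC, happrox⟩ := hD.exists_approxMultiadditive hr
  let K : ℝ := (7 * n + 1) ^ j
  let W := volume Ω ^ (1 / r).toReal
  have hW : W ≠ ∞ := ENNReal.rpow_ne_top_of_nonneg ENNReal.toReal_nonneg
    hD.isBounded.measure_lt_top.ne
  refine ⟨quasiConst r * (C + ENNReal.ofReal K * C * W), ?_, fun φ hφ hfin => ?_⟩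
  · have := quasiConst_ne_top r
    finiteness
  obtain ⟨c, hsymm, hadd, ⟨M, hM⟩, hc⟩ := happrox φ hφ hfin
  set D := C * mixedModulus (j + 1) r τ Ω φ
  have hD' : D ≠ ∞ := ENNReal.mul_ne_top hC (mixedModulus_ne_top hD.isOpen hφ hfin)
  obtain ⟨P, hP, hPc⟩ := exists_mvPolynomial_norm_mixedDiff_sub_le hD.step_pos
    ENNReal.toReal_nonneg hadd hsymm hM
  have hmixed {h : Fin j → Rn n} : mixedDiff h (fun x => φ x - MvPolynomial.eval x P) =
      fun x => (mixedDiff h φ x - c h) -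
        (mixedDiff h (fun x => MvPolynomial.eval x P) x - c h) := by
    ext x
    rw [sub_sub_sub_cancel_right, ← Pi.sub_apply, ← map_sub]
    rfl
  refine ⟨P, by simpa using hP, iSup₂_le fun h hh => ?_⟩
  rw [hmixed]
  have hpoly := eLpNorm_cornerSet_le_of_norm_le (Ω := Ω) (h := h) (r := r) hD'
    (by positivity : 0 ≤ K) fun x => by simpa [K] using hPc h hh x
  calc _ ≤ quasiConst r * (D + ENNReal.ofReal K * D * W) :=
        (eLpNorm_sub_le_quasiConst
          ((measurable_mixedDiff h hφ).sub_const _).aestronglyMeasurable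
          ((measurable_mixedDiff h P.continuous_eval.measurable).sub_const _).aestronglyMeasurable
          r).trans (by gcongr; exact hc h hh)
    _ = _ := by
        simp only [D]
        ring

lemma IsStepDomain.exists_mvPolynomial_eLpNorm_sub_le {m : ℕ}
    (hD : IsStepDomain Ω x₀ ρ τ (m + 1) N) (hr : r ≠ 0) :
    ∃ C : ℝ≥0∞, C ≠ ∞ ∧ ∀ φ : Rn n → ℝ, Measurable φ → eLpNorm φ r (volume.restrict Ω) ≠ ∞ →
      ∃ P : MvPolynomial (Fin n) ℝ, P.totalDegree ≤ m ∧
        eLpNorm (fun x => φ x - MvPolynomial.eval x P) r (volume.restrict Ω) ≤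
          C * mixedModulus (m + 1) r τ Ω φ := by
  induction m with
  | zero => simpa only [mixedModulus_zero hD.step_pos.le] using
      hD.exists_mvPolynomial_mixedModulus_sub_le hr
  | succ m ih =>
    obtain ⟨C₁, hC₁, hstep⟩ := hD.exists_mvPolynomial_mixedModulus_sub_le hr
    obtain ⟨C₂, hC₂, hlower⟩ := ih hD.of_succ
    refine ⟨C₂ * C₁, by finiteness, fun φ hφ hfin => ?_⟩
    obtain ⟨P, hPdeg, hP⟩ := hstep φ hφ hfin
    have hfinP : eLpNorm (fun x => φ x - MvPolynomial.eval x P) r (volume.restrict Ω) ≠ ∞ := by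
      have := eLpNorm_eval_ne_top (r := r) hD.isBounded hD.isOpen.measurableSet P
      have := quasiConst_ne_top r
      exact ne_top_of_le_ne_top (by finiteness) (eLpNorm_sub_le_quasiConst
        hφ.aestronglyMeasurable P.continuous_eval.measurable.aestronglyMeasurable r)
    obtain ⟨P', hPdeg', hP'⟩ := hlower _ (measurable_sub_eval hφ P) hfinP
    refine ⟨P + P', (P.totalDegree_add P').trans (max_le hPdeg (hPdeg'.trans m.le_succ)), ?_⟩
    simp only [map_add, ← sub_sub]
    calc _ ≤ C₂ * (C₁ * mixedModulus (m + 2) r τ Ω φ) := hP'.trans (by gcongr)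
      _ = _ := (mul_assoc ..).symm

lemma IsStepDomain.exists_bestApproxE_le {l : ℕ} (hD : IsStepDomain Ω x₀ ρ τ l N) (hl : 0 < l)
    (hr : r ≠ 0) :
    ∃ C : ℝ≥0∞, C ≠ ∞ ∧ ∀ φ : Rn n → ℝ, Measurable φ → eLpNorm φ r (volume.restrict Ω) ≠ ∞ →
      bestApproxE n l r φ Ω ≤ C * mixedModulus l r τ Ω φ := by
  obtain ⟨m, rfl⟩ := Nat.exists_eq_add_one.2 hl
  obtain ⟨C, hC, happrox⟩ := hD.exists_mvPolynomial_eLpNorm_sub_le hr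
  refine ⟨C, hC, fun φ hφ hfin => ?_⟩
  obtain ⟨P, hPdeg, hP⟩ := happrox φ hφ hfin
  exact iInf_le_of_le ⟨P, Nat.lt_succ_iff.2 hPdeg⟩ hP

end LocalApproximation

lemma isStepDomain_ball {n j : ℕ} (x₀ : Rn n) {s τ : ℝ} (hs : 0 < s) (hτ : 0 < τ)
    (hjτ : 2 * j * τ ≤ s) :
    ∃ N : ℕ, IsStepDomain (Metric.ball x₀ s) x₀ (s / 2) τ j N := by
  obtain ⟨N, hN⟩ := exists_nat_gt (2 * s / τ)
  refine ⟨N, ⟨Metric.isOpen_ball, convex_ball x₀ s, by positivity, hτ, by ring_nf; rfl,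
    by linarith, fun x hx y hy => ?_⟩⟩
  rw [div_lt_iff₀ hτ] at hN
  rw [mem_ball_iff_norm] at hx hy
  calc ‖y - x‖ ≤ ‖y - x₀‖ + ‖x - x₀‖ := by rw [← sub_sub_sub_cancel_right]; exact norm_sub_le ..
    _ < N * τ := by linarith

lemma exists_mixedModulus_ball_le {n l : ℕ} (hl : 0 < l) (r : ℝ≥0∞) {ε : ℝ} (hε : 0 < ε) :
    ∃ τ : ℝ, 0 < τ ∧ 2 * l * τ ≤ 1 ∧ ∃ C : ℝ≥0∞, C ≠ ∞ ∧ ∀ φ : Rn n → ℝ, Measurable φ →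
      mixedModulus l r τ (Metric.ball 0 1) φ ≤
        C * eLpNorm (fun z : Rn n × Rn n => difflOn l (Metric.ball 0 1) z.1 φ z.2) r
          ((volume.restrict (openCube 0 ε)).prod (volume.restrict (Metric.ball 0 1))) := by
  let θ := min 1 (ε / 2)
  have hθ : 0 < θ := by positivity
  have hl' : (1 : ℝ) ≤ l := by exact_mod_cast hl
  have hτ : 4 * (l : ℝ) ^ 2 * (θ / (4 * l ^ 2)) = θ := mul_div_cancel₀ _ (by positivity)
  refine ⟨θ / (4 * l ^ 2), by positivity, by nlinarith [min_le_left 1 (ε / 2)], ?_⟩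
  set V := volume (Metric.ball (0 : Rn n) (θ * 1 / (2 * l))) ^ (1 / r).toReal
  have hV : V ≠ 0 := by
    have : volume (Metric.ball (0 : Rn n) (θ * 1 / (2 * l))) ≠ 0 :=
      (Metric.measure_ball_pos volume _ (by positivity)).ne'
    simp only [V, ne_eq, ENNReal.rpow_eq_zero_iff, this, measure_ball_lt_top.ne, false_and, or_self,
      not_false_eq_true]
  have hVtop : V ≠ ∞ := rpow_volume_ball_ne_top _ _ r
  refine ⟨V⁻¹ * (quasiConst r ^ 2 ^ l * 2 ^ l), ?_, fun φ hφ => ?_⟩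
  · have := quasiConst_pow_ne_top r (2 ^ l)
    have := ENNReal.inv_ne_top.2 hV
    finiteness
  rw [mul_assoc, ← ENNReal.mul_le_iff_le_inv hV hVtop]
  exact mixedModulus_le_const_mul_difflOn hl Metric.isOpen_ball (convex_ball 0 1) subset_rfl
    (fun x hx => (mem_ball_iff_norm.1 hx).le) one_pos hθ (min_le_left 1 _) hε
    (by linarith [min_le_right 1 (ε / 2)]) (by rw [hτ, mul_one]) hφ r

lemma exists_bestApproxE_unit_le {n l : ℕ} (hl : 0 < l) {r : ℝ≥0∞} (hr : r ≠ 0) {ε : ℝ}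
    (hε : 0 < ε) : ∃ C : ℝ≥0∞, C ≠ ∞ ∧ ∀ φ : Rn n → ℝ, Measurable φ →
      eLpNorm φ r (volume.restrict (openCube 0 1)) ≠ ∞ →
        bestApproxE n l r φ (openCube 0 1) ≤
          C * eLpNorm (fun z : Rn n × Rn n => difflOn l (openCube 0 1) z.1 φ z.2) r
            ((volume.restrict (openCube 0 ε)).prod (volume.restrict (openCube 0 1))) := by
  rw [openCube_eq_ball 0 one_pos]
  obtain ⟨τ, hτ, hlτ, C₁, hC₁, hmod⟩ := exists_mixedModulus_ball_le (n := n) hl r hε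
  obtain ⟨N, hD⟩ := isStepDomain_ball (0 : Rn n) one_pos hτ hlτ
  obtain ⟨C₂, hC₂, happrox⟩ := hD.exists_bestApproxE_le hl hr
  refine ⟨C₂ * C₁, by finiteness, fun φ hφ hfin => ?_⟩
  rw [mul_assoc]
  exact (happrox φ hφ hfin).trans (by gcongr; exact hmod φ hφ)

section Scaling

variable {n : ℕ}

/-- The map `x ↦ w + s • x`, which carries the cube `(-1, 1)ⁿ` onto `openCube w s`. -/
def dilation (w : Rn n) (s : ℝ) (x : Rn n) : Rn n := w + s • x

/-- The factor `s ^ (-n / r)` by which the dilation of ratio `s` changes `L_r` quasi-norms on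
`ℝⁿ`; it is `1` when `r = ∞`. -/
def scaleFactor (n : ℕ) (r : ℝ≥0∞) (s : ℝ) : ℝ≥0∞ := ENNReal.ofReal s ^ (-(n : ℝ) / r.toReal)

variable (r : ℝ≥0∞) {s : ℝ} (hs : 0 < s)
include hs

lemma scaleFactor_ne_zero : scaleFactor n r s ≠ 0 :=
  (ENNReal.rpow_pos (ENNReal.ofReal_pos.2 hs) ENNReal.ofReal_ne_top).ne'

lemma scaleFactor_ne_top : scaleFactor n r s ≠ ∞ :=
  ENNReal.rpow_ne_top_of_ne_zero (ENNReal.ofReal_pos.2 hs).ne' ENNReal.ofReal_ne_top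

lemma scaleFactor_mul (b : ℝ) :
    scaleFactor n r (s * b) = scaleFactor n r s * scaleFactor n r b := by
  simp only [scaleFactor]
  rw [ENNReal.ofReal_mul hs.le,
    ENNReal.mul_rpow_of_ne_top ENNReal.ofReal_ne_top ENNReal.ofReal_ne_top]

lemma scaleFactor_mul_self :
    scaleFactor n r s * scaleFactor n r s = ENNReal.ofReal s ^ (-(2 * (n : ℝ)) / r.toReal) := by
  rw [scaleFactor, ← ENNReal.rpow_add _ _ (ENNReal.ofReal_pos.2 hs).ne' ENNReal.ofReal_ne_top]
  ring_nf

lemma ofReal_inv_pow_rpow_eq_scaleFactor :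
    ENNReal.ofReal (s ^ n)⁻¹ ^ (1 / r).toReal = scaleFactor n r s := by
  rw [scaleFactor, ENNReal.ofReal_inv_of_pos (by positivity), ENNReal.ofReal_pow hs.le,
    ← ENNReal.rpow_natCast, ← ENNReal.rpow_neg, ← ENNReal.rpow_mul]
  simp [div_eq_mul_inv]

omit hs in
lemma two_rpow_eq_scaleFactor (k : ℕ) :
    (2 : ℝ≥0∞) ^ (((k * n : ℕ) : ℝ) / r.toReal) = scaleFactor n r (2 ^ (-(k : ℤ))) := by
  have hk : ENNReal.ofReal (2 ^ (-(k : ℤ))) = 2 ^ (-(k : ℝ)) := by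
    rw [← Real.rpow_intCast, ← ENNReal.ofReal_rpow_of_pos two_pos]
    simp
  rw [scaleFactor, hk, ← ENNReal.rpow_mul]
  push_cast
  ring_nf

omit hs in
lemma volume_openCube (x : Rn n) (s : ℝ) : volume (openCube x s) = ENNReal.ofReal (2 * s) ^ n := by
  simp [openCube_eq_pi, volume_pi_pi, Real.volume_ball]

lemma volume_openCube_mul_rpow_mul_scaleFactor (x y : Rn n) (b : ℝ) :
    volume (openCube x (s * b)) ^ (1 / r).toReal * scaleFactor n r s =
      volume (openCube y b) ^ (1 / r).toReal := by
  have hs' : ENNReal.ofReal s ^ n * ENNReal.ofReal (s ^ n)⁻¹ = 1 := by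
    rw [← ENNReal.ofReal_pow hs.le, ← ENNReal.ofReal_mul (by positivity),
      mul_inv_cancel₀ (by positivity), ENNReal.ofReal_one]
  rw [← ofReal_inv_pow_rpow_eq_scaleFactor r hs, ← ENNReal.mul_rpow_of_nonneg _ _ (by simp),
    volume_openCube, volume_openCube, mul_left_comm, ENNReal.ofReal_mul hs.le, mul_pow,
    mul_right_comm, hs', one_mul]

omit hs in
lemma measurable_dilation (w : Rn n) (s : ℝ) : Measurable (dilation w s) := by
  unfold dilation
  fun_prop

lemma map_dilation_restrict (w : Rn n) {S : Set (Rn n)} (hS : MeasurableSet S) :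
    Measure.map (dilation w s) (volume.restrict (dilation w s ⁻¹' S)) =
      ENNReal.ofReal (s ^ n)⁻¹ • volume.restrict S := by
  have hcomp : dilation w s = (fun x => w + x) ∘ (fun x => s • x) := rfl
  rw [← Measure.restrict_map (measurable_dilation w s) hS, hcomp,
    ← Measure.map_map (by fun_prop) (by fun_prop), Measure.map_addHaar_smul _ hs.ne',
    Measure.map_smul, (measurePreserving_add_left volume w).map_eq]
  simp [Measure.restrict_smul, abs_of_pos hs]

lemma eLpNorm_comp_dilation (w : Rn n) {S : Set (Rn n)} (hS : MeasurableSet S) {f : Rn n → ℝ}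
    (hf : Measurable f) :
    eLpNorm (fun x => f (dilation w s x)) r (volume.restrict (dilation w s ⁻¹' S)) =
      scaleFactor n r s * eLpNorm f r (volume.restrict S) := by
  have hmap := eLpNorm_map_measure (p := r) hf.aestronglyMeasurable
    (measurable_dilation w s).aemeasurable (μ := volume.restrict (dilation w s ⁻¹' S))
  rw [map_dilation_restrict hs w hS, eLpNorm_smul_measure_of_ne_zero
    (ENNReal.ofReal_pos.2 (by positivity)).ne', ofReal_inv_pow_rpow_eq_scaleFactor r hs] at hmap
  exact hmap.symm

lemma eLpNorm_comp_dilation_prod (v w : Rn n) {S T : Set (Rn n)} (hS : MeasurableSet S)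
    (hT : MeasurableSet T) {f : Rn n × Rn n → ℝ} (hf : Measurable f) :
    eLpNorm (fun z : Rn n × Rn n => f (dilation v s z.1, dilation w s z.2)) r
        ((volume.restrict (dilation v s ⁻¹' S)).prod (volume.restrict (dilation w s ⁻¹' T))) =
      scaleFactor n r s * scaleFactor n r s *
        eLpNorm f r ((volume.restrict S).prod (volume.restrict T)) := by
  have hmap := eLpNorm_map_measure (p := r) (f := Prod.map (dilation v s) (dilation w s))
    hf.aestronglyMeasurable
    ((measurable_dilation v s).prodMap (measurable_dilation w s)).aemeasurable
    (μ := (volume.restrict (dilation v s ⁻¹' S)).prod (volume.restrict (dilation w s ⁻¹' T)))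
  have hs' : ENNReal.ofReal (s ^ n)⁻¹ ≠ 0 := (ENNReal.ofReal_pos.2 (by positivity)).ne'
  rw [← Measure.map_prod_map _ _ (measurable_dilation v s) (measurable_dilation w s),
    map_dilation_restrict hs v hS, map_dilation_restrict hs w hT, Measure.prod_smul_left,
    Measure.prod_smul_right, eLpNorm_smul_measure_of_ne_zero hs',
    eLpNorm_smul_measure_of_ne_zero hs', ofReal_inv_pow_rpow_eq_scaleFactor r hs, smul_eq_mul,
    smul_eq_mul, ← mul_assoc] at hmap
  exact hmap.symm

omit hs in
lemma totalDegree_aeval_le {σ τ R : Type*} [CommSemiring R] {f : σ → MvPolynomial τ R} {d : ℕ}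
    (hf : ∀ i, (f i).totalDegree ≤ d) (P : MvPolynomial σ R) :
    (MvPolynomial.aeval f P).totalDegree ≤ P.totalDegree * d := by
  rw [MvPolynomial.aeval_def, MvPolynomial.eval₂_eq]
  refine MvPolynomial.totalDegree_finsetSum_le fun a ha => ?_
  calc _ ≤ ∑ i ∈ a.support, a i * d := by
        refine (MvPolynomial.totalDegree_mul _ _).trans ?_
        rw [MvPolynomial.algebraMap_eq, MvPolynomial.totalDegree_C, zero_add]
        refine (MvPolynomial.totalDegree_finsetProd _ _).trans (Finset.sum_le_sum fun i _ => ?_)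
        exact (MvPolynomial.totalDegree_pow _ _).trans (Nat.mul_le_mul_left _ (hf i))
    _ ≤ _ := by
        rw [← Finset.sum_mul]
        exact Nat.mul_le_mul_right _ (MvPolynomial.le_totalDegree ha)

omit hs in
lemma exists_mvPolynomial_eval_eq_eval_dilation (w : Rn n) (s : ℝ) (P : MvPolynomial (Fin n) ℝ) :
    ∃ P' : MvPolynomial (Fin n) ℝ, P'.totalDegree ≤ P.totalDegree ∧
      ∀ x, MvPolynomial.eval x P' = MvPolynomial.eval (dilation w s x) P := by
  let f (i : Fin n) : MvPolynomial (Fin n) ℝ :=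
    MvPolynomial.C (w i) + MvPolynomial.C s * MvPolynomial.X i
  have hf (i : Fin n) : (f i).totalDegree ≤ 1 :=
    (MvPolynomial.totalDegree_add _ _).trans
      (max_le (by simp) ((MvPolynomial.totalDegree_mul _ _).trans (by simp)))
  refine ⟨MvPolynomial.aeval f P, by simpa using totalDegree_aeval_le hf P, fun x => ?_⟩
  rw [← MvPolynomial.coe_aeval_eq_eval, ← MvPolynomial.coe_aeval_eq_eval, RingHom.coe_coe,
    RingHom.coe_coe, ← AlgHom.comp_apply, MvPolynomial.comp_aeval]
  congr 2
  ext i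
  simp [f, dilation]

lemma scaleFactor_mul_bestApproxE_le (l : ℕ) (w : Rn n) {S : Set (Rn n)} (hS : MeasurableSet S)
    {φ : Rn n → ℝ} (hφ : Measurable φ) :
    scaleFactor n r s * bestApproxE n l r φ S ≤
      bestApproxE n l r (fun x => φ (dilation w s x)) (dilation w s ⁻¹' S) := by
  refine le_iInf fun P => ?_
  obtain ⟨P', hdeg, heval⟩ := exists_mvPolynomial_eval_eq_eval_dilation (-(s⁻¹ • w)) s⁻¹ P.1
  have hP' (x : Rn n) : MvPolynomial.eval x P.1 = MvPolynomial.eval (dilation w s x) P' := by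
    simp [heval, dilation, smul_smul, hs.ne']
  simp_rw [hP']
  rw [eLpNorm_comp_dilation r hs w hS (measurable_sub_eval hφ P')]
  gcongr
  exact iInf_le_of_le ⟨P', hdeg.trans_lt P.2⟩ le_rfl

omit hs in
lemma difflOn_comp_dilation (l : ℕ) (w : Rn n) (s : ℝ) (Ω : Set (Rn n)) (h : Rn n) (φ : Rn n → ℝ)
    (x : Rn n) :
    difflOn l (dilation w s ⁻¹' Ω) h (fun y => φ (dilation w s y)) x =
      difflOn l Ω (dilation 0 s h) φ (dilation w s x) := by
  have hstep (a : ℝ) : dilation w s (x + a • h) = dilation w s x + a • dilation 0 s h := by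
    simp only [dilation]
    module
  simp only [difflOn, diffl, Set.mem_preimage, hstep]

lemma dilation_preimage_openCube (w : Rn n) (a : ℝ) :
    dilation w s ⁻¹' openCube w (s * a) = openCube 0 a := by
  ext x
  simp [openCube, dilation, abs_mul, abs_of_pos hs, mul_lt_mul_iff_right₀ hs]

end Scaling

lemma exists_bestApproxE_openCube_le {n l : ℕ} (hl : 0 < l) {r : ℝ≥0∞} (hr : r ≠ 0) {ε : ℝ}
    (hε : 0 < ε) : ∃ C : ℝ≥0∞, C ≠ ∞ ∧ ∀ (z : Rn n) (s : ℝ), 0 < s → ∀ φ : Rn n → ℝ,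
      Measurable φ → eLpNorm φ r (volume.restrict (openCube z s)) ≠ ∞ →
        bestApproxE n l r φ (openCube z s) ≤ C * (scaleFactor n r s *
          eLpNorm (fun y : Rn n × Rn n => difflOn l (openCube z s) y.1 φ y.2) r
            ((volume.restrict (openCube 0 (s * ε))).prod (volume.restrict (openCube z s)))) := by
  obtain ⟨C, hC, hunit⟩ := exists_bestApproxE_unit_le (n := n) hl hr hε
  refine ⟨C, hC, fun z s hs φ hφ hfin => ?_⟩
  have hQ := measurableSet_openCube z s
  have hpre : dilation z s ⁻¹' openCube z s = openCube 0 1 := by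
    simpa using dilation_preimage_openCube hs z 1
  have hnorm := eLpNorm_comp_dilation r hs z hQ hφ
  have hdiff := eLpNorm_comp_dilation_prod r hs 0 z (measurableSet_openCube 0 (s * ε)) hQ
    (measurable_difflOn l (convex_openCube z s) hQ hφ)
  have hbest := scaleFactor_mul_bestApproxE_le r hs l z hQ hφ
  simp only [← difflOn_comp_dilation] at hdiff
  rw [dilation_preimage_openCube hs] at hdiff
  rw [hpre] at hnorm hdiff hbest
  have hpull := hunit (fun x => φ (dilation z s x)) (hφ.comp (measurable_dilation z s))
    (hnorm ▸ ENNReal.mul_ne_top (scaleFactor_ne_top r hs) hfin)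
  rw [← ENNReal.mul_le_mul_iff_right (scaleFactor_ne_zero (n := n) r hs)
    (scaleFactor_ne_top r hs)]
  calc _ ≤ _ := hbest.trans hpull
    _ = _ := by rw [hdiff]; ring

section ErrorBounds

variable {n l : ℕ}

lemma diffl_eval_eq_zero {P : MvPolynomial (Fin n) ℝ} (hP : P.totalDegree < l) (h x : Rn n) :
    diffl l h (fun y => MvPolynomial.eval y P) x = 0 := by
  let line (i : Fin n) : Polynomial ℝ := Polynomial.C (x i) + Polynomial.C (h i) * Polynomial.X
  have hline (i : Fin n) : (line i).natDegree ≤ 1 := by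
    simp only [line]
    compute_degree
  have hdeg : (MvPolynomial.aeval line P).natDegree < l := by
    have := MvPolynomial.aeval_natDegree_le P le_rfl line hline
    omega
  have heval (t : ℝ) :
      (MvPolynomial.aeval line P).eval t = MvPolynomial.eval (x + t • h) P := by
    rw [← Polynomial.coe_aeval_eq_eval, ← MvPolynomial.coe_aeval_eq_eval, RingHom.coe_coe,
      ← AlgHom.comp_apply, MvPolynomial.comp_aeval]
    congr 2
    ext i
    simp only [line, map_add, map_mul, Polynomial.aeval_C, Polynomial.aeval_X, Pi.add_apply,
      Pi.smul_apply, smul_eq_mul, mul_comm t, Algebra.algebraMap_self, RingHom.id_apply]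
  have hzero := congrFun (Polynomial.fwdDiff_iter_eq_zero_of_degree_lt hdeg) 0
  rw [fwdDiff_iter_eq_sum_shift] at hzero
  rw [diffl_eq_fwdDiff_iterate, fwdDiff_iter_eq_sum_shift]
  simpa [heval, Nat.cast_smul_eq_nsmul] using hzero

lemma diffl_sub_eval {P : MvPolynomial (Fin n) ℝ} (hP : P.totalDegree < l) (h : Rn n)
    (φ : Rn n → ℝ) : diffl l h (fun y => φ y - MvPolynomial.eval y P) = diffl l h φ := by
  funext x
  have hzero := diffl_eval_eq_zero hP h x
  simp only [diffl] at hzero ⊢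
  simp only [mul_sub, Finset.sum_sub_distrib, hzero, sub_zero]

lemma eLpNorm_diffl_le (l : ℕ) {h : Rn n} {D Q : Set (Rn n)} (hD : MeasurableSet D)
    (hQ : MeasurableSet Q) (hDQ : ∀ x ∈ D, ∀ j ≤ l, x + (j : ℝ) • h ∈ Q) {g : Rn n → ℝ}
    (hg : Measurable g) (r : ℝ≥0∞) :
    eLpNorm (diffl l h g) r (volume.restrict D) ≤
      quasiConst r ^ (l + 1) * 2 ^ l * eLpNorm g r (volume.restrict Q) := by
  have hsum : ∑ j ∈ Finset.range (l + 1), ‖(l.choose j : ℝ) * (-1) ^ (l + j)‖ₑ = 2 ^ l := by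
    simp only [enorm_mul, enorm_pow, enorm_neg, enorm_one, one_pow, mul_one, Real.enorm_natCast]
    exact_mod_cast Nat.sum_range_choose l
  have hshift (j : ℕ) : Measurable fun x : Rn n => g (x + (j : ℝ) • h) := by fun_prop
  calc eLpNorm (diffl l h g) r (volume.restrict D)
      ≤ quasiConst r ^ (l + 1) * ∑ j ∈ Finset.range (l + 1),
          eLpNorm (fun x => (l.choose j : ℝ) * (-1) ^ (l + j) * g (x + (j : ℝ) • h)) r
            (volume.restrict D) := by
        have := eLpNorm_sum_le_quasiConst_pow (Finset.range (l + 1)) (μ := volume.restrict D)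
          (fun j _ => ((hshift j).const_mul
            ((l.choose j : ℝ) * (-1) ^ (l + j))).aestronglyMeasurable) r
        rwa [Finset.card_range] at this
    _ ≤ quasiConst r ^ (l + 1) * ∑ j ∈ Finset.range (l + 1),
          ‖(l.choose j : ℝ) * (-1) ^ (l + j)‖ₑ * eLpNorm g r (volume.restrict Q) := by
        gcongr with j hj
        refine (eLpNorm_const_smul_le (c := (l.choose j : ℝ) * (-1) ^ (l + j))
          (f := fun x => g (x + (j : ℝ) • h))).trans ?_
        gcongr
        exact eLpNorm_restrict_le_of_measurePreserving
          (measurePreserving_add_right volume ((j : ℝ) • h)) hD hQ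
          (fun x hx => hDQ x hx j (Finset.mem_range_succ_iff.1 hj)) hg.aestronglyMeasurable
          (fun _ _ => le_rfl) r
    _ = _ := by rw [← Finset.sum_mul, hsum, mul_assoc]

lemma eLpNorm_diffl_le_bestApproxE (hl : 0 < l) {h : Rn n} {D Q : Set (Rn n)}
    (hD : MeasurableSet D) (hQ : MeasurableSet Q) (hDQ : ∀ x ∈ D, ∀ j ≤ l, x + (j : ℝ) • h ∈ Q)
    {φ : Rn n → ℝ} (hφ : Measurable φ) (r : ℝ≥0∞) :
    eLpNorm (diffl l h φ) r (volume.restrict D) ≤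
      quasiConst r ^ (l + 1) * 2 ^ l * bestApproxE n l r φ Q := by
  have : Nonempty {P : MvPolynomial (Fin n) ℝ // P.totalDegree < l} := ⟨⟨0, by simpa using hl⟩⟩
  have := quasiConst_pow_ne_top r (l + 1)
  rw [bestApproxE, ENNReal.mul_iInf_of_ne]
  · refine le_iInf fun P => ?_
    rw [← diffl_sub_eval P.2]
    exact eLpNorm_diffl_le l hD hQ hDQ (measurable_sub_eval hφ P.1) r
  · exact mul_ne_zero (pow_ne_zero _ (one_pos.trans_le (one_le_quasiConst r)).ne') (by simp)
  · finiteness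

lemma eLpNorm_difflOn_le (l : ℕ) {Ω : Set (Rn n)} (h : Rn n) (φ : Rn n → ℝ) (r : ℝ≥0∞) :
    eLpNorm (difflOn l Ω h φ) r volume ≤ modulusE n l r φ Ω :=
  le_iSup (fun h => eLpNorm (difflOn l Ω h φ) r volume) h

lemma modulusE_le_bestApproxE (hl : 0 < l) {Q : Set (Rn n)} (hQ : Convex ℝ Q)
    (hQm : MeasurableSet Q) {φ : Rn n → ℝ} (hφ : Measurable φ) (r : ℝ≥0∞) :
    modulusE n l r φ Q ≤ quasiConst r ^ (l + 1) * 2 ^ l * bestApproxE n l r φ Q := by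
  refine iSup_le fun h => ?_
  let D : Set (Rn n) := {x | x ∈ Q ∧ x + (l : ℝ) • h ∈ Q}
  have hD : MeasurableSet D := hQm.inter ((measurable_add_const ((l : ℝ) • h)) hQm)
  have hind : difflOn l Q h φ = D.indicator (diffl l h φ) := by
    funext x
    simp only [difflOn_of_convex hQ, Set.indicator_apply, D, Set.mem_ofPred_eq]
  rw [hind, eLpNorm_indicator_eq_eLpNorm_restrict hD]
  refine eLpNorm_diffl_le_bestApproxE hl hD hQm (fun x hx j hj => ?_) hφ r
  have hl' : (0 : ℝ) < l := by exact_mod_cast hl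
  have hmem := hQ.add_smul_mem hx.1 hx.2 (t := (j : ℝ) / l)
    ⟨by positivity, (div_le_one hl').2 (by exact_mod_cast hj)⟩
  rwa [smul_smul, div_mul_cancel₀ _ hl'.ne'] at hmem

lemma scaleFactor_mul_eLpNorm_prod_le {r : ℝ≥0∞} (hr : r ≠ 0) {s : ℝ} (hs : 0 < s)
    {Q : Set (Rn n)} {G : Rn n × Rn n → ℝ} (hG : Measurable G) {R : ℝ≥0∞}
    (h : ∀ y ∈ openCube 0 s, eLpNorm (fun x => G (y, x)) r (volume.restrict Q) ≤ R) :
    ENNReal.ofReal s ^ (-(2 * (n : ℝ)) / r.toReal) *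
        eLpNorm G r ((volume.restrict (openCube 0 s)).prod (volume.restrict Q)) ≤
      volume (openCube (0 : Rn n) 1) ^ (1 / r).toReal * (scaleFactor n r s * R) := by
  have hslice := eLpNorm_prod_le_of_ae_slice (μ := volume.restrict Q)
    (ν := volume.restrict (openCube 0 s)) hG.stronglyMeasurable hr
    (ae_restrict_of_forall_mem (measurableSet_openCube (0 : Rn n) s) h)
  rw [Measure.restrict_apply_univ] at hslice
  have hvol := volume_openCube_mul_rpow_mul_scaleFactor r hs (0 : Rn n) 0 1
  rw [mul_one] at hvol
  calc _ ≤ scaleFactor n r s * scaleFactor n r s *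
        (volume (openCube (0 : Rn n) s) ^ (1 / r).toReal * R) := by
        rw [scaleFactor_mul_self r hs]
        gcongr
    _ = _ := by rw [← hvol]; ring

lemma deltaEOn_le_modulusE {r : ℝ≥0∞} (hr : r ≠ 0) {s : ℝ} (hs : 0 < s) {Q Ω : Set (Rn n)}
    (hΩ : Convex ℝ Ω) (hΩm : MeasurableSet Ω) {φ : Rn n → ℝ} (hφ : Measurable φ) :
    deltaEOn n l r s Q Ω φ ≤ volume (openCube (0 : Rn n) 1) ^ (1 / r).toReal *
      (scaleFactor n r s * modulusE n l r φ Ω) :=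
  scaleFactor_mul_eLpNorm_prod_le hr hs (measurable_difflOn l hΩ hΩm hφ) fun h _ =>
    (eLpNorm_mono_measure _ Measure.restrict_le_self).trans (eLpNorm_difflOn_le l h φ r)

lemma deltaE_le_bestApproxE (hl : 0 < l) {r : ℝ≥0∞} (hr : r ≠ 0) {s : ℝ} (hs : 0 < s)
    {D Q : Set (Rn n)} (hD : MeasurableSet D) (hQ : MeasurableSet Q)
    (hDQ : ∀ h ∈ openCube 0 s, ∀ x ∈ D, ∀ j ≤ l, x + (j : ℝ) • h ∈ Q) {φ : Rn n → ℝ}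
    (hφ : Measurable φ) :
    deltaE n l r s D φ ≤ volume (openCube (0 : Rn n) 1) ^ (1 / r).toReal *
      (scaleFactor n r s * (quasiConst r ^ (l + 1) * 2 ^ l * bestApproxE n l r φ Q)) :=
  scaleFactor_mul_eLpNorm_prod_le hr hs (measurable_diffl l hφ) fun h hh =>
    eLpNorm_diffl_le_bestApproxE hl hD hQ (hDQ h hh) hφ r

end ErrorBounds

section DyadicCubes

variable {n : ℕ}

lemma openCube_subset_openCube {x z : Rn n} {a : ℝ} (hx : x ∈ openCube z a) (b : ℝ) :
    openCube x b ⊆ openCube z (b + a) := fun y hy i =>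
  (abs_sub_le (y i) (x i) (z i)).trans_lt (add_lt_add (hy i) (hx i))

lemma add_smul_mem_openCube {x z h : Rn n} {a b : ℝ} (hx : x ∈ openCube z a)
    (hh : h ∈ openCube 0 b) {j l : ℕ} (hj : j ≤ l) : x + (j : ℝ) • h ∈ openCube z (a + l * b) := by
  intro i
  have hhi : |h i| < b := by simpa using hh i
  have hjl : (j : ℝ) ≤ l := by exact_mod_cast hj
  calc |(x + (j : ℝ) • h) i - z i| = |(x i - z i) + j * h i| := by
        simp only [Pi.add_apply, Pi.smul_apply, smul_eq_mul]
        ring_nf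
    _ ≤ |x i - z i| + j * |h i| := by
        simpa [abs_mul] using abs_add_le (x i - z i) (j * h i)
    _ < a + l * b := add_lt_add_of_lt_of_le (hx i) (by gcongr)

lemma dilatedCube_eq_openCube (k : ℕ) (m : Fin n → ℤ) (c : ℝ) :
    dilatedCube n k m c = openCube (dyadicCenter n k m) (2 ^ (-(k : ℤ)) * (c / 2)) := by
  rw [dilatedCube, zpow_neg, zpow_natCast, pow_succ]
  congr 1
  ring

lemma dilatedCube_one (k : ℕ) (m : Fin n → ℤ) : dilatedCube n k m 1 = dyadicCube n k m := by
  ext x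
  refine forall_congr' fun i => ?_
  have hleft : ((m i : ℝ) + 1 / 2) / 2 ^ k - 1 / 2 ^ (k + 1) = (m i : ℝ) / 2 ^ k := by ring
  have hright : ((m i : ℝ) + 1 / 2) / 2 ^ k + 1 / 2 ^ (k + 1) = ((m i : ℝ) + 1) / 2 ^ k := by ring
  rw [abs_sub_lt_iff, ← hleft, ← hright, dyadicCenter]
  constructor <;> rintro ⟨_, _⟩ <;> constructor <;> linarith

lemma dyadicCube_eq_openCube (k : ℕ) (m : Fin n → ℤ) :
    dyadicCube n k m = openCube (dyadicCenter n k m) (2 ^ (-(k : ℤ)) * (1 / 2)) := by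
  rw [← dilatedCube_one, dilatedCube_eq_openCube]

lemma measurableSet_dyadicCube (k : ℕ) (m : Fin n → ℤ) : MeasurableSet (dyadicCube n k m) := by
  rw [dyadicCube_eq_openCube]
  exact measurableSet_openCube _ _

lemma measurableSet_dilatedCube (k : ℕ) (m : Fin n → ℤ) (c : ℝ) :
    MeasurableSet (dilatedCube n k m c) := measurableSet_openCube _ _

lemma convex_dilatedCube (k : ℕ) (m : Fin n → ℤ) (c : ℝ) : Convex ℝ (dilatedCube n k m c) :=
  convex_openCube _ _

lemma openCube_subset_dilatedCube {k : ℕ} {m : Fin n → ℤ} {x : Rn n} (hx : x ∈ dyadicCube n k m)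
    (lam : ℝ) : openCube x (2 ^ (-(k : ℤ)) * lam) ⊆ dilatedCube n k m (1 + 2 * lam) := by
  rw [dyadicCube_eq_openCube] at hx
  rw [dilatedCube_eq_openCube]
  convert openCube_subset_openCube hx (2 ^ (-(k : ℤ)) * lam) using 2
  ring

lemma dyadicCube_subset_openCube {k : ℕ} {m : Fin n → ℤ} {x : Rn n} (hx : x ∈ dyadicCube n k m) :
    dyadicCube n k m ⊆ openCube x (2 ^ (-(k : ℤ))) := by
  rw [dyadicCube_eq_openCube] at hx ⊢
  intro y hy i
  have hxi := hx i
  rw [abs_sub_comm] at hxi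
  calc |y i - x i| ≤ _ := abs_sub_le (y i) (dyadicCenter n k m i) (x i)
    _ < _ := add_lt_add (hy i) hxi
    _ = _ := by ring

lemma MemLrLoc.eLpNorm_openCube_ne_top {r : ℝ≥0∞} {φ : Rn n → ℝ} (hφ : MemLrLoc n r φ) (x : Rn n)
    (s : ℝ) : eLpNorm φ r (volume.restrict (openCube x s)) ≠ ∞ := by
  have hcompact : IsCompact (Set.univ.pi fun i => Metric.closedBall (x i) s) :=
    isCompact_univ_pi fun _ => isCompact_closedBall _ _
  refine ne_top_of_le_ne_top (hφ.2 _ hcompact).ne (eLpNorm_restrict_mono ?_ φ r)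
  rw [openCube_eq_pi]
  exact Set.pi_mono fun i _ => Metric.ball_subset_closedBall

lemma ae_mem_dyadicCube_floor (k : ℕ) :
    ∀ᵐ x : Rn n, x ∈ dyadicCube n k fun i => ⌊x i * 2 ^ k⌋ := by
  have hgrid : ∀ᵐ x : Rn n, ∀ i, ∀ z : ℤ, x i ≠ (z : ℝ) / 2 ^ k := by
    refine ae_all_iff.2 fun i => ae_all_iff.2 fun z => ?_
    simpa [ae_iff, ← volume_pi] using
      Measure.pi_hyperplane (fun _ : Fin n => (volume : Measure ℝ)) i ((z : ℝ) / 2 ^ k)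
  filter_upwards [hgrid] with x hx i
  have hk : (0 : ℝ) < 2 ^ k := by positivity
  refine ⟨((div_le_iff₀ hk).2 (Int.floor_le _)).lt_of_ne (hx i _).symm, ?_⟩
  exact (lt_div_iff₀ hk).2 (Int.lt_floor_add_one _)

/-- The integer points of the cube `[-R, R]ⁿ`: the offsets of the dyadic cubes at distance at most
`R` in the index grid. -/
def integerBox (n R : ℕ) : Finset (Fin n → ℤ) := Fintype.piFinset fun _ => Finset.Icc (-(R : ℤ)) R

lemma mem_integerBox {R : ℕ} {j : Fin n → ℤ} : j ∈ integerBox n R ↔ ∀ i, |j i| ≤ R := by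
  simp [integerBox, abs_le]

lemma integerBox_zero : integerBox n 0 = {0} := by
  ext j
  simp [mem_integerBox, funext_iff]

lemma floor_sub_mem_integerBox {k : ℕ} {m : Fin n → ℤ} {c : ℝ} {x : Rn n}
    (hx : x ∈ dilatedCube n k m c) :
    (fun i => ⌊x i * 2 ^ k⌋ - m i) ∈ integerBox n (⌈c⌉₊ + 2) := by
  refine mem_integerBox.2 fun i => ?_
  have hk : (0 : ℝ) < 2 ^ k := by positivity
  have hxi : |x i * 2 ^ k - ((m i : ℝ) + 1 / 2)| < c / 2 := by
    have hcenter : x i * 2 ^ k - ((m i : ℝ) + 1 / 2) = (x i - dyadicCenter n k m i) * 2 ^ k := by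
      rw [dyadicCenter]
      field_simp
    calc _ = |x i - dyadicCenter n k m i| * 2 ^ k := by rw [hcenter, abs_mul, abs_of_pos hk]
      _ < c / 2 ^ (k + 1) * 2 ^ k := by
        gcongr
        exact hx i
      _ = c / 2 := by
        rw [pow_succ]
        field_simp
  obtain ⟨hlo, hhi⟩ := abs_lt.1 hxi
  have hfloor : |((⌊x i * 2 ^ k⌋ - m i : ℤ) : ℝ)| ≤ ((⌈c⌉₊ + 2 : ℕ) : ℝ) := by
    push_cast
    rw [abs_le]
    constructor <;>
      linarith [Int.floor_le (x i * 2 ^ k), Int.lt_floor_add_one (x i * 2 ^ k), Nat.le_ceil c]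
  exact_mod_cast hfloor

lemma ae_exists_mem_dyadicCube_add (k : ℕ) (m : Fin n → ℤ) (c : ℝ) :
    ∀ᵐ x : Rn n, x ∈ dilatedCube n k m c →
      ∃ j ∈ integerBox n (⌈c⌉₊ + 2), x ∈ dyadicCube n k (m + j) := by
  filter_upwards [ae_mem_dyadicCube_floor k] with x hx hxc
  refine ⟨_, floor_sub_mem_integerBox hxc, ?_⟩
  convert hx using 2
  ext i
  simp

end DyadicCubes

section CubewiseComparison

variable {n l : ℕ} {r : ℝ≥0∞}

/-- The relation `A ≲ B` between families of cubewise quantities: uniformly in `φ ∈ L_r^loc` and in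
the dyadic cube, `A` is bounded by a constant times the sum of `B` over the cubes of the same level
within a fixed index distance `R`. -/
def CubewiseDominated (n : ℕ) (r : ℝ≥0∞) (A B : (Rn n → ℝ) → ℕ → (Fin n → ℤ) → ℝ≥0∞) : Prop :=
  ∃ (C : ℝ≥0∞) (R : ℕ), C ≠ ∞ ∧ ∀ φ, MemLrLoc n r φ → ∀ k m,
    A φ k m ≤ C * ∑ j ∈ integerBox n R, B φ k (m + j)

lemma CubewiseDominated.of_le {A B : (Rn n → ℝ) → ℕ → (Fin n → ℤ) → ℝ≥0∞} {C : ℝ≥0∞} (hC : C ≠ ∞)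
    (h : ∀ φ, MemLrLoc n r φ → ∀ k m, A φ k m ≤ C * B φ k m) : CubewiseDominated n r A B :=
  ⟨C, 0, hC, by simpa [integerBox_zero] using h⟩

lemma CubewiseDominated.refl (A : (Rn n → ℝ) → ℕ → (Fin n → ℤ) → ℝ≥0∞) :
    CubewiseDominated n r A A :=
  .of_le ENNReal.one_ne_top fun _ _ _ _ => (one_mul _).ge

lemma sum_integerBox_add_le (f : (Fin n → ℤ) → ℝ≥0∞) {R : ℕ} {j : Fin n → ℤ}
    (hj : j ∈ integerBox n R) (R' : ℕ) :
    ∑ i ∈ integerBox n R', f (j + i) ≤ ∑ i ∈ integerBox n (R + R'), f i := by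
  refine (Finset.sum_map (integerBox n R') (addLeftEmbedding j) f).ge.trans ?_
  refine Finset.sum_le_sum_of_subset (Finset.map_subset_iff_subset_preimage.2 fun i hi => ?_)
  rw [Finset.mem_preimage, mem_integerBox]
  rw [mem_integerBox] at hi hj
  intro a
  push_cast
  exact (abs_add_le _ _).trans (add_le_add (hj a) (hi a))

lemma CubewiseDominated.trans {A B D : (Rn n → ℝ) → ℕ → (Fin n → ℤ) → ℝ≥0∞}
    (hAB : CubewiseDominated n r A B) (hBD : CubewiseDominated n r B D) :
    CubewiseDominated n r A D := by
  obtain ⟨C, R, hC, hAB⟩ := hAB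
  obtain ⟨C', R', hC', hBD⟩ := hBD
  refine ⟨C * ((integerBox n R).card * C'), R + R', by finiteness, fun φ hφ k m => ?_⟩
  calc A φ k m
      ≤ C * ∑ j ∈ integerBox n R, C' * ∑ i ∈ integerBox n R', D φ k (m + j + i) :=
        (hAB φ hφ k m).trans (by gcongr with j; exact hBD φ hφ k (m + j))
    _ ≤ C * ∑ _j ∈ integerBox n R, C' * ∑ i ∈ integerBox n (R + R'), D φ k (m + i) := by
        gcongr C * ?_
        refine Finset.sum_le_sum fun j hj => ?_
        gcongr
        simpa only [add_assoc] using sum_integerBox_add_le (fun i => D φ k (m + i)) hj R'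
    _ = _ := by rw [Finset.sum_const, nsmul_eq_mul, mul_assoc, mul_assoc]

/-- The quantity `2^{kn/r} E_l(φ, cQ^n_{k,m})_r` of `‖·‖^{(3)}`; the power of two is written as the
scale factor of the side `2^{-k}`. -/
def cubeBestApproxE (n l : ℕ) (r : ℝ≥0∞) (c : ℝ) (φ : Rn n → ℝ) (k : ℕ) (m : Fin n → ℤ) : ℝ≥0∞ :=
  scaleFactor n r (2 ^ (-(k : ℤ))) * bestApproxE n l r φ (dilatedCube n k m c)

/-- The quantity `2^{kn/r} ω_l(φ, cQ^n_{k,m})_r` of `‖·‖^{(4)}`, written like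
`cubeBestApproxE`. -/
def cubeModulusE (n l : ℕ) (r : ℝ≥0∞) (c : ℝ) (φ : Rn n → ℝ) (k : ℕ) (m : Fin n → ℤ) : ℝ≥0∞ :=
  scaleFactor n r (2 ^ (-(k : ℤ))) * modulusE n l r φ (dilatedCube n k m c)

/-- The quantity `δ^l_r(x + 2^{-k}Iⁿ)φ` of the defining quasi-norm. -/
def centredDeltaE (n l : ℕ) (r : ℝ≥0∞) (φ : Rn n → ℝ) (k : ℕ) (x : Rn n) : ℝ≥0∞ :=
  deltaE n l r (2 ^ (-(k : ℤ)) * 2) (openCube x (2 ^ (-(k : ℤ)))) φ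

lemma eLpNorm_difflOn_prod_le_sum {φ : Rn n → ℝ} (hφ : Measurable φ) (ν : Measure (Rn n))
    [SFinite ν] (k : ℕ) (m : Fin n → ℤ) (c : ℝ) (Ω : Set (Rn n)) :
    eLpNorm (fun y : Rn n × Rn n => difflOn l Ω y.1 φ y.2) r
        (ν.prod (volume.restrict (dilatedCube n k m c))) ≤
      quasiConst r ^ (integerBox n (⌈c⌉₊ + 2)).card * ∑ j ∈ integerBox n (⌈c⌉₊ + 2),
        eLpNorm (fun y : Rn n × Rn n => diffl l y.1 φ y.2) r
          (ν.prod (volume.restrict (dyadicCube n k (m + j)))) := by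
  have hdiffl (y : Rn n × Rn n) : ‖difflOn l Ω y.1 φ y.2‖ ≤ ‖diffl l y.1 φ y.2‖ := by
    unfold difflOn
    split_ifs <;> simp
  have hslab (S : Set (Rn n)) : ν.prod (volume.restrict S) =
      (ν.prod volume).restrict (Set.univ ×ˢ S) := by
    rw [← Measure.prod_restrict, Measure.restrict_univ]
  refine (eLpNorm_mono hdiffl).trans ?_
  simp_rw [hslab]
  refine eLpNorm_restrict_le_sum_of_ae_cover _
    (fun j _ => MeasurableSet.univ.prod (measurableSet_dyadicCube k _)) ?_
    (measurable_diffl l hφ).aestronglyMeasurable r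
  rw [ae_restrict_iff' (MeasurableSet.univ.prod (measurableSet_dilatedCube k m c))]
  filter_upwards [Measure.quasiMeasurePreserving_snd.ae (ae_exists_mem_dyadicCube_add k m c)]
    with y hy hyc
  simpa using hy hyc.2

lemma scaleFactor_eq_mul_inv (r : ℝ≥0∞) {s ε : ℝ} (hs : 0 < s) (hε : 0 < ε) :
    scaleFactor n r s = scaleFactor n r (s * ε) * scaleFactor n r ε⁻¹ := by
  rw [← scaleFactor_mul r (by positivity), mul_inv_cancel_right₀ hε.ne']

lemma deltaE_eq (l : ℕ) (r : ℝ≥0∞) {s : ℝ} (hs : 0 < s) (Q : Set (Rn n)) (φ : Rn n → ℝ) :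
    deltaE n l r s Q φ = scaleFactor n r s * scaleFactor n r s *
      eLpNorm (fun y : Rn n × Rn n => diffl l y.1 φ y.2) r
        ((volume.restrict (openCube 0 s)).prod (volume.restrict Q)) := by
  rw [scaleFactor_mul_self r hs, deltaE]

lemma deltaE_le_deltaE {s ε : ℝ} (hs : 0 < s) (hε : 1 ≤ ε) {Q Q' : Set (Rn n)} (hQ : Q ⊆ Q')
    (φ : Rn n → ℝ) :
    deltaE n l r s Q φ ≤
      scaleFactor n r ε⁻¹ * scaleFactor n r ε⁻¹ * deltaE n l r (s * ε) Q' φ := by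
  have hε' : 0 < ε := one_pos.trans_le hε
  have hcube : openCube (0 : Rn n) s ⊆ openCube 0 (s * ε) := fun _ hy i =>
    (hy i).trans_le (le_mul_of_one_le_right hs.le hε)
  rw [deltaE_eq l r hs, deltaE_eq l r (by positivity), scaleFactor_eq_mul_inv r hs hε']
  calc _ ≤ _ := mul_le_mul_right (eLpNorm_mono_measure _ (Measure.prod_mono
        (Measure.restrict_mono hcube le_rfl) (Measure.restrict_mono hQ le_rfl))) _
    _ = _ := by ring

lemma cubewiseDominated_bestApproxE_deltaE (hl : 0 < l) (hr : r ≠ 0) {c ε : ℝ} (hc : 0 < c)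
    (hε : 0 < ε) :
    CubewiseDominated n r
      (cubeBestApproxE n l r c)
      (fun φ k m => deltaE n l r (2 ^ (-(k : ℤ)) * ε) (dyadicCube n k m) φ) := by
  obtain ⟨C, hC, hWhitney⟩ :=
    exists_bestApproxE_openCube_le (n := n) hl hr (ε := 2 * ε / c) (by positivity)
  set N := (integerBox n (⌈c⌉₊ + 2)).card
  have := quasiConst_pow_ne_top r N
  have := scaleFactor_ne_top (n := n) r (half_pos hc)
  have := scaleFactor_ne_top (n := n) r (inv_pos.2 hε)
  refine ⟨C * scaleFactor n r (c / 2) * (scaleFactor n r ε⁻¹ * scaleFactor n r ε⁻¹) *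
    quasiConst r ^ N, ⌈c⌉₊ + 2, by finiteness, fun φ hφ k m => ?_⟩
  have hs : (0 : ℝ) < 2 ^ (-(k : ℤ)) := by positivity
  have hloc := hWhitney (dyadicCenter n k m) (2 ^ (-(k : ℤ)) * (c / 2)) (by positivity) φ hφ.1
    (hφ.eLpNorm_openCube_ne_top _ _)
  rw [← dilatedCube_eq_openCube, scaleFactor_mul r hs,
    show (2 : ℝ) ^ (-(k : ℤ)) * (c / 2) * (2 * ε / c) = 2 ^ (-(k : ℤ)) * ε by field_simp] at hloc
  simp only [cubeBestApproxE, deltaE_eq l r (mul_pos hs hε), ← Finset.mul_sum]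
  rw [scaleFactor_eq_mul_inv r hs hε] at hloc ⊢
  calc _ ≤ _ := mul_le_mul_right (hloc.trans (mul_le_mul_right (mul_le_mul_right
        (eLpNorm_difflOn_prod_le_sum hφ.1 _ k m c _) _) _)) _
    _ = _ := by ring

lemma volume_openCube_rpow_ne_top (x : Rn n) (s : ℝ) (r : ℝ≥0∞) :
    volume (openCube x s) ^ (1 / r).toReal ≠ ∞ := by
  rw [volume_openCube]
  finiteness

lemma exists_deltaE_le_cubeBestApproxE (hl : 0 < l) (hr : r ≠ 0) {a b c : ℝ} (ha : 0 < a)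
    (hc : b + 2 * l * a ≤ c) :
    ∃ C : ℝ≥0∞, C ≠ ∞ ∧ ∀ (φ : Rn n → ℝ), Measurable φ → ∀ (k : ℕ) (m : Fin n → ℤ)
      (D : Set (Rn n)), MeasurableSet D → D ⊆ dilatedCube n k m b →
        deltaE n l r (2 ^ (-(k : ℤ)) * a) D φ ≤ C * cubeBestApproxE n l r c φ k m := by
  have := quasiConst_pow_ne_top r (l + 1)
  have := scaleFactor_ne_top (n := n) r ha
  have := volume_openCube_rpow_ne_top (0 : Rn n) 1 r
  refine ⟨volume (openCube (0 : Rn n) 1) ^ (1 / r).toReal * scaleFactor n r a *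
    (quasiConst r ^ (l + 1) * 2 ^ l), by finiteness, fun φ hφ k m D hD hDb => ?_⟩
  have hs : (0 : ℝ) < 2 ^ (-(k : ℤ)) := by positivity
  refine (deltaE_le_bestApproxE hl hr (mul_pos hs ha) hD (measurableSet_dilatedCube k m c)
    (fun h hh x hx j hj => ?_) hφ).trans_eq ?_
  · rw [dilatedCube_eq_openCube] at hDb ⊢
    intro i
    calc _ < _ := add_smul_mem_openCube (hDb hx) hh hj i
      _ = (2 : ℝ) ^ (-(k : ℤ)) * ((b + 2 * l * a) / 2) := by ring
      _ ≤ 2 ^ (-(k : ℤ)) * (c / 2) := by gcongr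
  · rw [scaleFactor_mul r hs, cubeBestApproxE]
    ring

lemma cubewiseDominated_bestApproxE_bestApproxE (hl : 0 < l) (hr : r ≠ 0) {lam c : ℝ}
    (hlam : 0 < lam) (hc : 1 < c) :
    CubewiseDominated n r (cubeBestApproxE n l r lam) (cubeBestApproxE n l r c) := by
  have hε : 0 < (c - 1) / (2 * l) := div_pos (sub_pos.2 hc) (by positivity)
  have hεc : 1 + 2 * l * ((c - 1) / (2 * l)) ≤ c := by
    rw [mul_div_cancel₀ _ (by positivity), add_sub_cancel]
  obtain ⟨C, hC, hdelta⟩ := exists_deltaE_le_cubeBestApproxE (n := n) hl hr hε hεc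
  exact (cubewiseDominated_bestApproxE_deltaE hl hr hlam hε).trans
    (.of_le hC fun φ hφ k m => hdelta φ hφ.1 k m _ (measurableSet_dyadicCube k m)
      (dilatedCube_one k m).ge)

lemma cubewiseDominated_iSup_deltaE_bestApproxE (hl : 0 < l) (hr : r ≠ 0) {c : ℝ} (hc : 1 < c) :
    CubewiseDominated n r (fun φ k m => ⨆ x ∈ dyadicCube n k m, centredDeltaE n l r φ k x)
      (cubeBestApproxE n l r c) := by
  obtain ⟨C, hC, hdelta⟩ :=
    exists_deltaE_le_cubeBestApproxE (n := n) hl hr two_pos (le_refl (3 + 2 * l * 2 : ℝ))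
  have hle (φ : Rn n → ℝ) (hφ : MemLrLoc n r φ) (k : ℕ) (m : Fin n → ℤ) :
      ⨆ x ∈ dyadicCube n k m, centredDeltaE n l r φ k x ≤
        C * cubeBestApproxE n l r (3 + 2 * l * 2) φ k m := by
    refine iSup₂_le fun x hx => hdelta φ hφ.1 k m _ (measurableSet_openCube x _) ?_
    convert openCube_subset_dilatedCube hx 1 using 2 <;> norm_num
  exact .trans (.of_le hC hle)
    (cubewiseDominated_bestApproxE_bestApproxE hl hr (by positivity) hc)

lemma cubewiseDominated_deltaE_iInf_deltaE :
    CubewiseDominated n r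
      (fun φ k m => deltaE n l r (2 ^ (-(k : ℤ))) (dyadicCube n k m) φ)
      (fun φ k m => ⨅ x ∈ dyadicCube n k m, centredDeltaE n l r φ k x) := by
  have hfactor := scaleFactor_ne_top (n := n) r (inv_pos.2 (two_pos : (0 : ℝ) < 2))
  have hfactor0 := scaleFactor_ne_zero (n := n) r (inv_pos.2 (two_pos : (0 : ℝ) < 2))
  refine .of_le (ENNReal.mul_ne_top hfactor hfactor) fun φ _ k m => ?_
  simp only [ENNReal.mul_iInf_of_ne (mul_ne_zero hfactor0 hfactor0)
    (ENNReal.mul_ne_top hfactor hfactor)]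
  exact le_iInf₂ fun x hx =>
    deltaE_le_deltaE (by positivity) one_le_two (dyadicCube_subset_openCube hx) φ

lemma cubewiseDominated_bestApproxE_deltaEOn (hl : 0 < l) (hr : r ≠ 0) {c : ℝ} (hc : 0 < c) :
    CubewiseDominated n r
      (cubeBestApproxE n l r c)
      (fun φ k m => deltaEOn n l r (c * 2 ^ (-(k : ℤ))) (dilatedCube n k m c)
        (dilatedCube n k m c) φ) := by
  obtain ⟨C, hC, hWhitney⟩ := exists_bestApproxE_openCube_le (n := n) hl hr two_pos
  have := scaleFactor_ne_top (n := n) r (half_pos hc)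
  have := scaleFactor_ne_top (n := n) r (inv_pos.2 hc)
  refine .of_le (C := C * scaleFactor n r (c / 2) * scaleFactor n r c⁻¹ * scaleFactor n r c⁻¹)
    (by finiteness) fun φ hφ k m => ?_
  have hs : (0 : ℝ) < 2 ^ (-(k : ℤ)) := by positivity
  have hloc := hWhitney (dyadicCenter n k m) (2 ^ (-(k : ℤ)) * (c / 2)) (by positivity) φ hφ.1
    (hφ.eLpNorm_openCube_ne_top _ _)
  rw [← dilatedCube_eq_openCube, scaleFactor_mul r hs,
    show (2 : ℝ) ^ (-(k : ℤ)) * (c / 2) * 2 = 2 ^ (-(k : ℤ)) * c by ring,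
    scaleFactor_eq_mul_inv r hs hc] at hloc
  rw [cubeBestApproxE, deltaEOn, mul_comm c, ← scaleFactor_mul_self r (by positivity),
    scaleFactor_eq_mul_inv r hs hc]
  exact (mul_le_mul_right hloc _).trans_eq (by ring)

lemma cubewiseDominated_deltaEOn_modulusE (hr : r ≠ 0) {c : ℝ} (hc : 0 < c) :
    CubewiseDominated n r
      (fun φ k m => deltaEOn n l r (c * 2 ^ (-(k : ℤ))) (dilatedCube n k m c)
        (dilatedCube n k m c) φ)
      (cubeModulusE n l r c) := by
  have := scaleFactor_ne_top (n := n) r hc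
  have := volume_openCube_rpow_ne_top (0 : Rn n) 1 r
  refine .of_le (C := volume (openCube (0 : Rn n) 1) ^ (1 / r).toReal * scaleFactor n r c)
    (by finiteness) fun φ hφ k m => (deltaEOn_le_modulusE hr (by positivity)
      (convex_dilatedCube k m c) (measurableSet_dilatedCube k m c) hφ.1).trans_eq ?_
  rw [scaleFactor_mul r hc, cubeModulusE]
  ring

lemma cubewiseDominated_modulusE_bestApproxE (hl : 0 < l) (r : ℝ≥0∞) (c : ℝ) :
    CubewiseDominated n r
      (cubeModulusE n l r c)
      (cubeBestApproxE n l r c) := by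
  have := quasiConst_pow_ne_top r (l + 1)
  refine .of_le (C := quasiConst r ^ (l + 1) * 2 ^ l) (by finiteness) fun φ hφ k m => ?_
  rw [cubeModulusE, cubeBestApproxE, mul_left_comm]
  gcongr
  exact modulusE_le_bestApproxE hl (convex_dilatedCube k m c) (measurableSet_dilatedCube k m c)
    hφ.1 r

lemma cubewiseDominated_iSup_eLpNorm_openCube :
    CubewiseDominated n r
      (fun φ k m => ⨆ x ∈ dyadicCube n k m,
        eLpNorm φ r (volume.restrict (openCube x (2 ^ (-(k : ℤ))))))
      (fun φ k m => eLpNorm φ r (volume.restrict (dyadicCube n k m))) := by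
  refine ⟨quasiConst r ^ (integerBox n (⌈(3 : ℝ)⌉₊ + 2)).card, ⌈(3 : ℝ)⌉₊ + 2,
    quasiConst_pow_ne_top r _, fun φ hφ k m => iSup₂_le fun x hx => ?_⟩
  have hcube : openCube x (2 ^ (-(k : ℤ))) ⊆ dilatedCube n k m 3 := by
    convert openCube_subset_dilatedCube hx 1 using 2 <;> norm_num
  exact (eLpNorm_restrict_mono hcube φ r).trans (eLpNorm_restrict_le_sum_of_ae_cover _
    (fun j _ => measurableSet_dyadicCube k _)
    ((ae_restrict_iff' (measurableSet_dilatedCube k m 3)).2 (ae_exists_mem_dyadicCube_add k m 3))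
    hφ.1.aestronglyMeasurable r)

lemma cubewiseDominated_eLpNorm_iInf_openCube :
    CubewiseDominated n r
      (fun φ k m => eLpNorm φ r (volume.restrict (dyadicCube n k m)))
      (fun φ k m => ⨅ x ∈ dyadicCube n k m,
        eLpNorm φ r (volume.restrict (openCube x (2 ^ (-(k : ℤ)))))) :=
  .of_le ENNReal.one_ne_top fun φ _ _ _ => (le_iInf₂ fun _ hx =>
    eLpNorm_restrict_mono (dyadicCube_subset_openCube hx) φ r).trans_eq (one_mul _).symm

end CubewiseComparison

section SequenceNorms

variable {ι : Type*}

lemma lqNorm_eq_eLpNorm_count [MeasurableSpace ι] [MeasurableSingletonClass ι] {q : ℝ≥0∞}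
    (hq : q ≠ 0) (a : ι → ℝ≥0∞) : lqNorm q a = eLpNorm a q Measure.count := by
  rcases eq_or_ne q ∞ with rfl | hq_top
  · simp [lqNorm, eLpNormEssSup, essSup_count]
  · rw [lqNorm, if_neg hq_top, eLpNorm_eq_lintegral_rpow_enorm_toReal hq hq_top, lintegral_count]
    simp

lemma lqNorm_le_mul_lqNorm {q C : ℝ≥0∞} (hq : q ≠ 0) (hC : C ≠ ∞) {a b : ι → ℝ≥0∞}
    (hab : ∀ i, a i ≤ C * b i) : lqNorm q a ≤ C * lqNorm q b := by
  let _ : MeasurableSpace ι := ⊤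
  lift C to NNReal using hC
  rw [lqNorm_eq_eLpNorm_count hq, lqNorm_eq_eLpNorm_count hq]
  exact eLpNorm_le_mul_eLpNorm_of_ae_le_mul' (.of_forall hab) q

lemma lqNorm_mono {q : ℝ≥0∞} (hq : q ≠ 0) {a b : ι → ℝ≥0∞} (hab : ∀ i, a i ≤ b i) :
    lqNorm q a ≤ lqNorm q b := by
  simpa using lqNorm_le_mul_lqNorm hq ENNReal.one_ne_top (by simpa using hab)

lemma lqNorm_comp_equiv {κ : Type*} (q : ℝ≥0∞) (e : ι ≃ κ) (a : κ → ℝ≥0∞) :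
    lqNorm q (fun i => a (e i)) = lqNorm q a := by
  rw [lqNorm, lqNorm, e.iSup_comp (g := a), e.tsum_eq fun i => a i ^ q.toReal]

lemma lqNorm_sum_le {κ : Type*} {q : ℝ≥0∞} (hq : q ≠ 0) (s : Finset κ) (a : κ → ι → ℝ≥0∞) :
    lqNorm q (fun i => ∑ j ∈ s, a j i) ≤ quasiConst q ^ s.card * ∑ j ∈ s, lqNorm q (a j) := by
  let _ : MeasurableSpace ι := ⊤
  simp only [lqNorm_eq_eLpNorm_count hq]
  convert eLpNorm_sum_le_quasiConst_pow s (fun j _ => (measurable_from_top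
    (f := a j)).aestronglyMeasurable (μ := Measure.count)) q using 2

end SequenceNorms

section LpNormE

variable {α : Type*} [MeasurableSpace α] {p : ℝ≥0∞}

lemma lpNormE_eq_eLpNorm (hp : p ≠ 0) (μ : Measure α) (f : α → ℝ≥0∞) :
    lpNormE p μ f = eLpNorm f p μ := by
  rcases eq_or_ne p ∞ with rfl | hp_top
  · simp [lpNormE, eLpNormEssSup]
  · rw [lpNormE, if_neg hp_top, eLpNorm_eq_lintegral_rpow_enorm_toReal hp hp_top]
    simp

lemma lpNormE_mono_ae (hp : p ≠ 0) {μ : Measure α} {f g : α → ℝ≥0∞} (hfg : ∀ᵐ x ∂μ, f x ≤ g x) :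
    lpNormE p μ f ≤ lpNormE p μ g := by
  rw [lpNormE_eq_eLpNorm hp, lpNormE_eq_eLpNorm hp]
  exact eLpNorm_mono_enorm_ae hfg

lemma lpNormE_mul_const (hp : p ≠ 0) (μ : Measure α) {w : α → ℝ≥0∞} (hw : Measurable w)
    (a : ℝ≥0∞) : lpNormE p μ (fun x => w x * a) = lpNormE p μ w * a := by
  rcases eq_or_ne p ∞ with rfl | hp_top
  · simp only [lpNormE, if_true, mul_comm _ a, ENNReal.essSup_const_mul]
  · have hp_pos : 0 < p.toReal := ENNReal.toReal_pos hp hp_top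
    simp only [lpNormE, if_neg hp_top, ENNReal.mul_rpow_of_nonneg _ _ hp_pos.le]
    rw [lintegral_mul_const _ (hw.pow_const _), ENNReal.mul_rpow_of_nonneg _ _ (by positivity),
      ← ENNReal.rpow_mul, mul_one_div_cancel hp_pos.ne', ENNReal.rpow_one]

lemma lpNormE_ofReal_mul_const (hp : p ≠ 0) (μ : Measure α) {w : α → ℝ} (hw : Measurable w)
    (hw_nonneg : ∀ x, 0 ≤ w x) (a : ℝ≥0∞) :
    lpNormE p μ (fun x => ENNReal.ofReal (w x) * a) = eLpNorm w p μ * a := by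
  rw [lpNormE_mul_const hp μ hw.ennreal_ofReal, lpNormE_eq_eLpNorm hp]
  congr 1
  exact eLpNorm_congr_enorm_ae
    (.of_forall fun x => (Real.enorm_of_nonneg (hw_nonneg x)).symm)

lemma essSup_restrict_iUnion {ι : Type*} [Countable ι] (μ : Measure α) (A : ι → Set α)
    (f : α → ℝ≥0∞) :
    essSup f (μ.restrict (⋃ i, A i)) = ⨆ i, essSup f (μ.restrict (A i)) := by
  refine le_antisymm (essSup_le_of_ae_le _ ?_) (iSup_le fun i => essSup_mono_measure
    (Measure.restrict_mono (Set.subset_iUnion A i) le_rfl).absolutelyContinuous)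
  refine (ae_restrict_iUnion_iff A _).2 fun i => ?_
  filter_upwards [ENNReal.ae_le_essSup (μ := μ.restrict (A i)) f] with x hx
  exact hx.trans (le_iSup (fun i => essSup f (μ.restrict (A i))) i)

lemma lpNormE_restrict_iUnion {ι : Type*} [Countable ι] (hp : p ≠ 0) (μ : Measure α)
    {A : ι → Set α} (hA : ∀ i, MeasurableSet (A i)) (hdisj : Pairwise (Function.onFun Disjoint A))
    (f : α → ℝ≥0∞) :
    lpNormE p (μ.restrict (⋃ i, A i)) f = lqNorm p fun i => lpNormE p (μ.restrict (A i)) f := by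
  rcases eq_or_ne p ∞ with rfl | hp_top
  · simp [lpNormE, lqNorm, essSup_restrict_iUnion]
  · have hp_pos : 0 < p.toReal := ENNReal.toReal_pos hp hp_top
    simp only [lpNormE, lqNorm, if_neg hp_top]
    simp only [lintegral_iUnion hA hdisj, ← ENNReal.rpow_mul, one_div_mul_cancel hp_pos.ne',
      ENNReal.rpow_one]

end LpNormE

section DyadicPartition

variable {n : ℕ} {p : ℝ≥0∞}

lemma floor_eq_of_mem_dyadicCube {k : ℕ} {m : Fin n → ℤ} {x : Rn n} (hx : x ∈ dyadicCube n k m)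
    (i : Fin n) : ⌊x i * 2 ^ k⌋ = m i := by
  have hk : (0 : ℝ) < 2 ^ k := by positivity
  exact Int.floor_eq_iff.2 ⟨((div_lt_iff₀ hk).1 (hx i).1).le, (lt_div_iff₀ hk).1 (hx i).2⟩

lemma pairwise_disjoint_dyadicCube (n k : ℕ) :
    Pairwise (Function.onFun Disjoint (dyadicCube n k)) := fun _ _ hne =>
  Set.disjoint_left.2 fun _ hx hx' => hne <| funext fun i =>
    (floor_eq_of_mem_dyadicCube hx i).symm.trans (floor_eq_of_mem_dyadicCube hx' i)

lemma restrict_iUnion_dyadicCube (n k : ℕ) :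
    (volume : Measure (Rn n)).restrict (⋃ m, dyadicCube n k m) = volume :=
  Measure.restrict_eq_self_of_ae_mem <|
    (ae_mem_dyadicCube_floor k).mono fun _ hx => Set.mem_iUnion.2 ⟨_, hx⟩

lemma lpNormE_eq_lqNorm_dyadicCube (hp : p ≠ 0) (k : ℕ) (f : Rn n → ℝ≥0∞) :
    lpNormE p volume f =
      lqNorm p fun m => lpNormE p (volume.restrict (dyadicCube n k m)) f := by
  rw [← lpNormE_restrict_iUnion hp volume (measurableSet_dyadicCube k)
    (pairwise_disjoint_dyadicCube n k), restrict_iUnion_dyadicCube]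

lemma lpNormE_ofReal_mul_le_lqNorm_iSup (hp : p ≠ 0) {w : Rn n → ℝ} (hw : IsWeight w) (k : ℕ)
    (G : Rn n → ℝ≥0∞) :
    lpNormE p volume (fun x => ENNReal.ofReal (w x) * G x) ≤
      lqNorm p fun m =>
        eLpNorm w p (volume.restrict (dyadicCube n k m)) * ⨆ x ∈ dyadicCube n k m, G x := by
  rw [lpNormE_eq_lqNorm_dyadicCube hp k]
  refine lqNorm_mono hp fun m => ?_
  rw [← lpNormE_ofReal_mul_const hp _ hw.1 fun x => (hw.2 x).le]
  refine lpNormE_mono_ae hp <| (ae_restrict_mem (measurableSet_dyadicCube k m)).mono fun x hx => ?_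
  gcongr
  exact le_iSup₂_of_le x hx le_rfl

lemma lqNorm_iInf_le_lpNormE_ofReal_mul (hp : p ≠ 0) {w : Rn n → ℝ} (hw : IsWeight w) (k : ℕ)
    (G : Rn n → ℝ≥0∞) :
    (lqNorm p fun m =>
      eLpNorm w p (volume.restrict (dyadicCube n k m)) * ⨅ x ∈ dyadicCube n k m, G x) ≤
      lpNormE p volume fun x => ENNReal.ofReal (w x) * G x := by
  rw [lpNormE_eq_lqNorm_dyadicCube hp k]
  refine lqNorm_mono hp fun m => ?_
  rw [← lpNormE_ofReal_mul_const hp _ hw.1 fun x => (hw.2 x).le]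
  refine lpNormE_mono_ae hp <| (ae_restrict_mem (measurableSet_dyadicCube k m)).mono fun x hx => ?_
  gcongr
  exact iInf₂_le_of_le x hx le_rfl

end DyadicPartition

section LevelNorms

variable {n : ℕ} {p q r D : ℝ≥0∞}

/-- The doubling condition `t_{k,m} ≤ D t_{k,m̃}` for adjacent cubes of one level `k`; the class
`X^{α₃}_{α,σ,p}` has `D = 2^{α₃}`. -/
def IsDoublingSeq (D : ℝ≥0∞) (T : (Fin n → ℤ) → ℝ≥0∞) : Prop :=
  ∀ m m' : Fin n → ℤ, (∀ i, |m i - m' i| ≤ 1) → T m ≤ D * T m'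

lemma IsDoublingSeq.le_pow_mul {T : (Fin n → ℤ) → ℝ≥0∞} (hT : IsDoublingSeq D T) (m : Fin n → ℤ)
    {R : ℕ} {j : Fin n → ℤ} (hj : j ∈ integerBox n R) : T m ≤ D ^ R * T (m + j) := by
  induction R generalizing j with
  | zero =>
    rw [integerBox_zero, Finset.mem_singleton] at hj
    simp [hj]
  | succ R ih =>
    rw [mem_integerBox] at hj
    let clamp : Fin n → ℤ := fun i => max (-R) (min R (j i))
    have hclamp : clamp ∈ integerBox n R := mem_integerBox.2 fun i => by
      simp only [clamp, abs_le]
      omega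
    have hadj (i : Fin n) : |(m + clamp) i - (m + j) i| ≤ 1 := by
      have hji := hj i
      simp only [clamp, Pi.add_apply, abs_le] at hji ⊢
      omega
    calc T m ≤ D ^ R * T (m + clamp) := ih hclamp
      _ ≤ D ^ R * (D * T (m + j)) := by
        gcongr
        exact hT _ _ hadj
      _ = D ^ (R + 1) * T (m + j) := by ring

lemma IsDoublingSeq.lqNorm_mul_le {T : (Fin n → ℤ) → ℝ≥0∞} (hT : IsDoublingSeq D T) (hp : p ≠ 0)
    (hD : D ≠ ∞) {C : ℝ≥0∞} (hC : C ≠ ∞) {R : ℕ} {A B : (Fin n → ℤ) → ℝ≥0∞}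
    (hAB : ∀ m, A m ≤ C * ∑ j ∈ integerBox n R, B (m + j)) :
    lqNorm p (fun m => T m * A m) ≤
      C * D ^ R * (quasiConst p ^ (integerBox n R).card * (integerBox n R).card) *
        lqNorm p fun m => T m * B m := by
  have hpoint (m : Fin n → ℤ) :
      T m * A m ≤ C * D ^ R * ∑ j ∈ integerBox n R, T (m + j) * B (m + j) := by
    rw [Finset.mul_sum]
    calc T m * A m ≤ T m * (C * ∑ j ∈ integerBox n R, B (m + j)) := by gcongr; exact hAB m
      _ = ∑ j ∈ integerBox n R, T m * (C * B (m + j)) := by simp only [Finset.mul_sum]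
      _ ≤ ∑ j ∈ integerBox n R, D ^ R * T (m + j) * (C * B (m + j)) :=
        Finset.sum_le_sum fun j hj => by gcongr; exact hT.le_pow_mul m hj
      _ = _ := Finset.sum_congr rfl fun j _ => by ring
  have hshift (j : Fin n → ℤ) :
      lqNorm p (fun m => T (m + j) * B (m + j)) = lqNorm p fun m => T m * B m :=
    lqNorm_comp_equiv p (Equiv.addRight j) fun m => T m * B m
  calc lqNorm p (fun m => T m * A m)
      ≤ C * D ^ R * lqNorm p fun m => ∑ j ∈ integerBox n R, T (m + j) * B (m + j) :=
        lqNorm_le_mul_lqNorm hp (by finiteness) hpoint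
    _ ≤ C * D ^ R * (quasiConst p ^ (integerBox n R).card *
          ∑ j ∈ integerBox n R, lqNorm p fun m => T (m + j) * B (m + j)) := by
        gcongr
        exact lqNorm_sum_le hp (integerBox n R) fun j m => T (m + j) * B (m + j)
    _ = _ := by
        simp only [hshift, Finset.sum_const, nsmul_eq_mul]
        ring

/-- The mixed `ℓ_q(ℓ_p)` quasi-norm of the quantities `A` on the levels `k ≥ 1` plus the `ℓ_p`
quasi-norm of `E` on the level `0`, both weighted by `T`: the common shape of the quasi-norms
`‖·‖^{(i)}`. -/
def levelNorm (p q : ℝ≥0∞) (T A E : ℕ → (Fin n → ℤ) → ℝ≥0∞) : ℝ≥0∞ :=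
  lqNorm q (fun k => lqNorm p fun m => T (k + 1) m * A (k + 1) m) + lqNorm p fun m => T 0 m * E 0 m

/-- The relation `f ≲ g` on `s`: `f ≤ C g` there for some finite constant `C`. -/
def DominatedOn {α : Type*} (s : Set α) (f g : α → ℝ≥0∞) : Prop :=
  ∃ C : ℝ≥0∞, C ≠ ∞ ∧ ∀ a ∈ s, f a ≤ C * g a

lemma DominatedOn.of_le {α : Type*} {s : Set α} {f g : α → ℝ≥0∞} (h : ∀ a ∈ s, f a ≤ g a) :
    DominatedOn s f g :=
  ⟨1, ENNReal.one_ne_top, by simpa using h⟩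

lemma DominatedOn.trans {α : Type*} {s : Set α} {f g h : α → ℝ≥0∞} (hfg : DominatedOn s f g)
    (hgh : DominatedOn s g h) : DominatedOn s f h := by
  obtain ⟨C, hC, hfg⟩ := hfg
  obtain ⟨C', hC', hgh⟩ := hgh
  refine ⟨C * C', by finiteness, fun a ha => (hfg a ha).trans ?_⟩
  rw [mul_assoc]
  gcongr
  exact hgh a ha

lemma DominatedOn.exists_uniform {α κ : Type*} [Finite κ] {s : Set α} {N : κ → α → ℝ≥0∞}
    {M : α → ℝ≥0∞} (hNM : ∀ i, DominatedOn s (N i) M) (hMN : ∀ i, DominatedOn s M (N i)) :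
    ∃ C : ℝ≥0∞, 0 < C ∧ C < ∞ ∧ ∀ a ∈ s, ∀ i, N i a ≤ C * M a ∧ M a ≤ C * N i a := by
  cases nonempty_fintype κ
  choose C hC hNM using hNM
  choose C' hC' hMN using hMN
  have hle (i : κ) : C i + C' i ≤ ∑ j, (C j + C' j) :=
    Finset.single_le_sum (f := fun j => C j + C' j) (fun _ _ => zero_le) (Finset.mem_univ i)
  refine ⟨1 + ∑ i, (C i + C' i), by positivity, ?_, fun a ha i => ⟨(hNM i a ha).trans ?_,
    (hMN i a ha).trans ?_⟩⟩
  · exact (ENNReal.add_ne_top.2 ⟨ENNReal.one_ne_top, ENNReal.sum_ne_top.2 fun i _ =>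
      ENNReal.add_ne_top.2 ⟨hC i, hC' i⟩⟩).lt_top
  · gcongr
    exact (le_self_add.trans (hle i)).trans le_add_self
  · gcongr
    exact (le_add_self.trans (hle i)).trans le_add_self

lemma CubewiseDominated.exists_lqNorm_le {A B : (Rn n → ℝ) → ℕ → (Fin n → ℤ) → ℝ≥0∞}
    (hAB : CubewiseDominated n r A B) (hp : p ≠ 0) (hD : D ≠ ∞) :
    ∃ C : ℝ≥0∞, C ≠ ∞ ∧ ∀ φ, MemLrLoc n r φ → ∀ (k : ℕ) (T : (Fin n → ℤ) → ℝ≥0∞),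
      IsDoublingSeq D T →
        lqNorm p (fun m => T m * A φ k m) ≤ C * lqNorm p fun m => T m * B φ k m := by
  obtain ⟨C, R, hC, hAB⟩ := hAB
  have := quasiConst_pow_ne_top p (integerBox n R).card
  exact ⟨_, by finiteness, fun φ hφ k T hT => hT.lqNorm_mul_le hp hD hC (hAB φ hφ k)⟩

lemma CubewiseDominated.dominatedOn_levelNorm {A B E F : (Rn n → ℝ) → ℕ → (Fin n → ℤ) → ℝ≥0∞}
    (hAB : CubewiseDominated n r A B) (hEF : CubewiseDominated n r E F) (hp : p ≠ 0) (hq : q ≠ 0)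
    (hD : D ≠ ∞) {T : ℕ → (Fin n → ℤ) → ℝ≥0∞} (hT : ∀ k, IsDoublingSeq D (T k)) :
    DominatedOn {φ | MemLrLoc n r φ} (fun φ => levelNorm p q T (A φ) (E φ))
      (fun φ => levelNorm p q T (B φ) (F φ)) := by
  obtain ⟨C, hC, hAB⟩ := hAB.exists_lqNorm_le hp hD
  obtain ⟨C', hC', hEF⟩ := hEF.exists_lqNorm_le hp hD
  refine ⟨C + C', by finiteness, fun φ hφ => ?_⟩
  simp only [levelNorm, mul_add]
  refine add_le_add ((lqNorm_le_mul_lqNorm hq hC fun k => hAB φ hφ (k + 1) _ (hT _)).trans ?_)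
    ((hEF φ hφ 0 _ (hT 0)).trans ?_)
  · gcongr
    exact le_self_add
  · gcongr
    exact le_add_self

end LevelNorms

section Equivalence

variable {n l : ℕ} {p q r D : ℝ≥0∞} {t : ℕ → Rn n → ℝ} {c : ℝ}

lemma tildeBnorm_eq_centredDeltaE (n l : ℕ) (p q r : ℝ≥0∞) (t : ℕ → Rn n → ℝ) (φ : Rn n → ℝ) :
    tildeBnorm n l p q r t φ =
      lqNorm q (fun k => lpNormE p volume fun x =>
        ENNReal.ofReal (t (k + 1) x) * centredDeltaE n l r φ (k + 1) x) +
      lpNormE p volume fun x => ENNReal.ofReal (t 0 x) *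
        eLpNorm φ r (volume.restrict (openCube x (2 ^ (-((0 : ℕ) : ℤ))))) := by
  have hside (k : ℕ) : (2 : ℝ) ^ (1 - ((k : ℤ) + 1)) = 2 ^ (-((k : ℤ) + 1)) * 2 := by
    rw [← zpow_add_one₀ two_ne_zero]
    ring_nf
  simp only [tildeBnorm, tildeBnormE, centredDeltaE, hside, Nat.cast_add, Nat.cast_one,
    Nat.cast_zero, neg_zero, zpow_zero]

lemma tildeBnorm_le_levelNorm (hp : p ≠ 0) (hq : q ≠ 0) (ht : ∀ k, IsWeight (t k))
    (φ : Rn n → ℝ) :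
    tildeBnorm n l p q r t φ ≤
      levelNorm p q (tkm n p t) (fun k m => ⨆ x ∈ dyadicCube n k m, centredDeltaE n l r φ k x)
        fun k m => ⨆ x ∈ dyadicCube n k m,
          eLpNorm φ r (volume.restrict (openCube x (2 ^ (-(k : ℤ))))) := by
  rw [tildeBnorm_eq_centredDeltaE]
  exact add_le_add
    (lqNorm_mono hq fun k => lpNormE_ofReal_mul_le_lqNorm_iSup hp (ht (k + 1)) (k + 1) _)
    (lpNormE_ofReal_mul_le_lqNorm_iSup hp (ht 0) 0 _)

lemma levelNorm_le_tildeBnorm (hp : p ≠ 0) (hq : q ≠ 0) (ht : ∀ k, IsWeight (t k))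
    (φ : Rn n → ℝ) :
    levelNorm p q (tkm n p t) (fun k m => ⨅ x ∈ dyadicCube n k m, centredDeltaE n l r φ k x)
        (fun k m => ⨅ x ∈ dyadicCube n k m,
          eLpNorm φ r (volume.restrict (openCube x (2 ^ (-(k : ℤ)))))) ≤
      tildeBnorm n l p q r t φ := by
  rw [tildeBnorm_eq_centredDeltaE]
  exact add_le_add
    (lqNorm_mono hq fun k => lqNorm_iInf_le_lpNormE_ofReal_mul hp (ht (k + 1)) (k + 1) _)
    (lqNorm_iInf_le_lpNormE_ofReal_mul hp (ht 0) 0 _)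

lemma discNorm_eq_levelNorm (T A : ℕ → (Fin n → ℤ) → ℝ≥0∞) (φ : Rn n → ℝ) :
    discNorm n p q r T A φ =
      levelNorm p q T A fun k m => eLpNorm φ r (volume.restrict (dyadicCube n k m)) := rfl

lemma discNorm3_eq_discNorm (T : ℕ → (Fin n → ℤ) → ℝ≥0∞) (φ : Rn n → ℝ) :
    discNorm3 n l p q r c T φ = discNorm n p q r T (cubeBestApproxE n l r c φ) φ := by
  simp only [discNorm3, two_rpow_eq_scaleFactor]
  rfl

lemma discNorm4_eq_discNorm (T : ℕ → (Fin n → ℤ) → ℝ≥0∞) (φ : Rn n → ℝ) :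
    discNorm4 n l p q r c T φ = discNorm n p q r T (cubeModulusE n l r c φ) φ := by
  simp only [discNorm4, two_rpow_eq_scaleFactor]
  rfl

lemma CubewiseDominated.dominatedOn_discNorm {A B : (Rn n → ℝ) → ℕ → (Fin n → ℤ) → ℝ≥0∞}
    (hAB : CubewiseDominated n r A B) (hp : p ≠ 0) (hq : q ≠ 0) (hD : D ≠ ∞)
    {T : ℕ → (Fin n → ℤ) → ℝ≥0∞} (hT : ∀ k, IsDoublingSeq D (T k)) :
    DominatedOn {φ | MemLrLoc n r φ} (fun φ => discNorm n p q r T (A φ) φ)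
      (fun φ => discNorm n p q r T (B φ) φ) := by
  simp only [discNorm_eq_levelNorm]
  exact hAB.dominatedOn_levelNorm (.refl _) hp hq hD hT

lemma discNorm1_dominatedOn_tildeBnorm (hp : p ≠ 0) (hq : q ≠ 0) (ht : ∀ k, IsWeight (t k))
    (hD : D ≠ ∞) (hT : ∀ k, IsDoublingSeq D (tkm n p t k)) :
    DominatedOn {φ | MemLrLoc n r φ} (discNorm1 n l p q r (tkm n p t))
      (tildeBnorm n l p q r t) := by
  exact (cubewiseDominated_deltaE_iInf_deltaE.dominatedOn_levelNorm
    cubewiseDominated_eLpNorm_iInf_openCube hp hq hD hT).trans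
    (.of_le fun φ _ => levelNorm_le_tildeBnorm hp hq ht φ)

lemma tildeBnorm_dominatedOn_discNorm3 (hl : 0 < l) (hp : p ≠ 0) (hq : q ≠ 0) (hr : r ≠ 0)
    (ht : ∀ k, IsWeight (t k)) (hD : D ≠ ∞) (hT : ∀ k, IsDoublingSeq D (tkm n p t k))
    (hc : 1 < c) :
    DominatedOn {φ | MemLrLoc n r φ} (tildeBnorm n l p q r t)
      (discNorm3 n l p q r c (tkm n p t)) := by
  simp only [funext (discNorm3_eq_discNorm _), discNorm_eq_levelNorm]
  exact (DominatedOn.of_le fun φ _ => tildeBnorm_le_levelNorm hp hq ht φ).trans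
    ((cubewiseDominated_iSup_deltaE_bestApproxE hl hr hc).dominatedOn_levelNorm
      cubewiseDominated_iSup_eLpNorm_openCube hp hq hD hT)

lemma discNorm3_dominatedOn_discNorm1 (hl : 0 < l) (hp : p ≠ 0) (hq : q ≠ 0) (hr : r ≠ 0)
    (hD : D ≠ ∞) {T : ℕ → (Fin n → ℤ) → ℝ≥0∞} (hT : ∀ k, IsDoublingSeq D (T k)) (hc : 0 < c) :
    DominatedOn {φ | MemLrLoc n r φ} (discNorm3 n l p q r c T) (discNorm1 n l p q r T) := by
  have hbest := cubewiseDominated_bestApproxE_deltaE (n := n) hl hr hc one_pos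
  simp only [mul_one] at hbest
  simp only [funext (discNorm3_eq_discNorm T)]
  exact hbest.dominatedOn_discNorm hp hq hD hT

lemma discNorm3_dominatedOn_discNorm2 (hl : 0 < l) (hp : p ≠ 0) (hq : q ≠ 0) (hr : r ≠ 0)
    (hD : D ≠ ∞) {T : ℕ → (Fin n → ℤ) → ℝ≥0∞} (hT : ∀ k, IsDoublingSeq D (T k)) (hc : 0 < c) :
    DominatedOn {φ | MemLrLoc n r φ} (discNorm3 n l p q r c T) (discNorm2 n l p q r c T) := by
  simp only [funext (discNorm3_eq_discNorm T)]
  exact (cubewiseDominated_bestApproxE_deltaEOn hl hr hc).dominatedOn_discNorm hp hq hD hT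

lemma discNorm2_dominatedOn_discNorm4 (hp : p ≠ 0) (hq : q ≠ 0) (hr : r ≠ 0)
    (hD : D ≠ ∞) {T : ℕ → (Fin n → ℤ) → ℝ≥0∞} (hT : ∀ k, IsDoublingSeq D (T k)) (hc : 0 < c) :
    DominatedOn {φ | MemLrLoc n r φ} (discNorm2 n l p q r c T) (discNorm4 n l p q r c T) := by
  simp only [funext (discNorm4_eq_discNorm T)]
  exact (cubewiseDominated_deltaEOn_modulusE hr hc).dominatedOn_discNorm hp hq hD hT

lemma discNorm4_dominatedOn_discNorm3 (hl : 0 < l) (hp : p ≠ 0) (hq : q ≠ 0) (r : ℝ≥0∞)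
    (hD : D ≠ ∞) {T : ℕ → (Fin n → ℤ) → ℝ≥0∞} (hT : ∀ k, IsDoublingSeq D (T k)) (c : ℝ) :
    DominatedOn {φ | MemLrLoc n r φ} (discNorm4 n l p q r c T) (discNorm3 n l p q r c T) := by
  simp only [funext (discNorm3_eq_discNorm T), funext (discNorm4_eq_discNorm T)]
  exact (cubewiseDominated_modulusE_bestApproxE hl r c).dominatedOn_discNorm hp hq hD hT

theorem equiv_quasinorms_general (n l : ℕ) (hl : 0 < l) (p q r : ℝ≥0∞) (hp : 0 < p) (hq : 0 < q)
    (hr : 0 < r) (t : ℕ → Rn n → ℝ) (ht : ∀ k, IsWeight (t k)) (D : ℝ≥0∞) (hD : D ≠ ∞)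
    (hT : ∀ k, IsDoublingSeq D (tkm n p t k)) (c : ℝ) (hc : 1 < c) :
    ∃ C : ℝ≥0∞, 0 < C ∧ C < ∞ ∧ ∀ φ : Rn n → ℝ, MemLrLoc n r φ →
      (discNorm1 n l p q r (tkm n p t) φ ≤ C * tildeBnorm n l p q r t φ ∧
        tildeBnorm n l p q r t φ ≤ C * discNorm1 n l p q r (tkm n p t) φ) ∧
      (discNorm2 n l p q r c (tkm n p t) φ ≤ C * tildeBnorm n l p q r t φ ∧
        tildeBnorm n l p q r t φ ≤ C * discNorm2 n l p q r c (tkm n p t) φ) ∧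
      (discNorm3 n l p q r c (tkm n p t) φ ≤ C * tildeBnorm n l p q r t φ ∧
        tildeBnorm n l p q r t φ ≤ C * discNorm3 n l p q r c (tkm n p t) φ) ∧
      (discNorm4 n l p q r c (tkm n p t) φ ≤ C * tildeBnorm n l p q r t φ ∧
        tildeBnorm n l p q r t φ ≤ C * discNorm4 n l p q r c (tkm n p t) φ) := by
  have hc0 : 0 < c := one_pos.trans hc
  have h1_tilde := discNorm1_dominatedOn_tildeBnorm (l := l) (r := r) hp.ne' hq.ne' ht hD hT
  have h_tilde3 := tildeBnorm_dominatedOn_discNorm3 hl hp.ne' hq.ne' hr.ne' ht hD hT hc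
  have h31 := discNorm3_dominatedOn_discNorm1 hl hp.ne' hq.ne' hr.ne' hD hT hc0
  have h32 := discNorm3_dominatedOn_discNorm2 hl hp.ne' hq.ne' hr.ne' hD hT hc0
  have h24 := discNorm2_dominatedOn_discNorm4 (l := l) hp.ne' hq.ne' hr.ne' hD hT hc0
  have h43 := discNorm4_dominatedOn_discNorm3 hl hp.ne' hq.ne' r hD hT c
  have h3_tilde := h31.trans h1_tilde
  have h4_tilde := h43.trans h3_tilde
  obtain ⟨C, hC0, hC, h⟩ := DominatedOn.exists_uniform
    (N := ![discNorm1 n l p q r (tkm n p t), discNorm2 n l p q r c (tkm n p t),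
      discNorm3 n l p q r c (tkm n p t), discNorm4 n l p q r c (tkm n p t)])
    (fun | 0 => h1_tilde | 1 => h24.trans h4_tilde | 2 => h3_tilde | 3 => h4_tilde)
    (fun | 0 => h_tilde3.trans h31 | 1 => h_tilde3.trans h32 | 2 => h_tilde3
         | 3 => h_tilde3.trans (h32.trans h24))
  exact ⟨C, hC0, hC, fun φ hφ => ⟨h φ hφ 0, h φ hφ 1, h φ hφ 2, h φ hφ 3⟩⟩

end Equivalence

/-- **Theorem 2.3: the quasinorms `‖·‖^{(i)}`, `i = 1,2,3,4`, are all equivalent to the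
defining quasi-norm on `B̃^l_{p,q,r}(ℝⁿ,{t_k})`.** -/
theorem equiv_quasinorms (n l : ℕ) (hn : 0 < n) (hl : 0 < l) (p q r : ℝ≥0∞)
    (hp : 0 < p) (hq : 0 < q) (hr : 0 < r) (α₁ α₂ α₃ : ℝ) (hα₃ : 0 ≤ α₃)
    (σ₁ σ₂ : ℝ≥0∞) (hσ₁ : 0 < σ₁) (hσ₂ : 0 < σ₂)
    (t : ℕ → Rn n → ℝ) (ht : MemX n α₁ α₂ α₃ σ₁ σ₂ p t) (c : ℝ) (hc : 1 < c) :
    ∃ C : ℝ≥0∞, 0 < C ∧ C < ∞ ∧ ∀ φ : Rn n → ℝ, MemTildeB n l p q r t φ →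
      (discNorm1 n l p q r (tkm n p t) φ ≤ C * tildeBnorm n l p q r t φ ∧
        tildeBnorm n l p q r t φ ≤ C * discNorm1 n l p q r (tkm n p t) φ) ∧
      (discNorm2 n l p q r c (tkm n p t) φ ≤ C * tildeBnorm n l p q r t φ ∧
        tildeBnorm n l p q r t φ ≤ C * discNorm2 n l p q r c (tkm n p t) φ) ∧
      (discNorm3 n l p q r c (tkm n p t) φ ≤ C * tildeBnorm n l p q r t φ ∧
        tildeBnorm n l p q r t φ ≤ C * discNorm3 n l p q r c (tkm n p t) φ) ∧
      (discNorm4 n l p q r c (tkm n p t) φ ≤ C * tildeBnorm n l p q r t φ ∧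
        tildeBnorm n l p q r t φ ≤ C * discNorm4 n l p q r c (tkm n p t) φ) := by
  obtain ⟨C, hC0, hC, h⟩ := equiv_quasinorms_general n l hl p q r hp hq hr t (fun k => (ht.1 k).1)
    (2 ^ α₃) (ENNReal.rpow_ne_top_of_nonneg hα₃ (by simp))
    (fun k m m' hmm' => (ht.2.2.2 k m m' hmm').2) c hc
  exact ⟨C, hC0, hC, fun φ hφ => h φ hφ.1⟩

end
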